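/- arXiv:math/0002135 — 2 statements merged into one kernel-verified Lean document; each statement's English description precedes it below -/
import Mathlib

section
/- Let z ∈ ℂ with z ≠ 0, set z' = conj(z), and let ξ ∈ (0, 1/2). Set α = √ξ/(ξ−1) and β = √ξ, and define K(i,j) = Σ_{m ∈ ℤ_{<0}+1/2} ⟨i|m⟩_{α,β,z,z'} · ⟨j|m⟩*_{α,β,z,z'} for i, j ∈ ℤ+1/2 (the series converges absolutely). Then for every finite set X = {x_1, …, x_s} of distinct points of ℤ+1/2, the correlation function ρ(X) = Σ_{λ : X ⊆ S(λ)} M(λ) satisfies ρ(X) = det[K(x_a, x_b)]_{1 ≤ a,b ≤ s}. -/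
open scoped Classical

noncomputable section

/-- The content of a cell `c = (i, j)` (0-indexed row `i` and column `j`) of a Young diagram:
`c(□) = column(□) - row(□)`. -/
def cellContent (c : ℕ × ℕ) : ℤ := (c.2 : ℤ) - (c.1 : ℤ)

/-- The hook length of the cell `c = (i, j)` of the Young diagram `Y`:
`h(□) = λ_i - j + λ'_j - i - 1` in 0-indexed coordinates. -/
def hookLen (Y : YoungDiagram) (c : ℕ × ℕ) : ℕ :=
  (Y.rowLen c.1 - c.2) + (Y.colLen c.2 - c.1) - 1

/-- The product `Π_{□ ∈ λ} (z + c(□)) (z' + c(□)) / h(□)²`. -/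
def zWeight (z z' : ℂ) (Y : YoungDiagram) : ℂ :=
  ∏ c ∈ Y.cells, ((z + cellContent c) * (z' + cellContent c) / (hookLen Y c : ℂ) ^ 2)

/-- The finset of squares addable to the Young diagram `Y`: cells `c ∉ Y` such that
adding `c` to `Y` again yields a Young diagram, i.e. every strictly smaller cell
(in the product order) already belongs to `Y`.  Any such cell has the form
`(i, Y.rowLen i)` for some `i ≤ Y.colLen 0`. -/
def addables (Y : YoungDiagram) : Finset (ℕ × ℕ) :=
  ((Finset.range (Y.colLen 0 + 1)).image fun i => (i, Y.rowLen i)).filter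
    fun c => ∀ d : ℕ × ℕ, d ≤ c → d ≠ c → d ∈ Y.cells

/-- Add a square to a Young diagram (when the result is again a Young diagram;
junk value `Y` otherwise). -/
def addBox (Y : YoungDiagram) (c : ℕ × ℕ) : YoungDiagram :=
  if h : c ∉ Y.cells ∧ ∀ d : ℕ × ℕ, d ≤ c → d ≠ c → d ∈ Y.cells then
    { cells := insert c Y.cells,
      isLowerSet := by
        intro a b hba ha
        simp only [Finset.coe_insert, Set.mem_insert_iff, Finset.mem_coe] at ha ⊢
        rcases ha with rfl | ha
        · by_cases hbc : b = a
          · exact Or.inl hbc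
          · exact Or.inr (h.2 b hba hbc)
        · exact Or.inr (Y.isLowerSet hba ha) }
  else Y

/-- The finset of squares removable from the Young diagram `Y`: the corners of `Y`. -/
def removables (Y : YoungDiagram) : Finset (ℕ × ℕ) :=
  Y.cells.filter fun c => (c.1 + 1, c.2) ∉ Y.cells ∧ (c.1, c.2 + 1) ∉ Y.cells

/-- Remove a square from a Young diagram (when the result is again a Young diagram;
junk value `Y` otherwise). -/
def removeBox (Y : YoungDiagram) (c : ℕ × ℕ) : YoungDiagram :=
  if h : (c.1 + 1, c.2) ∉ Y.cells ∧ (c.1, c.2 + 1) ∉ Y.cells then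
    { cells := Y.cells.erase c,
      isLowerSet := by
        intro a b hba ha
        rw [Finset.coe_erase, Set.mem_diff] at ha ⊢
        refine ⟨Y.isLowerSet hba ha.1, ?_⟩
        rintro rfl
        rcases lt_or_eq_of_le hba with hlt | rfl
        · rcases Prod.lt_iff.mp hlt with ⟨h1, h2⟩ | ⟨h1, h2⟩
          · exact h.1 (Y.isLowerSet (Prod.mk_le_mk.mpr ⟨h1, h2⟩) ha.1)
          · exact h.2 (Y.isLowerSet (Prod.mk_le_mk.mpr ⟨h1, h2⟩) ha.1)
        · exact ha.2 rfl }
  else Y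


/-- Rising factorial (Pochhammer symbol) `(a)_s = a(a+1)⋯(a+s−1)`. -/
def riseFac (a : ℂ) (s : ℕ) : ℂ := ∏ t ∈ Finset.range s, (a + t)

/-- Falling factorial `(a)_{↓s} = a(a−1)⋯(a−s+1)`. -/
def fallFac (a : ℂ) (s : ℕ) : ℂ := ∏ t ∈ Finset.range s, (a - t)

/-- The Gauss hypergeometric series `F(a,b;c;w) = Σ_{k≥0} (a)_k (b)_k / ((c)_k k!) · wᵏ`. -/
def gaussHyp (a b c w : ℂ) : ℂ :=
  ∑' k : ℕ, riseFac a k * riseFac b k / (riseFac c k * (k.factorial : ℂ)) * w ^ k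

/-- The matrix coefficient `⟨i|j⟩_{α,β,z,z'}`, i.e. the coefficient of `v_j` in
`e^{αU} e^{βD} v_i` for the `sl(2)`-action `U v_k = (z+k+1/2)v_{k+1}`,
`D v_k = (z'+k−1/2)v_{k−1}` on the module with basis `{v_k}_{k ∈ ℤ+1/2}`.
Half-integers are encoded by integers: `i = a + 1/2`, `j = b + 1/2` with `a, b ∈ ℤ`.
By definition
`⟨i|j⟩ = Σ_{s ≥ max(0,i−j)} (βˢ/s!)(z'+i−1/2)_{↓s} · (α^{j−i+s}/(j−i+s)!)(z+i−s+1/2)_{j−i+s}`,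
the terms with `j − i + s < 0` being absent. -/
def mcoef (α β z z' : ℂ) (a b : ℤ) : ℂ :=
  ∑' s : ℕ, if b - a + (s : ℤ) < 0 then 0 else
    (β ^ s / (s.factorial : ℂ)) * fallFac (z' + ((a : ℂ) + 1/2) - 1/2) s *
      (α ^ (b - a + (s : ℤ)).toNat / ((b - a + (s : ℤ)).toNat.factorial : ℂ)) *
      riseFac (z + ((a : ℂ) + 1/2) - s + 1/2) (b - a + (s : ℤ)).toNat

/-- The dual matrix coefficient `⟨i|j⟩*_{α,β,z,z'}`, i.e. the coefficient of `v*_j` in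
`e^{αU} e^{βD} v*_i` for the dual `sl(2)`-action `U v*_k = −(z+k−1/2)v*_{k−1}`,
`D v*_k = −(z'+k+1/2)v*_{k+1}`.  Half-integers are encoded as `i = a + 1/2`, `j = b + 1/2`.
By definition
`⟨i|j⟩* = Σ_{s ≥ max(0,j−i)} ((−β)ˢ/s!)(z'+i+1/2)_s · ((−α)^{i+s−j}/(i+s−j)!)(z+i+s−1/2)_{↓(i+s−j)}`,
the terms with `i + s − j < 0` being absent. -/
def mcoefStar (α β z z' : ℂ) (a b : ℤ) : ℂ :=
  ∑' s : ℕ, if a - b + (s : ℤ) < 0 then 0 else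
    ((-β) ^ s / (s.factorial : ℂ)) * riseFac (z' + ((a : ℂ) + 1/2) + 1/2) s *
      ((-α) ^ (a - b + (s : ℤ)).toNat / ((a - b + (s : ℤ)).toNat.factorial : ℂ)) *
      fallFac (z + ((a : ℂ) + 1/2) + s - 1/2) (a - b + (s : ℤ)).toNat

/-- The kernel `K(i,j) = Σ_{m ∈ ℤ_{<0}+1/2} ⟨i|m⟩_{α,β,z,z'} ⟨j|m⟩*_{α,β,z,z'}`, where the
negative half-integers `m = −1/2 − t` (`t ∈ ℕ`) are encoded by the integers `−1 − t`. -/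
def kerK (α β z z' : ℂ) (a b : ℤ) : ℂ :=
  ∑' t : ℕ, mcoef α β z z' a (-1 - (t : ℤ)) * mcoefStar α β z z' b (-1 - (t : ℤ))

/-- The mixed z-measure `M(λ) = (1−ξ)^{zz'} ξ^{|λ|} Π_{□∈λ}(z+c(□))(z'+c(□))/h(□)²`
with parameters `z, z' ∈ ℂ` and `ξ ∈ (0,1)`. -/
def mixedM (z z' : ℂ) (ξ : ℝ) (Y : YoungDiagram) : ℂ :=
  ((1 : ℂ) - (ξ : ℂ)) ^ (z * z') * (ξ : ℂ) ^ Y.card * zWeight z z' Y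

lemma fallFac_succ (a : ℂ) (n : ℕ) : fallFac a (n+1) = fallFac a n * (a - n) := by
  simp [fallFac, Finset.prod_range_succ]

lemma choose_eq_fallFac (P : ℂ) (n : ℕ) :
    Ring.choose P n = fallFac P n / (n.factorial : ℂ) := by
  have h := Ring.descPochhammer_eq_factorial_smul_choose P n
  have h2 : (descPochhammer ℤ n).smeval P = fallFac P n := by
    clear h
    induction n with
    | zero => simp [fallFac]
    | succ n ih =>
      rw [fallFac_succ, ← ih, descPochhammer_succ_right, Polynomial.smeval_mul]
      rw [Polynomial.smeval_sub, Polynomial.smeval_X, Polynomial.smeval_natCast]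
      simp
  rw [h2] at h
  have hn : (n.factorial : ℂ) ≠ 0 := by exact_mod_cast n.factorial_ne_zero
  rw [h, nsmul_eq_mul]; field_simp

lemma riseFac_eq_fallFac (a : ℂ) (n : ℕ) : riseFac a n = fallFac (a + n - 1) n := by
  unfold riseFac fallFac
  rw [← Finset.prod_range_reflect]
  apply Finset.prod_congr rfl
  intro t ht
  rw [Finset.mem_range] at ht
  have : ((n - 1 - t : ℕ) : ℂ) = n - 1 - t := by
    rw [Nat.cast_sub (by omega), Nat.cast_sub (by omega)]; simp
  rw [this]; ring

lemma riseFac_eq_neg (a : ℂ) (n : ℕ) : riseFac a n = (-1)^n * fallFac (-a) n := by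
  unfold riseFac fallFac
  have : ∀ t ∈ Finset.range n, (a + t : ℂ) = (-1) * (-a - t) := by intros; ring
  rw [Finset.prod_congr rfl this, Finset.prod_mul_distrib]; simp

/-- generalized binomial with integer lower index -/
def zch (P : ℂ) (k : ℤ) : ℂ := if k < 0 then 0 else Ring.choose P k.toNat

lemma tsum_shift (F : ℕ → ℕ → ℂ) (d : ℤ) :
    (∑' s : ℕ, if d + (s:ℤ) < 0 then 0 else F s (d + (s:ℤ)).toNat)
      = ∑' i : ℕ, if -d + (i:ℤ) < 0 then 0 else F (-d + (i:ℤ)).toNat i := by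
  rcases le_total 0 d with h | h
  · obtain ⟨n, rfl⟩ := Int.eq_ofNat_of_zero_le h
    rw [← (add_left_injective n).tsum_eq (f := fun i : ℕ =>
      if -(n:ℤ) + (i:ℤ) < 0 then 0 else F (-(n:ℤ) + (i:ℤ)).toNat i)]
    · apply tsum_congr
      intro s
      rw [if_neg (by omega), if_neg (by push_cast; omega)]
      congr 1 <;> grind
    · intro i hi
      rw [Function.mem_support] at hi
      refine ⟨i - n, ?_⟩
      by_contra hc
      apply hi
      rw [if_pos]
      simp only at hc
      omega
  · obtain ⟨n, hn⟩ := Int.eq_ofNat_of_zero_le (show 0 ≤ -d by omega)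
    have hd : d = -(n:ℤ) := by rw [← hn]; ring
    subst hd
    rw [← (add_left_injective n).tsum_eq (f := fun i : ℕ =>
      if -(n:ℤ) + (i:ℤ) < 0 then 0 else F i (-(n:ℤ) + (i:ℤ)).toNat)]
    · apply tsum_congr
      intro s
      rw [if_neg (by push_cast; omega), if_neg (by omega)]
      congr 1 <;> grind
    · intro i hi
      rw [Function.mem_support] at hi
      refine ⟨i - n, ?_⟩
      by_contra hc
      apply hi
      rw [if_pos]
      simp only at hc
      omega

lemma mcoef_eq (α β z z' : ℂ) (hβ : β ≠ 0) (a b : ℤ) :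
    mcoef α β z z' a b = β ^ (a - b) *
      ∑' i : ℕ, zch (z' + a) (a - b + i) * Ring.choose (z + b) i * (α * β) ^ i := by
  unfold mcoef
  rw [tsum_shift (fun s i => (β ^ s / (s.factorial : ℂ)) * fallFac (z' + ((a : ℂ) + 1/2) - 1/2) s *
      (α ^ i / (i.factorial : ℂ)) *
      riseFac (z + ((a : ℂ) + 1/2) - s + 1/2) i), ← tsum_mul_left]
  apply tsum_congr
  intro i
  rw [neg_sub]
  unfold zch
  split_ifs with h
  · simp
  · have h' : (a - b + (i:ℤ)) = ((a - b + (i:ℤ)).toNat : ℤ) := by omega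
    set s := (a - b + (i:ℤ)).toNat with hs
    have h2 : (a : ℂ) - b + i = s := by exact_mod_cast h'
    have h3 : β ^ s = β ^ (a - b) * β ^ i := by
      rw [← zpow_natCast β s, ← h', zpow_add₀ hβ, zpow_natCast]
    rw [riseFac_eq_fallFac, choose_eq_fallFac, choose_eq_fallFac, h3, mul_pow]
    have e1 : z' + ((a : ℂ) + 1/2) - 1/2 = z' + a := by ring
    have e2 : (z + ((a : ℂ) + 1/2) - s + 1/2) + i - 1 = z + b := by rw [← h2]; ring
    rw [e1, e2]; ring

lemma mcoefStar_eq (α β z z' : ℂ) (hβ : β ≠ 0) (a b : ℤ) :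
    mcoefStar α β z z' a b = β ^ (b - a) *
      ∑' i : ℕ, zch (-z' - a - 1) (b - a + i) * Ring.choose (-z - b - 1) i * (α * β) ^ i := by
  unfold mcoefStar
  rw [tsum_shift (fun s i => ((-β) ^ s / (s.factorial : ℂ)) *
      riseFac (z' + ((a : ℂ) + 1/2) + 1/2) s *
      ((-α) ^ i / (i.factorial : ℂ)) *
      fallFac (z + ((a : ℂ) + 1/2) + s - 1/2) i), ← tsum_mul_left]
  apply tsum_congr
  intro i
  rw [neg_sub]
  unfold zch
  split_ifs with h
  · simp
  · have h' : (b - a + (i:ℤ)) = ((b - a + (i:ℤ)).toNat : ℤ) := by omega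
    set s := (b - a + (i:ℤ)).toNat with hs
    have h2 : (b : ℂ) - a + i = s := by exact_mod_cast h'
    have h3 : β ^ s = β ^ (b - a) * β ^ i := by
      rw [← zpow_natCast β s, ← h', zpow_add₀ hβ, zpow_natCast]
    have h4 : fallFac (z + ((a : ℂ) + 1/2) + s - 1/2) i = (-1)^i * fallFac (-z - b - 1) i := by
      have : z + ((a : ℂ) + 1/2) + s - 1/2 = (z + b + 1) + i - 1 := by rw [← h2]; ring
      rw [this, ← riseFac_eq_fallFac, riseFac_eq_neg]
      congr 2; ring
    rw [riseFac_eq_neg, choose_eq_fallFac, choose_eq_fallFac, h4, mul_pow, neg_pow β, neg_pow α, h3]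
    have e1 : -(z' + ((a : ℂ) + 1/2) + 1/2) = -z' - a - 1 := by ring
    rw [e1]
    have e3 : ((-1:ℂ)^i)*(-1)^i = 1 := by rw [← mul_pow]; simp
    have e4 : ((-1:ℂ)^s)*(-1)^s = 1 := by rw [← mul_pow]; simp
    linear_combination (β ^ (b-a) * β^i * fallFac (-z' - a - 1) s * α^i * fallFac (-z-b-1) i
      / (s.factorial : ℂ) / (i.factorial : ℂ)) * ((-1:ℂ)^i * (-1)^i * e4 + e3)

/-! bounds -/

lemma hasSum_binom (P x : ℂ) (hx : ‖x‖ < 1) :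
    HasSum (fun n : ℕ => Ring.choose P n * x ^ n) ((1 + x) ^ P) := by
  have h := (Complex.one_add_cpow_hasFPowerSeriesOnBall_zero (a := P)).hasSum
    (y := x) (by
      rw [Metric.mem_eball, edist_zero_right, ← ofReal_norm]
      exact ENNReal.ofReal_lt_one.mpr hx)
  simp only [binomialSeries_apply, zero_add, smul_eq_mul, List.ofFn_const, List.prod_replicate] at h
  exact h

lemma choose_bound (P : ℂ) (Q : ℝ) (hQ : 1 < Q) :
    ∃ C : ℝ, 0 < C ∧ ∀ n : ℕ, ‖Ring.choose P n‖ ≤ C * Q ^ n := by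
  have hr : ‖((Q⁻¹ : ℝ) : ℂ)‖ < 1 := by
    rw [Complex.norm_real, Real.norm_eq_abs, abs_of_pos (by positivity)]
    exact inv_lt_one_of_one_lt₀ hQ
  have h := (hasSum_binom P _ hr).summable.norm
  obtain ⟨C, hC⟩ := h.tendsto_atTop_zero.bddAbove_range
  refine ⟨max C 1, by positivity, fun n => ?_⟩
  have := hC ⟨n, rfl⟩
  simp only [norm_mul, norm_pow, Complex.norm_real, Real.norm_eq_abs] at this
  rw [abs_of_pos (by positivity), inv_pow] at this
  have hq : 0 < Q ^ n := by positivity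
  rw [← div_eq_mul_inv, div_le_iff₀ hq] at this
  exact this.trans (by gcongr; exact le_max_left _ _)

lemma norm_choose_le (E : ℂ) (e : ℝ) (he : ‖E‖ ≤ e) (n : ℕ) :
    ‖Ring.choose E n‖ ≤ (∏ t ∈ Finset.range n, (e + t)) / n.factorial := by
  rw [choose_eq_fallFac, norm_div]
  simp only [Complex.norm_natCast, fallFac, norm_prod]
  gcongr with t
  calc ‖E - t‖ ≤ ‖E‖ + ‖(t:ℂ)‖ := norm_sub_le _ _
    _ ≤ e + t := by simpa using he

lemma hasSum_neg_binom (e x : ℝ) (hx0 : 0 ≤ x) (hx : x < 1) :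
    HasSum (fun n : ℕ => (∏ t ∈ Finset.range n, (e + t)) / n.factorial * x ^ n) ((1 - x) ^ (-e)) := by
  have h := hasSum_binom (-(e:ℂ)) (-(x:ℂ)) (by simpa [abs_of_nonneg hx0] using hx)
  rw [← Complex.hasSum_ofReal, Complex.ofReal_cpow (by linarith)]
  push_cast
  rw [sub_eq_add_neg]
  refine h.congr_fun (fun n => ?_)
  rw [choose_eq_fallFac, neg_pow (x:ℂ)]
  have := riseFac_eq_neg (e:ℂ) n
  unfold riseFac at this
  rw [this]
  ring

lemma summable_choose (E : ℂ) (e : ℝ) (he : ‖E‖ ≤ e) (x : ℝ) (hx0 : 0 ≤ x) (hx : x < 1) :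
    Summable (fun n : ℕ => ‖Ring.choose E n‖ * x ^ n) ∧
    ∑' n : ℕ, ‖Ring.choose E n‖ * x ^ n ≤ (1 - x) ^ (-e) := by
  have hs := hasSum_neg_binom e x hx0 hx
  have hle : ∀ n, ‖Ring.choose E n‖ * x ^ n ≤
    (∏ t ∈ Finset.range n, (e + t)) / n.factorial * x ^ n := fun n => by
      gcongr; exact norm_choose_le E e he n
  have h1 : Summable (fun n : ℕ => ‖Ring.choose E n‖ * x ^ n) :=
    Summable.of_nonneg_of_le (fun n => by positivity) hle hs.summable
  exact ⟨h1, (h1.tsum_le_tsum hle hs.summable).trans_eq hs.tsum_eq⟩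

lemma exists_Q (r : ℝ) (h0 : 0 ≤ r) (h1 : r < 1) : ∃ Q : ℝ, 1 < Q ∧ Q * Q * r < 1 := by
  refine ⟨1 + (1 - r) / 4, by linarith, ?_⟩
  nlinarith [mul_nonneg h0 (sub_nonneg.mpr h1.le), mul_nonneg (mul_nonneg h0 (sub_nonneg.mpr h1.le)) h0]

lemma zch_bound (P : ℂ) (Q : ℝ) (hQ : 1 < Q) :
    ∃ C : ℝ, 0 < C ∧ ∀ k : ℤ, ‖zch P k‖ ≤ C * Q ^ k := by
  obtain ⟨C, hC, h⟩ := choose_bound P Q hQ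
  refine ⟨C, hC, fun k => ?_⟩
  unfold zch
  split_ifs with hk
  · simp; positivity
  · have : Q ^ k = Q ^ k.toNat := by rw [← zpow_natCast]; congr 1; omega
    rw [this]; exact h _

lemma tsum_antidiag (f : ℕ × ℕ → ℂ) (hf : Summable f) :
    ∑' i, ∑' l, f (i, l) = ∑' n, ∑ p ∈ Finset.HasAntidiagonal.antidiagonal n, f p := by
  rw [← hf.tsum_prod, ← (Finset.HasAntidiagonal.sigmaAntidiagonalEquivProd (A := ℕ)).tsum_eq f]
  refine (Summable.tsum_sigma' (fun n => (hasSum_fintype _).summable)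
    ((Finset.HasAntidiagonal.sigmaAntidiagonalEquivProd (A := ℕ)).summable_iff.mpr hf)).trans ?_
  apply tsum_congr
  intro n
  rw [tsum_fintype, Finset.univ_eq_attach]
  exact Finset.sum_attach (Finset.HasAntidiagonal.antidiagonal n) f

lemma zch_trinomial (P : ℂ) (k : ℤ) (i l : ℕ) :
    zch P (k + i) * Ring.choose (P - k - i) l
      = zch P (k + (i + l : ℕ)) * Ring.choose ((k:ℂ) + (i + l : ℕ)) l := by
  unfold zch
  by_cases h : k + (i:ℤ) < 0
  · rw [if_pos h]
    by_cases h2 : k + ((i+l : ℕ):ℤ) < 0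
    · rw [if_pos h2]; simp
    · rw [if_neg h2]
      obtain ⟨m, hm⟩ := Int.eq_ofNat_of_zero_le (not_lt.mp h2)
      have : (k:ℂ) + (i + l : ℕ) = (m : ℕ) := by exact_mod_cast hm
      rw [this, Ring.choose_natCast, Nat.choose_eq_zero_of_lt (by push_cast at hm; omega)]
      simp
  · obtain ⟨m, hm⟩ := Int.eq_ofNat_of_zero_le (not_lt.mp h)
    have h2 : k + ((i+l : ℕ):ℤ) = ((m + l : ℕ) : ℤ) := by push_cast; push_cast at hm; omega
    rw [if_neg h, if_neg (by omega), h2, hm]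
    have e1 : P - k - i = P - m := by
      have : (k:ℂ) + i = m := by exact_mod_cast hm
      rw [← this]; ring
    have e2 : (k:ℂ) + (i + l : ℕ) = ((m + l : ℕ) : ℂ) := by exact_mod_cast h2
    rw [e1, e2, Ring.choose_natCast]
    simp only [Int.toNat_natCast]
    rw [choose_eq_fallFac, choose_eq_fallFac, choose_eq_fallFac, Nat.cast_choose ℂ (by omega : l ≤ m + l)]
    simp only [Nat.add_sub_cancel]
    have e3 : fallFac P (m + l) = fallFac P m * fallFac (P - m) l := by
      unfold fallFac
      rw [Finset.prod_range_add]
      congr 1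
      apply Finset.prod_congr rfl
      intros; push_cast; ring
    rw [e3]
    have n1 : ((m + l).factorial : ℂ) ≠ 0 := by exact_mod_cast Nat.factorial_ne_zero _
    have n2 : ((m).factorial : ℂ) ≠ 0 := by exact_mod_cast Nat.factorial_ne_zero _
    have n3 : ((l).factorial : ℂ) ≠ 0 := by exact_mod_cast Nat.factorial_ne_zero _
    field_simp

lemma choose_neg_shift (y : ℂ) (n : ℕ) : Ring.choose (y + n) n = (-1)^n * Ring.choose (-(y + 1)) n := by
  rw [choose_eq_fallFac, choose_eq_fallFac]
  have := riseFac_eq_fallFac (y+1) n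
  rw [riseFac_eq_neg] at this
  rw [show y + 1 + n - 1 = y + (n:ℂ) by ring] at this
  rw [← this]; ring

lemma antidiag_sum (P Q : ℂ) (k : ℤ) (x : ℂ) (n : ℕ) :
    ∑ p ∈ Finset.HasAntidiagonal.antidiagonal n,
      (zch P (k + p.1) * Ring.choose Q p.1 * (-x) ^ p.1 * (Ring.choose (P - k - p.1) p.2 * (-x)^p.2))
    = zch P (k + n) * Ring.choose (-(k + Q + 1)) n * x ^ n := by
  have h1 : ∀ p ∈ Finset.HasAntidiagonal.antidiagonal n,
      (zch P (k + p.1) * Ring.choose Q p.1 * (-x) ^ p.1 * (Ring.choose (P - k - p.1) p.2 * (-x)^p.2))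
      = zch P (k + n) * (-x)^n * (Ring.choose Q p.1 * Ring.choose ((k:ℂ) + n) p.2) := by
    intro p hp
    rw [Finset.HasAntidiagonal.mem_antidiagonal] at hp
    have := zch_trinomial P k p.1 p.2
    rw [hp] at this
    rw [← hp, pow_add, hp]
    linear_combination (Ring.choose Q p.1 * (-x)^p.1 * (-x)^p.2) * this
  rw [Finset.sum_congr rfl h1, ← Finset.mul_sum, ← Ring.add_choose_eq n (Commute.all _ _)]
  rw [show Q + ((k:ℂ) + n) = (k + Q) + n by ring, choose_neg_shift, neg_pow x]
  have e3 : ((-1:ℂ)^n)*(-1)^n = 1 := by rw [← mul_pow]; simp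
  linear_combination zch P (k + n) * Ring.choose (-(k + Q + 1)) n * x ^ n * e3

lemma pfaff_summable (P Q : ℂ) (k : ℤ) (ξ : ℝ) (h0 : 0 < ξ) (h1 : ξ < 1/2) :
    Summable (fun p : ℕ × ℕ => zch P (k + p.1) * Ring.choose Q p.1 * (-(ξ:ℂ)) ^ p.1 *
      (Ring.choose (P - k - p.1) p.2 * (-(ξ:ℂ))^p.2)) := by
  apply Summable.of_norm
  have hr1 : ξ / (1 - ξ) < 1 := by rw [div_lt_one (by linarith)]; linarith
  have hr0 : 0 ≤ ξ / (1 - ξ) := div_nonneg h0.le (by linarith)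
  obtain ⟨q, hq1, hq⟩ := exists_Q _ hr0 hr1
  obtain ⟨C, hC, hzb⟩ := zch_bound P q hq1
  obtain ⟨C', hC', hcb⟩ := choose_bound Q q hq1
  set e : ℝ := ‖P‖ + ‖(k:ℂ)‖ with he
  have hE : ∀ i : ℕ, ‖P - k - i‖ ≤ e + i := fun i => by
    calc ‖P - k - i‖ ≤ ‖P - k‖ + ‖(i:ℂ)‖ := norm_sub_le _ _
      _ ≤ ‖P‖ + ‖(k:ℂ)‖ + ‖(i:ℂ)‖ := by gcongr; exact norm_sub_le _ _
      _ = e + i := by simp [he]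
  have hs := fun i : ℕ => summable_choose (P - k - i) (e + i) (hE i) ξ h0.le (by linarith)
  have hnorm : ∀ i l : ℕ, ‖zch P (k + i) * Ring.choose Q i * (-(ξ:ℂ)) ^ i *
      (Ring.choose (P - k - i) l * (-(ξ:ℂ))^l)‖ =
      (‖zch P (k + i)‖ * ‖Ring.choose Q i‖ * ξ ^ i) * (‖Ring.choose (P - k - i) l‖ * ξ ^ l) := by
    intro i l
    simp [abs_of_pos h0]
  rw [summable_prod_of_nonneg (fun p => norm_nonneg _)]
  constructor
  · intro i
    simp only [hnorm]
    exact (hs i).1.mul_left _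
  · simp only [hnorm, tsum_mul_left]
    refine Summable.of_nonneg_of_le (f := fun i : ℕ => C * q ^ k * C' * (1 - ξ) ^ (-e) * (q * q * (ξ / (1 - ξ))) ^ i)
      (fun i => by positivity) (fun i => ?_) ?_
    · calc _ ≤ (C * q ^ (k + i : ℤ)) * (C' * q ^ i) * ξ ^ i * (1 - ξ) ^ (-(e + i)) := by
            gcongr
            · exact hzb _
            · exact hcb _
            · exact (hs i).2
        _ = _ := by
            rw [zpow_add₀ (by positivity), zpow_natCast, neg_add, Real.rpow_add (by linarith),
              Real.rpow_neg (by linarith) (i:ℝ), Real.rpow_natCast, mul_pow, mul_pow, div_pow]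
            have : (1 - ξ) ^ i ≠ 0 := pow_ne_zero _ (by linarith)
            field_simp
    · exact (summable_geometric_of_lt_one (by positivity) hq).mul_left _

lemma pfaff (P Q : ℂ) (k : ℤ) (ξ : ℝ) (h0 : 0 < ξ) (h1 : ξ < 1/2) :
    ∑' i : ℕ, zch P (k + i) * Ring.choose Q i * ((ξ:ℂ) / (ξ - 1)) ^ i
      = (1 - (ξ:ℂ)) ^ ((k:ℂ) - P) *
        ∑' n : ℕ, zch P (k + n) * Ring.choose (-(k + Q + 1)) n * (ξ:ℂ) ^ n := by
  have hx : (1 - (ξ:ℂ)) ≠ 0 := by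
    have : (1 - ξ : ℝ) ≠ 0 := by linarith
    exact_mod_cast this
  have key := tsum_antidiag _ (pfaff_summable P Q k ξ h0 h1)
  simp only [antidiag_sum, tsum_mul_left] at key
  rw [← key, ← tsum_mul_left]
  apply tsum_congr
  intro i
  have hb := (hasSum_binom (P - k - i) (-(ξ:ℂ)) (by simpa [abs_of_pos h0] using by linarith)).tsum_eq
  rw [hb, ← sub_eq_add_neg]
  have : (1 - (ξ:ℂ)) ^ ((k:ℂ) - P) * (1 - (ξ:ℂ)) ^ (P - k - i) = ((1 - (ξ:ℂ)) ^ i)⁻¹ := by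
    rw [← Complex.cpow_add _ _ hx, show (k:ℂ) - P + (P - k - i) = -(i:ℂ) by ring, Complex.cpow_neg,
      Complex.cpow_natCast]
  have e2 : ((ξ:ℂ) / (ξ - 1)) ^ i = (-(ξ:ℂ))^i * ((1 - (ξ:ℂ)) ^ i)⁻¹ := by
    rw [← inv_pow, ← mul_pow]
    congr 1
    rw [← neg_sub 1 (ξ:ℂ)]
    field_simp
  rw [e2]
  linear_combination -(zch P (k + i) * Ring.choose Q i * (-(ξ:ℂ))^i) * this

/-- term of the first series -/
def tA (z z' : ℂ) (a : ℤ) (t i : ℕ) : ℂ := zch (z' + a) (a + 1 + t + i) * Ring.choose (-z - a - 1) i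
/-- term of the dual series -/
def tB (z z' : ℂ) (b : ℤ) (t j : ℕ) : ℂ := zch (-z' - b - 1) (-1 - t - b + j) * Ring.choose (z + b) j

/-- coefficient of the kernel power series -/
def kc (z z' : ℂ) (a b : ℤ) (n : ℕ) : ℂ :=
  ∑ p ∈ Finset.HasAntidiagonal.antidiagonal n, ∑ t ∈ Finset.range (n + b.natAbs + 1),
    tA z z' a t p.1 * tB z z' b t p.2

lemma mcoef_xi (α β z z' : ℂ) (hβ : β ≠ 0) (ξ : ℝ) (h0 : 0 < ξ) (h1 : ξ < 1/2)
    (hab : α * β = (ξ:ℂ) / (ξ - 1)) (a : ℤ) (t : ℕ) :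
    mcoef α β z z' a (-1 - (t:ℤ)) = β ^ (a + 1 + t) * (1 - (ξ:ℂ)) ^ (1 + (t:ℂ) - z') *
      ∑' i : ℕ, tA z z' a t i * (ξ:ℂ) ^ i := by
  rw [mcoef_eq _ _ _ _ hβ, hab, pfaff _ _ _ ξ h0 h1, ← mul_assoc]
  have e : a - (-1 - (t:ℤ)) = a + 1 + t := by ring
  rw [e]
  congr 1
  · congr 2; push_cast; ring
  · apply tsum_congr; intro i
    unfold tA
    congr 3
    push_cast; ring

lemma mcoefStar_xi (α β z z' : ℂ) (hβ : β ≠ 0) (ξ : ℝ) (h0 : 0 < ξ) (h1 : ξ < 1/2)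
    (hab : α * β = (ξ:ℂ) / (ξ - 1)) (b : ℤ) (t : ℕ) :
    mcoefStar α β z z' b (-1 - (t:ℤ)) = β ^ (-1 - (t:ℤ) - b) * (1 - (ξ:ℂ)) ^ (z' - (t:ℂ)) *
      ∑' i : ℕ, tB z z' b t i * (ξ:ℂ) ^ i := by
  rw [mcoefStar_eq _ _ _ _ hβ, hab, pfaff _ _ _ ξ h0 h1, ← mul_assoc]
  congr 1
  · congr 2; push_cast; ring
  · apply tsum_congr; intro i
    unfold tB
    congr 3
    push_cast; ring

lemma mprod_xi (α β z z' : ℂ) (hβ : β ≠ 0) (ξ : ℝ) (h0 : 0 < ξ) (h1 : ξ < 1/2)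
    (hab : α * β = (ξ:ℂ) / (ξ - 1)) (a b : ℤ) (t : ℕ) :
    mcoef α β z z' a (-1 - (t:ℤ)) * mcoefStar α β z z' b (-1 - (t:ℤ)) =
      β ^ (a - b) * (1 - (ξ:ℂ)) * ((∑' i : ℕ, tA z z' a t i * (ξ:ℂ) ^ i) *
        ∑' i : ℕ, tB z z' b t i * (ξ:ℂ) ^ i) := by
  have hx : (1 - (ξ:ℂ)) ≠ 0 := by
    have : (1 - ξ : ℝ) ≠ 0 := by linarith
    exact_mod_cast this
  rw [mcoef_xi α β z z' hβ ξ h0 h1 hab, mcoefStar_xi α β z z' hβ ξ h0 h1 hab]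
  have e1 : β ^ (a - b) = β ^ (a + 1 + t) * β ^ (-1 - (t:ℤ) - b) := by
    rw [← zpow_add₀ hβ]; congr 1; ring
  have e2 : (1 - (ξ:ℂ)) ^ (1 + (t:ℂ) - z') * (1 - (ξ:ℂ)) ^ (z' - (t:ℂ)) = 1 - (ξ:ℂ) := by
    rw [← Complex.cpow_add _ _ hx]; ring_nf; simp
  rw [e1]
  linear_combination (β ^ (a + 1 + t) * β ^ (-1 - (t:ℤ) - b) * (∑' i : ℕ, tA z z' a t i * (ξ:ℂ) ^ i) *
        ∑' i : ℕ, tB z z' b t i * (ξ:ℂ) ^ i) * e2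

lemma zch_series_summable (P Q : ℂ) (k : ℤ) (ξ : ℝ) (h0 : 0 < ξ) (h1 : ξ < 1) :
    Summable (fun i : ℕ => ‖zch P (k + i) * Ring.choose Q i * (ξ:ℂ)^i‖) := by
  obtain ⟨q, hq1, hq⟩ := exists_Q ξ h0.le h1
  obtain ⟨C, hC, hzb⟩ := zch_bound P q hq1
  obtain ⟨C', hC', hcb⟩ := choose_bound Q q hq1
  refine Summable.of_nonneg_of_le (f := fun i : ℕ => C * q ^ k * C' * (q * q * ξ) ^ i)
      (fun i => by positivity) (fun i => ?_) ((summable_geometric_of_lt_one (by positivity) hq).mul_left _)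
  rw [norm_mul, norm_mul, norm_pow, Complex.norm_real, Real.norm_eq_abs, abs_of_pos h0]
  calc _ ≤ (C * q ^ (k + i : ℤ)) * (C' * q ^ i) * ξ ^ i := by
            gcongr
            · exact hzb _
            · exact hcb _
    _ = _ := by
        rw [zpow_add₀ (by positivity), zpow_natCast, mul_pow, mul_pow]; ring

lemma tB_zero (z z' : ℂ) (b : ℤ) (t j : ℕ) (h : (j:ℤ) < b + 1 + t) : tB z z' b t j = 0 := by
  unfold tB zch; rw [if_pos (by omega)]; simp

lemma triple_summable (z z' : ℂ) (a b : ℤ) (ξ : ℝ) (h0 : 0 < ξ) (h1 : ξ < 1) :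
    Summable (fun q : ℕ × (ℕ × ℕ) => ‖(tA z z' a q.1 q.2.1 * (ξ:ℂ) ^ q.2.1) *
      (tB z z' b q.1 q.2.2 * (ξ:ℂ) ^ q.2.2)‖) := by
  obtain ⟨q, hq1, hq⟩ := exists_Q ξ h0.le h1
  obtain ⟨C1, hC1, hb1⟩ := zch_bound (z' + a) q hq1
  obtain ⟨C2, hC2, hb2⟩ := choose_bound (-z - a - 1) q hq1
  obtain ⟨C3, hC3, hb3⟩ := zch_bound (-z' - b - 1) q hq1
  obtain ⟨C4, hC4, hb4⟩ := choose_bound (z + b) q hq1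
  have hq0 : 0 < q := by linarith
  set r := q * q * ξ with hr
  have hr0 : 0 < r := by positivity
  set ρ := Real.sqrt r with hρ
  have hρ0 : 0 < ρ := Real.sqrt_pos.mpr hr0
  have hρ2 : ρ * ρ = r := Real.mul_self_sqrt hr0.le
  have hρ1 : ρ < 1 := by
    rw [hρ, Real.sqrt_lt' one_pos]; simpa using hq
  have hg := summable_geometric_of_lt_one hρ0.le hρ1
  have hgg : Summable (fun p : ℕ × (ℕ × ℕ) => ρ ^ p.1 * (ρ ^ p.2.1 * ρ ^ p.2.2)) :=
    hg.mul_of_nonneg (hg.mul_of_nonneg hg (fun _ => by positivity) (fun _ => by positivity))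
      (fun _ => by positivity) (fun _ => by simp only [Pi.zero_apply]; positivity)
  refine Summable.of_nonneg_of_le (fun _ => norm_nonneg _) (fun p => ?_)
    (hgg.mul_left (C1 * C2 * C3 * C4 * q ^ (a - b) * ρ ^ (b + 1)))
  obtain ⟨t, i, j⟩ := p
  simp only
  by_cases hj : (j:ℤ) < b + 1 + t
  · rw [tB_zero _ _ _ _ _ hj]; simp; positivity
  · rw [norm_mul, norm_mul, norm_mul, norm_pow, norm_pow, Complex.norm_real, Real.norm_eq_abs, abs_of_pos h0]
    unfold tA tB
    rw [norm_mul, norm_mul]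
    calc _ ≤ ((C1 * q ^ (a + 1 + t + i : ℤ)) * (C2 * q ^ i) * ξ ^ i) *
            ((C3 * q ^ (-1 - t - b + j : ℤ)) * (C4 * q ^ j) * ξ ^ j) := by
              gcongr
              · exact hb1 _
              · exact hb2 _
              · exact hb3 _
              · exact hb4 _
      _ = C1 * C2 * C3 * C4 * (q ^ (a + 1 + t + i : ℤ) * q ^ (-1 - t - b + j : ℤ)) * (q ^ i * q ^ j * ξ ^ i * ξ ^ j) := by ring
      _ = C1 * C2 * C3 * C4 * q ^ (a - b) * (r ^ i * r ^ j) := by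
          rw [← zpow_add₀ hq0.ne', show (a + 1 + t + i : ℤ) + (-1 - t - b + j : ℤ) = (a - b) + (i + j : ℕ) by push_cast; ring,
            zpow_add₀ hq0.ne', zpow_natCast, hr, mul_pow, mul_pow, mul_pow, mul_pow, pow_add]; ring
      _ ≤ C1 * C2 * C3 * C4 * q ^ (a - b) * (ρ ^ i * (ρ ^ (b + 1 + t) * ρ ^ j)) := by
          rw [← hρ2, mul_pow, mul_pow]
          have e1 : ρ ^ i * ρ ^ i ≤ ρ ^ i * 1 := by
            gcongr; exact pow_le_one₀ hρ0.le hρ1.le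
          have e2 : ρ ^ j ≤ ρ ^ (b + 1 + t) := by
            rw [← zpow_natCast]
            exact zpow_le_zpow_right_of_le_one₀ hρ0 hρ1.le (by omega)
          rw [mul_one] at e1
          gcongr
      _ = _ := by rw [zpow_add₀ hρ0.ne' (b+1), zpow_natCast]; ring

lemma AB_eq (z z' : ℂ) (a b : ℤ) (ξ : ℝ) (h0 : 0 < ξ) (h1 : ξ < 1) (t : ℕ) :
    (∑' i : ℕ, tA z z' a t i * (ξ:ℂ) ^ i) * (∑' i : ℕ, tB z z' b t i * (ξ:ℂ) ^ i)
      = ∑' p : ℕ × ℕ, (tA z z' a t p.1 * (ξ:ℂ) ^ p.1) * (tB z z' b t p.2 * (ξ:ℂ) ^ p.2) :=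
  tsum_mul_tsum_of_summable_norm (zch_series_summable _ _ _ ξ h0 h1) (zch_series_summable _ _ _ ξ h0 h1)

lemma AB_summable (z z' : ℂ) (a b : ℤ) (ξ : ℝ) (h0 : 0 < ξ) (h1 : ξ < 1) :
    Summable (fun t : ℕ => ‖(∑' i : ℕ, tA z z' a t i * (ξ:ℂ) ^ i) * (∑' i : ℕ, tB z z' b t i * (ξ:ℂ) ^ i)‖) := by
  have h := triple_summable z z' a b ξ h0 h1
  rw [summable_prod_of_nonneg (fun _ => norm_nonneg _)] at h
  refine Summable.of_nonneg_of_le (fun _ => norm_nonneg _) (fun t => ?_) h.2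
  rw [AB_eq z z' a b ξ h0 h1]
  exact norm_tsum_le_tsum_norm (h.1 t)

theorem K_summable (α β z z' : ℂ) (hβ : β ≠ 0) (ξ : ℝ) (h0 : 0 < ξ) (h1 : ξ < 1/2)
    (hab : α * β = (ξ:ℂ) / (ξ - 1)) (a b : ℤ) :
    Summable (fun t : ℕ => ‖mcoef α β z z' a (-1 - (t:ℤ)) * mcoefStar α β z z' b (-1 - (t:ℤ))‖) := by
  simp only [mprod_xi α β z z' hβ ξ h0 h1 hab]
  simp only [norm_mul (β ^ (a - b) * (1 - (ξ:ℂ)))]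
  exact (AB_summable z z' a b ξ h0 (by linarith)).mul_left _

lemma kc_term (z z' : ℂ) (a b : ℤ) (ξ : ℝ) (n : ℕ) :
    kc z z' a b n * (ξ:ℂ) ^ n = ∑ p ∈ Finset.HasAntidiagonal.antidiagonal n, ∑' t : ℕ,
      (tA z z' a t p.1 * (ξ:ℂ) ^ p.1) * (tB z z' b t p.2 * (ξ:ℂ) ^ p.2) := by
  unfold kc
  rw [Finset.sum_mul]
  apply Finset.sum_congr rfl
  intro p hp
  rw [Finset.HasAntidiagonal.mem_antidiagonal] at hp
  rw [tsum_eq_sum (s := Finset.range (n + b.natAbs + 1)), Finset.sum_mul]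
  · apply Finset.sum_congr rfl
    intro t _
    rw [← hp, pow_add]; ring
  · intro t ht
    rw [Finset.mem_range] at ht
    rw [tB_zero _ _ _ _ _ (by omega)]; simp

lemma pair_summable (z z' : ℂ) (a b : ℤ) (ξ : ℝ) (h0 : 0 < ξ) (h1 : ξ < 1) :
    Summable (fun p : ℕ × ℕ => ‖∑' t : ℕ,
      (tA z z' a t p.1 * (ξ:ℂ) ^ p.1) * (tB z z' b t p.2 * (ξ:ℂ) ^ p.2)‖) := by
  have h := (Equiv.prodComm (ℕ × ℕ) ℕ).summable_iff.mpr (triple_summable z z' a b ξ h0 h1)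
  replace h := (summable_prod_of_nonneg (fun _ => by simp only [Function.comp, Pi.zero_apply]; exact norm_nonneg _)).mp h
  refine Summable.of_nonneg_of_le (fun _ => norm_nonneg _) (fun p => ?_) h.2
  exact norm_tsum_le_tsum_norm (h.1 p)

lemma kc_summable (z z' : ℂ) (a b : ℤ) (ξ : ℝ) (h0 : 0 < ξ) (h1 : ξ < 1) :
    Summable (fun n : ℕ => ‖kc z z' a b n * (ξ:ℂ) ^ n‖) := by
  have h := Finset.HasAntidiagonal.sigmaAntidiagonalEquivProd.summable_iff.mpr (pair_summable z z' a b ξ h0 h1)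
  replace h := (summable_sigma_of_nonneg (fun _ => by simp only [Function.comp, Pi.zero_apply]; exact norm_nonneg _)).mp h
  refine Summable.of_nonneg_of_le (fun _ => norm_nonneg _) (fun n => ?_) h.2
  rw [kc_term, tsum_fintype, Finset.univ_eq_attach]
  refine (norm_sum_le _ _).trans (le_of_eq ?_)
  exact (Finset.sum_attach (Finset.HasAntidiagonal.antidiagonal n) (fun p : ℕ × ℕ => ‖∑' t : ℕ,
      (tA z z' a t p.1 * (ξ:ℂ) ^ p.1) * (tB z z' b t p.2 * (ξ:ℂ) ^ p.2)‖)).symm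

theorem kerK_eq (α β z z' : ℂ) (hβ : β ≠ 0) (ξ : ℝ) (h0 : 0 < ξ) (h1 : ξ < 1/2)
    (hab : α * β = (ξ:ℂ) / (ξ - 1)) (a b : ℤ) :
    kerK α β z z' a b = β ^ (a - b) * (1 - (ξ:ℂ)) * ∑' n : ℕ, kc z z' a b n * (ξ:ℂ) ^ n := by
  have h1' : ξ < 1 := by linarith
  unfold kerK
  simp only [mprod_xi α β z z' hβ ξ h0 h1 hab, tsum_mul_left]
  congr 1
  simp only [AB_eq z z' a b ξ h0 h1', kc_term]
  have hs := (triple_summable z z' a b ξ h0 h1').of_norm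
  rw [← Summable.tsum_comm (f := fun (t : ℕ) (p : ℕ × ℕ) => (tA z z' a t p.1 * (ξ:ℂ) ^ p.1) * (tB z z' b t p.2 * (ξ:ℂ) ^ p.2)) hs]
  have hp := (pair_summable z z' a b ξ h0 h1').of_norm
  rw [hp.tsum_prod]
  exact tsum_antidiag _ hp

/-- power series absolutely converging at `ξ` -/
def CS (ξ : ℝ) : Subring (PowerSeries ℂ) where
  carrier := {f | Summable fun n => ‖PowerSeries.coeff n f * (ξ:ℂ) ^ n‖}
  mul_mem' := by
    intro f g hf hg
    have := summable_norm_sum_mul_antidiagonal_of_summable_norm hf hg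
    refine this.congr (fun n => ?_)
    congr 1
    rw [PowerSeries.coeff_mul, Finset.sum_mul]
    apply Finset.sum_congr rfl
    intro p hp
    rw [← Finset.HasAntidiagonal.mem_antidiagonal.mp hp, pow_add]; ring
  one_mem' := by
    apply summable_of_ne_finset_zero (s := {0})
    intro n hn
    simp [PowerSeries.coeff_one] at hn ⊢; tauto
  add_mem' := by
    intro f g hf hg
    refine Summable.of_nonneg_of_le (fun _ => norm_nonneg _) (fun n => ?_) (hf.add hg)
    rw [map_add, add_mul]; exact norm_add_le _ _
  zero_mem' := by simp [summable_zero]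
  neg_mem' := by
    intro f hf
    simpa using hf

lemma mem_CS {ξ : ℝ} {f : PowerSeries ℂ} : f ∈ CS ξ ↔ Summable fun n => ‖PowerSeries.coeff n f * (ξ:ℂ) ^ n‖ := Iff.rfl

/-- evaluation -/
def evS (ξ : ℝ) : CS ξ →+* ℂ where
  toFun f := ∑' n, PowerSeries.coeff n f.1 * (ξ:ℂ) ^ n
  map_one' := by
    rw [tsum_eq_single 0]
    · simp
    · intro n hn; simp [PowerSeries.coeff_one, hn]
  map_zero' := by simp
  map_add' f g := by
    rw [← (Summable.of_norm (mem_CS.mp f.2)).tsum_add (Summable.of_norm (mem_CS.mp g.2))]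
    apply tsum_congr; intro n
    simp [add_mul]
  map_mul' f g := by
    rw [tsum_mul_tsum_eq_tsum_sum_antidiagonal_of_summable_norm (mem_CS.mp f.2) (mem_CS.mp g.2)]
    apply tsum_congr; intro n
    rw [Subring.coe_mul, PowerSeries.coeff_mul, Finset.sum_mul]
    apply Finset.sum_congr rfl
    intro p hp
    rw [← Finset.HasAntidiagonal.mem_antidiagonal.mp hp, pow_add]; ring

lemma evS_det (ξ : ℝ) {s : ℕ} (M : Matrix (Fin s) (Fin s) (PowerSeries ℂ)) (h : ∀ p q, M p q ∈ CS ξ)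
    (B : PowerSeries ℂ) (hB : B ∈ CS ξ) :
    (Summable fun n => ‖PowerSeries.coeff n (B * M.det) * (ξ:ℂ) ^ n‖) ∧
    ∑' n, PowerSeries.coeff n (B * M.det) * (ξ:ℂ) ^ n =
      (∑' n, PowerSeries.coeff n B * (ξ:ℂ) ^ n) *
        (Matrix.of fun p q => ∑' n, PowerSeries.coeff n (M p q) * (ξ:ℂ) ^ n).det := by
  let M' : Matrix (Fin s) (Fin s) (CS ξ) := Matrix.of fun p q => ⟨M p q, h p q⟩
  have e : M.det = (M'.det : CS ξ) := by
    have := (CS ξ).subtype.map_det M'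
    simp only [Subring.subtype_apply] at this
    rw [this]; rfl
  have hm : B * M.det ∈ CS ξ := by
    rw [e]; exact (CS ξ).mul_mem hB (M'.det).2
  refine ⟨mem_CS.mp hm, ?_⟩
  have h1 := (evS ξ).map_det M'
  have h2 : evS ξ ⟨B * M.det, hm⟩ = evS ξ (⟨B, hB⟩ * M'.det) := by
    congr 1; ext1; simp [e]
  rw [map_mul, h1] at h2
  exact h2

lemma coeff_unique (c d : ℕ → ℂ) (hc : ∀ ξ : ℝ, 0 < ξ → ξ < 1/2 → Summable fun n => ‖c n * (ξ:ℂ) ^ n‖)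
    (hd : ∀ ξ : ℝ, 0 < ξ → ξ < 1/2 → Summable fun n => ‖d n * (ξ:ℂ) ^ n‖)
    (h : ∀ ξ : ℝ, 0 < ξ → ξ < 1/2 → ∑' n, c n * (ξ:ℂ) ^ n = ∑' n, d n * (ξ:ℂ) ^ n) : c = d := by
  set e := fun n => c n - d n with he
  have hsum : Summable fun n => ‖e n * (((1/4 : ℝ):ℂ)) ^ n‖ := by
    refine Summable.of_nonneg_of_le (fun _ => norm_nonneg _) (fun n => ?_)
      ((hc (1/4) (by norm_num) (by norm_num)).add (hd (1/4) (by norm_num) (by norm_num)))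
    simp only [he, sub_mul]; exact norm_sub_le _ _
  let P := FormalMultilinearSeries.ofScalars ℂ e
  have hrad : ((1/4 : NNReal) : ENNReal) ≤ P.radius := by
    apply P.le_radius_of_summable
    refine hsum.congr (fun n => ?_)
    simp [P]
  have hball := P.hasFPowerSeriesOnBall (lt_of_lt_of_le (by norm_num) hrad)
  have hev : ∀ y : ℂ, P.sum y = ∑' n, e n * y ^ n := by
    intro y
    simp [P, FormalMultilinearSeries.sum, mul_comm]
  have hz : ∀ ξ : ℝ, 0 < ξ → ξ < 1/2 → P.sum (ξ:ℂ) = 0 := by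
    intro ξ h0 h1
    rw [hev]
    simp only [he, sub_mul]
    rw [(hc ξ h0 h1).of_norm.tsum_sub (hd ξ h0 h1).of_norm, h ξ h0 h1, sub_self]
  have hfr : ∃ᶠ w in nhdsWithin (0:ℂ) {0}ᶜ, P.sum w = 0 := by
    have ht : Filter.Tendsto (fun x : ℝ => (x:ℂ)) (nhdsWithin 0 (Set.Ioi 0)) (nhdsWithin (0:ℂ) {0}ᶜ) := by
      apply tendsto_nhdsWithin_iff.mpr
      constructor
      · exact (Complex.continuous_ofReal.tendsto' 0 0 (by simp)).mono_left nhdsWithin_le_nhds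
      · filter_upwards [self_mem_nhdsWithin] with x hx
        simpa using (ne_of_gt hx)
    apply ht.frequently
    apply Filter.Eventually.frequently
    have : Set.Ioo (0:ℝ) (1/2) ∈ nhdsWithin (0:ℝ) (Set.Ioi 0) := Ioo_mem_nhdsGT (by norm_num)
    filter_upwards [this] with x hx
    exact hz x hx.1 hx.2
  have hev0 := (hball.analyticAt.frequently_zero_iff_eventually_zero).mp hfr
  have hP : P = 0 := hball.hasFPowerSeriesAt.eq_zero_of_eventually hev0
  have : e = 0 := (FormalMultilinearSeries.ofScalars_series_eq_zero ℂ).mp hP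
  funext n
  have := congrFun this n
  simp only [he, Pi.zero_apply] at this
  exact sub_eq_zero.mp this

/-- series of `(1-X)^(-e)` -/
def binS (e : ℂ) : PowerSeries ℂ := PowerSeries.mk fun n => Ring.choose (-e) n * (-1) ^ n

lemma binS_hasSum (e : ℂ) (ξ : ℝ) (h0 : 0 < ξ) (h1 : ξ < 1) :
    HasSum (fun n => PowerSeries.coeff n (binS e) * (ξ:ℂ) ^ n) ((1 - (ξ:ℂ)) ^ (-e)) := by
  have h := hasSum_binom (-e) (-(ξ:ℂ)) (by simpa [abs_of_pos h0] using h1)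
  rw [← sub_eq_add_neg] at h
  refine h.congr_fun (fun n => ?_)
  simp [binS]
  rw [neg_pow (ξ:ℂ)]; ring

lemma binS_mem (e : ℂ) (ξ : ℝ) (h0 : 0 < ξ) (h1 : ξ < 1) : binS e ∈ CS ξ :=
  mem_CS.mpr (binS_hasSum e ξ h0 h1).summable.norm

/-- the series whose coefficients are compared -/
def Dser (z z' : ℂ) {s : ℕ} (x : Fin s → ℤ) : PowerSeries ℂ :=
  binS (z * z' - s) * (Matrix.of fun p q => PowerSeries.mk (kc z z' (x p) (x q))).det

lemma det_gauge {s : ℕ} (β : ℂ) (hβ : β ≠ 0) (c : ℂ) (x : Fin s → ℤ) (k : Matrix (Fin s) (Fin s) ℂ) :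
    (Matrix.of fun p q => β ^ (x p - x q) * c * k p q).det = c ^ s * k.det := by
  have : (Matrix.of fun p q => β ^ (x p - x q) * c * k p q) =
      Matrix.of fun p q => β ^ (x p) * (Matrix.of fun p q => β ^ (- x q) * (c • k) p q) p q := by
    ext p q
    simp only [Matrix.of_apply, Matrix.smul_apply, smul_eq_mul]
    rw [sub_eq_add_neg, zpow_add₀ hβ]; ring
  rw [this, Matrix.det_mul_column, Matrix.det_mul_row, Matrix.det_smul, Fintype.card_fin, ← mul_assoc,
    ← Finset.prod_mul_distrib]
  rw [Finset.prod_eq_one, one_mul]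
  intro p _
  rw [← zpow_add₀ hβ]; simp

theorem Dser_ev (α β z z' : ℂ) (hβ : β ≠ 0) (ξ : ℝ) (h0 : 0 < ξ) (h1 : ξ < 1/2)
    (hab : α * β = (ξ:ℂ) / (ξ - 1)) {s : ℕ} (x : Fin s → ℤ) :
    (Summable fun n => ‖PowerSeries.coeff n (Dser z z' x) * (ξ:ℂ) ^ n‖) ∧
    ∑' n, PowerSeries.coeff n (Dser z z' x) * (ξ:ℂ) ^ n =
      (1 - (ξ:ℂ)) ^ (-(z * z')) * (Matrix.of fun p q => kerK α β z z' (x p) (x q)).det := by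
  have hx : (1 - (ξ:ℂ)) ≠ 0 := by
    have : (1 - ξ : ℝ) ≠ 0 := by linarith
    exact_mod_cast this
  have := evS_det ξ (Matrix.of fun p q => PowerSeries.mk (kc z z' (x p) (x q)))
    (fun p q => mem_CS.mpr (by simpa using kc_summable z z' (x p) (x q) ξ h0 (by linarith)))
    (binS (z * z' - s)) (binS_mem _ ξ h0 (by linarith))
  refine ⟨this.1, this.2.trans ?_⟩
  rw [(binS_hasSum _ ξ h0 (by linarith)).tsum_eq]
  simp only [kerK_eq α β z z' hβ ξ h0 h1 hab]
  have := det_gauge β hβ (1 - (ξ:ℂ)) x (Matrix.of fun p q => ∑' n : ℕ, kc z z' (x p) (x q) n * (ξ:ℂ) ^ n)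
  simp only [Matrix.of_apply] at this
  rw [this, show -(z * z' - (s:ℂ)) = -(z*z') + s by ring, Complex.cpow_add _ _ hx, Complex.cpow_natCast]
  simp [mul_assoc]

lemma finite_card_eq (r : ℕ) : {Y : YoungDiagram | Y.card = r}.Finite := by
  have hf : Set.Finite (YoungDiagram.cells ⁻¹' (((Finset.range r ×ˢ Finset.range r).powerset : Finset (Finset (ℕ × ℕ))) : Set (Finset (ℕ × ℕ)))) := by
    apply Set.Finite.preimage
    · intro a _ b _ h
      exact YoungDiagram.ext h
    · exact Finset.finite_toSet _
  refine hf.subset ?_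
  intro Y hY
  simp only [Set.mem_setOf_eq] at hY
  simp only [Set.mem_preimage, Finset.mem_coe, Finset.mem_powerset]
  intro c hc
  have h1 : (Finset.range (c.1+1)) ×ˢ ({c.2} : Finset ℕ) ⊆ Y.cells := by
    intro d hd
    simp only [Finset.mem_product, Finset.mem_range, Finset.mem_singleton] at hd
    exact Y.isLowerSet (show d ≤ c from ⟨by omega, by omega⟩) hc
  have h2 : ({c.1} : Finset ℕ) ×ˢ (Finset.range (c.2+1)) ⊆ Y.cells := by
    intro d hd
    simp only [Finset.mem_product, Finset.mem_range, Finset.mem_singleton] at hd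
    exact Y.isLowerSet (show d ≤ c from ⟨by omega, by omega⟩) hc
  have h1' := Finset.card_le_card h1
  have h2' := Finset.card_le_card h2
  simp only [Finset.card_product, Finset.card_range, Finset.card_singleton] at h1' h2'
  have : Y.cells.card = r := hY
  simp only [Finset.mem_product, Finset.mem_range]
  omega

/-- diagrams with `r` boxes -/
def YD (r : ℕ) : Finset YoungDiagram := (finite_card_eq r).toFinset

lemma mem_YD {r : ℕ} {Y : YoungDiagram} : Y ∈ YD r ↔ Y.card = r := by simp [YD]

/-- `X ⊆ S(Y)` -/
def inS {s : ℕ} (x : Fin s → ℤ) (Y : YoungDiagram) : Prop :=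
  ∀ p : Fin s, ∃ k : ℕ, x p = (Y.rowLen k : ℤ) - k - 1

/-- level sum of weights -/
def Gs (z z' : ℂ) {s : ℕ} (x : Fin s → ℤ) (r : ℕ) : ℂ :=
  ∑ Y ∈ YD r, if inS x Y then zWeight z z' Y else 0

/-- polynomial functions -/
def PF (f : ℂ → ℂ) : Prop := ∃ p : Polynomial ℂ, ∀ t, f t = p.eval t

lemma PF.const (c : ℂ) : PF (fun _ => c) := ⟨Polynomial.C c, by simp⟩
lemma PF.id : PF (fun t => t) := ⟨Polynomial.X, by simp⟩
lemma PF.add {f g : ℂ → ℂ} (hf : PF f) (hg : PF g) : PF (fun t => f t + g t) := by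
  obtain ⟨p, hp⟩ := hf; obtain ⟨q, hq⟩ := hg; exact ⟨p + q, by simp [hp, hq]⟩
lemma PF.mul {f g : ℂ → ℂ} (hf : PF f) (hg : PF g) : PF (fun t => f t * g t) := by
  obtain ⟨p, hp⟩ := hf; obtain ⟨q, hq⟩ := hg; exact ⟨p * q, by simp [hp, hq]⟩
lemma PF.neg {f : ℂ → ℂ} (hf : PF f) : PF (fun t => - f t) := by
  obtain ⟨p, hp⟩ := hf; exact ⟨-p, by simp [hp]⟩
lemma PF.sub {f g : ℂ → ℂ} (hf : PF f) (hg : PF g) : PF (fun t => f t - g t) := by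
  simpa only [sub_eq_add_neg] using hf.add hg.neg
lemma PF.div {f : ℂ → ℂ} (hf : PF f) (c : ℂ) : PF (fun t => f t / c) := by
  simpa only [div_eq_mul_inv] using hf.mul (PF.const c⁻¹)
lemma PF.sum {ι : Type*} (S : Finset ι) {f : ι → ℂ → ℂ} (h : ∀ i, PF (f i)) : PF (fun t => ∑ i ∈ S, f i t) := by
  choose p hp using h
  exact ⟨∑ i ∈ S, p i, by simp [hp, Polynomial.eval_finsetSum]⟩
lemma PF.prod {ι : Type*} (S : Finset ι) {f : ι → ℂ → ℂ} (h : ∀ i, PF (f i)) : PF (fun t => ∏ i ∈ S, f i t) := by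
  choose p hp using h
  exact ⟨∏ i ∈ S, p i, by simp [hp, Polynomial.eval_prod]⟩
lemma PF.choose {f : ℂ → ℂ} (hf : PF f) (n : ℕ) : PF (fun t => Ring.choose (f t) n) := by
  simp only [choose_eq_fallFac, fallFac]
  exact (PF.prod _ fun i => hf.sub (PF.const _)).div _
lemma PF.zch {f : ℂ → ℂ} (hf : PF f) (n : ℤ) : PF (fun t => zch (f t) n) := by
  unfold _root_.zch
  split_ifs
  · exact PF.const 0
  · exact hf.choose _

lemma PF.eq_of {f g : ℂ → ℂ} (hf : PF f) (hg : PF g) (S : Set ℂ) (hS : S.Infinite) (h : ∀ t ∈ S, f t = g t) :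
    f = g := by
  obtain ⟨p, hp⟩ := hf; obtain ⟨q, hq⟩ := hg
  have : p = q := Polynomial.eq_of_infinite_eval_eq p q (hS.mono fun t ht => by
    simp only [Set.mem_setOf_eq]; rw [← hp, ← hq]; exact h t ht)
  funext t; rw [hp, hq, this]

lemma PF.kc {f g : ℂ → ℂ} (hf : PF f) (hg : PF g) (a b : ℤ) (n : ℕ) : PF (fun t => kc (f t) (g t) a b n) := by
  unfold _root_.kc tA tB
  refine PF.sum _ fun p => PF.sum _ fun t => ?_
  refine PF.mul (PF.mul ?_ ?_) (PF.mul ?_ ?_)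
  · exact (hg.add (PF.const _)).zch _
  · exact ((hf.neg.sub (PF.const _)).sub (PF.const _)).choose _
  · exact ((hg.neg.sub (PF.const _)).sub (PF.const _)).zch _
  · exact (hf.add (PF.const _)).choose _

lemma PF.zWeight {f g : ℂ → ℂ} (hf : PF f) (hg : PF g) (Y : YoungDiagram) : PF (fun t => zWeight (f t) (g t) Y) := by
  unfold _root_.zWeight
  refine PF.prod _ fun c => ?_
  exact ((hf.add (PF.const _)).mul (hg.add (PF.const _))).div _

lemma PF.Gs {f g : ℂ → ℂ} (hf : PF f) (hg : PF g) {s : ℕ} (x : Fin s → ℤ) (r : ℕ) :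
    PF (fun t => Gs (f t) (g t) x r) := by
  unfold _root_.Gs
  refine PF.sum _ fun Y => ?_
  split_ifs
  · exact hf.zWeight hg Y
  · exact PF.const 0

/-- power series with polynomial coefficients -/
def PSF (f : ℂ → PowerSeries ℂ) : Prop := ∀ n, PF (fun t => PowerSeries.coeff n (f t))

lemma PSF.mul {f g : ℂ → PowerSeries ℂ} (hf : PSF f) (hg : PSF g) : PSF (fun t => f t * g t) := by
  intro n
  simp only [PowerSeries.coeff_mul]
  exact PF.sum _ fun p => (hf _).mul (hg _)
lemma PSF.const (c : PowerSeries ℂ) : PSF (fun _ => c) := fun n => PF.const _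
lemma PSF.sum {ι : Type*} (S : Finset ι) {f : ι → ℂ → PowerSeries ℂ} (h : ∀ i, PSF (f i)) : PSF (fun t => ∑ i ∈ S, f i t) := by
  intro n
  simp only [map_sum]
  exact PF.sum _ fun i => h i n
lemma PSF.prod {ι : Type*} (S : Finset ι) {f : ι → ℂ → PowerSeries ℂ} (h : ∀ i, PSF (f i)) : PSF (fun t => ∏ i ∈ S, f i t) := by
  induction S using Finset.induction_on with
  | empty => simpa using PSF.const 1
  | insert i S hi ih =>
    simp only [Finset.prod_insert hi]
    exact (h i).mul ih

lemma PSF.Dser {f g : ℂ → ℂ} (hf : PF f) (hg : PF g) {s : ℕ} (x : Fin s → ℤ) :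
    PSF (fun t => Dser (f t) (g t) x) := by
  unfold _root_.Dser
  refine PSF.mul ?_ ?_
  · intro n
    simp only [binS, PowerSeries.coeff_mk]
    exact (((hf.mul hg).sub (PF.const _)).neg.choose _).mul (PF.const _)
  · simp only [Matrix.det_apply', Matrix.of_apply]
    refine PSF.sum _ fun σ => PSF.mul (PSF.const _) (PSF.prod _ fun i => ?_)
    intro n
    simp only [PowerSeries.coeff_mk]
    exact hf.kc hg _ _ n

theorem poly_cont {s : ℕ} (x : Fin s → ℤ) (N0 : ℕ)
    (h : ∀ N M : ℕ, N0 ≤ N → N0 ≤ M → ∀ r, PowerSeries.coeff r (Dser N (-(M:ℂ)) x) = Gs N (-(M:ℂ)) x r)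
    (z z' : ℂ) (r : ℕ) : PowerSeries.coeff r (Dser z z' x) = Gs z z' x r := by
  have inf1 : Set.Infinite ((fun n : ℕ => (n:ℂ)) '' Set.Ici N0) :=
    Set.Infinite.image (Nat.cast_injective.injOn) (Set.Ici_infinite N0)
  have inf2 : Set.Infinite ((fun n : ℕ => -(n:ℂ)) '' Set.Ici N0) :=
    Set.Infinite.image (neg_injective.comp Nat.cast_injective).injOn (Set.Ici_infinite N0)
  have h1 : ∀ N : ℕ, N0 ≤ N → ∀ z' : ℂ, PowerSeries.coeff r (Dser N z' x) = Gs N z' x r := by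
    intro N hN z'
    have := PF.eq_of (PSF.Dser (PF.const N) PF.id x r) (PF.Gs (PF.const N) PF.id x r) _ inf2 (by
      rintro _ ⟨M, hM, rfl⟩
      exact h N M hN hM r)
    exact congrFun this z'
  have := PF.eq_of (PSF.Dser PF.id (PF.const z') x r) (PF.Gs PF.id (PF.const z') x r) _ inf1 (by
      rintro _ ⟨N, hN, rfl⟩
      exact h1 N hN z')
  exact congrFun this z

lemma zWeight_norm (z : ℂ) (Y : YoungDiagram) :
    zWeight z ((starRingEnd ℂ) z) Y = (‖zWeight z ((starRingEnd ℂ) z) Y‖ : ℝ) := by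
  have : ∃ w : ℝ, 0 ≤ w ∧ zWeight z ((starRingEnd ℂ) z) Y = w := by
    refine ⟨∏ c ∈ Y.cells, Complex.normSq (z + cellContent c) / (hookLen Y c : ℝ)^2,
      Finset.prod_nonneg (fun c _ => div_nonneg (Complex.normSq_nonneg _) (by positivity)), ?_⟩
    unfold zWeight
    push_cast
    apply Finset.prod_congr rfl
    intro c _
    rw [← Complex.mul_conj]
    simp
  obtain ⟨w, hw, h⟩ := this
  rw [h]; simp [abs_of_nonneg hw]

lemma fiber_tsum (f : YoungDiagram → ℂ) (hf : Summable f) :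
    ∑' Y, f Y = ∑' r : ℕ, ∑ Y ∈ YD r, f Y := by
  rw [← (Equiv.sigmaFiberEquiv YoungDiagram.card).tsum_eq f]
  have hfin : ∀ r, Fintype {Y : YoungDiagram // Y.card = r} := fun r => Set.Finite.fintype (finite_card_eq r)
  refine (Summable.tsum_sigma' (fun r => ?_) ((Equiv.sigmaFiberEquiv YoungDiagram.card).summable_iff.mpr hf)).trans ?_
  · have := hfin r
    exact (hasSum_fintype _).summable
  · apply tsum_congr
    intro r
    have := hfin r
    rw [tsum_fintype]
    symm
    exact Finset.sum_subtype (YD r) (fun Y => mem_YD) f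

lemma weight_summable (z : ℂ) (ξ : ℝ) (h0 : 0 < ξ) (h1 : ξ < 1)
    (H : ∀ r, PowerSeries.coeff r (Dser z ((starRingEnd ℂ) z) (Fin.elim0 : Fin 0 → ℤ)) = Gs z ((starRingEnd ℂ) z) (Fin.elim0 : Fin 0 → ℤ) r) :
    Summable fun Y : YoungDiagram => ‖(ξ:ℂ) ^ Y.card * zWeight z ((starRingEnd ℂ) z) Y‖ := by
  have hfin : ∀ r, Fintype {Y : YoungDiagram // Y.card = r} := fun r => Set.Finite.fintype (finite_card_eq r)
  rw [← (Equiv.sigmaFiberEquiv YoungDiagram.card).summable_iff]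
  refine (summable_sigma_of_nonneg (fun _ => by simp only [Function.comp]; exact norm_nonneg _)).mpr ⟨fun r => ?_, ?_⟩
  · have := hfin r
    exact (hasSum_fintype _).summable
  · have hs := (binS_hasSum (z * (starRingEnd ℂ) z) ξ h0 h1).summable.norm
    refine hs.congr (fun r => ?_)
    have := hfin r
    have h2 := H r
    have h3 : Dser z ((starRingEnd ℂ) z) (Fin.elim0 : Fin 0 → ℤ) = binS (z * (starRingEnd ℂ) z) := by
      simp [Dser]
    have h4 : Gs z ((starRingEnd ℂ) z) (Fin.elim0 : Fin 0 → ℤ) r = ((∑ Y ∈ YD r, ‖zWeight z ((starRingEnd ℂ) z) Y‖ : ℝ) : ℂ) := by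
      unfold Gs
      push_cast
      apply Finset.sum_congr rfl
      intro Y _
      rw [if_pos (show inS (Fin.elim0 : Fin 0 → ℤ) Y from fun p => p.elim0)]
      exact zWeight_norm z Y
    rw [h3, h4] at h2
    rw [h2, tsum_fintype, norm_mul, Complex.norm_real, Real.norm_of_nonneg (Finset.sum_nonneg fun _ _ => norm_nonneg _)]
    rw [Finset.sum_subtype (YD r) (fun Y => mem_YD) (fun Y => ‖zWeight z ((starRingEnd ℂ) z) Y‖), Finset.sum_mul]
    apply Finset.sum_congr rfl
    rintro ⟨Y, hY⟩ _
    simp [hY, mul_comm]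

theorem conclude (z : ℂ) (ξ : ℝ) (h0 : 0 < ξ) (h1 : ξ < 1/2)
    (H : ∀ s : ℕ, ∀ x : Fin s → ℤ, Function.Injective x → ∀ r,
      PowerSeries.coeff r (Dser z ((starRingEnd ℂ) z) x) = Gs z ((starRingEnd ℂ) z) x r)
    (α β : ℂ) (hβ : β ≠ 0) (hab : α * β = (ξ:ℂ) / (ξ - 1)) (s : ℕ) (x : Fin s → ℤ) (hx : Function.Injective x) :
    (∑' Y : YoungDiagram,
          if ∀ p : Fin s, ∃ k : ℕ, x p = (Y.rowLen k : ℤ) - k - 1 then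
            mixedM z ((starRingEnd ℂ) z) ξ Y
          else 0) =
        (Matrix.of fun p q : Fin s => kerK α β z ((starRingEnd ℂ) z) (x p) (x q)).det := by
  have hx0 : (1 - (ξ:ℂ)) ≠ 0 := by
    have : (1 - ξ : ℝ) ≠ 0 := by linarith
    exact_mod_cast this
  have hw := weight_summable z ξ h0 (by linarith) (fun r => H 0 Fin.elim0 (fun p => p.elim0) r)
  have hs : Summable fun Y : YoungDiagram => if inS x Y then (ξ:ℂ) ^ Y.card * zWeight z ((starRingEnd ℂ) z) Y else 0 := by
    apply Summable.of_norm
    refine Summable.of_nonneg_of_le (fun _ => norm_nonneg _) (fun Y => ?_) hw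
    split_ifs
    · exact le_rfl
    · rw [norm_zero]; exact norm_nonneg _
  have e1 : ∀ Y : YoungDiagram, (if ∀ p : Fin s, ∃ k : ℕ, x p = (Y.rowLen k : ℤ) - k - 1 then
            mixedM z ((starRingEnd ℂ) z) ξ Y else 0) = (1 - (ξ:ℂ)) ^ (z * (starRingEnd ℂ) z) *
            (if inS x Y then (ξ:ℂ) ^ Y.card * zWeight z ((starRingEnd ℂ) z) Y else 0) := by
    intro Y
    unfold inS mixedM
    split_ifs
    · ring
    · simp
  simp only [e1]
  rw [tsum_mul_left, fiber_tsum _ hs]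
  have e2 : ∀ r, (∑ Y ∈ YD r, if inS x Y then (ξ:ℂ) ^ Y.card * zWeight z ((starRingEnd ℂ) z) Y else 0)
      = PowerSeries.coeff r (Dser z ((starRingEnd ℂ) z) x) * (ξ:ℂ) ^ r := by
    intro r
    rw [H s x hx r, Gs, Finset.sum_mul]
    apply Finset.sum_congr rfl
    intro Y hY
    rw [mem_YD.mp hY]
    split_ifs
    · ring
    · simp
  simp only [e2]
  rw [(Dser_ev α β z _ hβ ξ h0 h1 hab x).2, ← mul_assoc, ← Complex.cpow_add _ _ hx0]
  simp

lemma det_mul_expand {R : Type*} [CommRing R] {N n : ℕ} (A : Matrix (Fin N) (Fin n) R) (B : Matrix (Fin n) (Fin N) R) :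
    (A * B).det = ∑ f : Fin N → Fin n, (∏ i, A i (f i)) * (B.submatrix f id).det := by
  have e : (A * B) = fun i => ∑ j, A i j • B j := by
    funext i k
    simp [Matrix.mul_apply]
  have h1 : (A * B).det = Matrix.detRowAlternating.toMultilinearMap (fun i => ∑ j, A i j • B j) := by
    rw [e]; rfl
  rw [h1, MultilinearMap.map_sum]
  apply Finset.sum_congr rfl
  intro f _
  rw [MultilinearMap.map_smul_univ]
  rfl

lemma strictAnti_unique {N n : ℕ} (f f' : Fin N → Fin n) (hf : StrictAnti f) (hf' : StrictAnti f')
    (h : Set.range f = Set.range f') : f = f' := by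
  have h1 : StrictMono (OrderDual.toDual ∘ f) := fun a b hab => hf hab
  have h2 : StrictMono (OrderDual.toDual ∘ f') := fun a b hab => hf' hab
  have : (OrderDual.toDual ∘ f) = (OrderDual.toDual ∘ f') := by
    apply (StrictMono.range_inj h1 h2).mp
    rw [Set.range_comp, Set.range_comp, h]
  funext i
  exact congrFun this i

lemma sum_inj_eq {R : Type*} [AddCommMonoid R] {N n : ℕ} (φ : (Fin N → Fin n) → R)
    (h0 : ∀ f, ¬ Function.Injective f → φ f = 0) :
    ∑ f, φ f = ∑ f : Fin N → Fin n with StrictAnti f, ∑ σ : Equiv.Perm (Fin N), φ (f ∘ σ) := by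
  rw [← Finset.sum_product', ← Finset.sum_filter_of_ne (p := Function.Injective)]
  swap
  · intro f _ hf
    by_contra h
    exact hf (h0 f h)
  symm
  apply Finset.sum_bij (fun (q : (Fin N → Fin n) × Equiv.Perm (Fin N)) _ => q.1 ∘ q.2)
  · rintro ⟨f, σ⟩ hq
    simp only [Finset.mem_product, Finset.mem_filter, Finset.mem_univ, true_and, and_true] at hq ⊢
    exact hq.injective.comp σ.injective
  · rintro ⟨f, σ⟩ hq ⟨f', σ'⟩ hq' h
    simp only [Finset.mem_product, Finset.mem_filter, Finset.mem_univ, true_and, and_true] at hq hq' h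
    have hr : Set.range f = Set.range f' := by
      have := congrArg Set.range h
      rwa [σ.surjective.range_comp, σ'.surjective.range_comp] at this
    have hff := strictAnti_unique f f' hq hq' hr
    subst hff
    have : σ = σ' := by
      ext1 i
      exact hq.injective (congrFun h i)
    rw [this]
  · intro f hf
    simp only [Finset.mem_filter, Finset.mem_univ, true_and] at hf
    let τ : Equiv.Perm (Fin N) := Fin.revPerm.trans (Tuple.sort f)
    have hm : StrictMono (f ∘ Tuple.sort f) :=
      (Tuple.monotone_sort f).strictMono_of_injective (hf.comp (Tuple.sort f).injective)
    refine ⟨(f ∘ τ, τ⁻¹), ?_, ?_⟩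
    · simp only [Finset.mem_product, Finset.mem_filter, Finset.mem_univ, true_and, and_true]
      intro a b hab
      exact hm (Fin.rev_lt_rev.mpr hab)
    · funext i
      simp
  · intros; rfl

theorem cauchyBinet {R : Type*} [CommRing R] {N n : ℕ} (A : Matrix (Fin N) (Fin n) R) (B : Matrix (Fin n) (Fin N) R) :
    (A * B).det = ∑ f : Fin N → Fin n with StrictAnti f, (A.submatrix id f).det * (B.submatrix f id).det := by
  rw [det_mul_expand, sum_inj_eq]
  · apply Finset.sum_congr rfl
    intro f _
    rw [← Matrix.det_transpose (A.submatrix id f), Matrix.det_apply', Finset.sum_mul]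
    apply Finset.sum_congr rfl
    intro σ _
    have : B.submatrix (f ∘ σ) id = (B.submatrix f id).submatrix σ id := rfl
    rw [this, Matrix.det_permute]
    simp only [Matrix.transpose_apply, Matrix.submatrix_apply, id, Function.comp]
    ring
  · intro f hf
    have : ∃ i j, f i = f j ∧ i ≠ j := by
      simpa [Function.Injective] using hf
    obtain ⟨i, j, hij, hne⟩ := this
    rw [Matrix.det_zero_of_row_eq hne (by funext k; simp [hij]), mul_zero]

theorem finite_dpp {N n s : ℕ} (g : Matrix (Fin n) (Fin N) ℂ) (h : Matrix (Fin N) (Fin n) ℂ) (hg : h * g = 1)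
    (x : Fin s → Fin n) (hx : Function.Injective x) :
    ∑ f : Fin N → Fin n with StrictAnti f,
      (if ∀ p, ∃ i, x p = f i then (h.submatrix id f).det * (g.submatrix f id).det else 0)
    = ((g * h).submatrix x x).det := by
  let C := (Polynomial.C : ℂ →+* Polynomial ℂ)
  let d : Fin n → Polynomial ℂ := fun k => if k ∈ Set.range x then 1 + Polynomial.X else 1
  let A : Matrix (Fin N) (Fin n) (Polynomial ℂ) := Matrix.of fun i k => d k * C (h i k)
  let B : Matrix (Fin n) (Fin N) (Polynomial ℂ) := g.map C
  have h1 := cauchyBinet A B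
  have h2 : (A * B).det = ((Polynomial.X : Polynomial ℂ) • (((g * h).submatrix x x).map C) + (1 : Matrix (Fin s) (Fin s) ℂ).map C).det := by
    have e1 : A * B = 1 + ((Polynomial.X : Polynomial ℂ) • (h.submatrix id x).map C) * ((g.submatrix x id).map C) := by
      ext1 i j
      have hgij : ∑ k, h i k * g k j = (1 : Matrix (Fin N) (Fin N) ℂ) i j := by
        rw [← hg, Matrix.mul_apply]
      rw [Matrix.mul_apply, Matrix.add_apply, Matrix.mul_apply]
      have e2 : (1 : Matrix (Fin N) (Fin N) (Polynomial ℂ)) i j = C ((1 : Matrix (Fin N) (Fin N) ℂ) i j) := by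
        rw [Matrix.one_apply, Matrix.one_apply]; split_ifs <;> simp
      rw [e2, ← hgij, map_sum]
      have e3 : ∀ k, A i k * B k j = C (h i k * g k j) + (if k ∈ Finset.univ.image x then Polynomial.X * C (h i k * g k j) else 0) := by
        intro k
        simp only [A, B, d, Matrix.of_apply, Matrix.map_apply, map_mul]
        have : k ∈ Finset.univ.image x ↔ k ∈ Set.range x := by simp
        simp only [this]
        split_ifs <;> ring
      simp only [e3]
      rw [Finset.sum_add_distrib, Finset.sum_ite_mem, Finset.univ_inter, Finset.sum_image hx.injOn]
      congr 1
      apply Finset.sum_congr rfl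
      intro p _
      simp [C, mul_assoc]
      ring
    rw [e1, Matrix.det_one_add_mul_comm]
    congr 1
    have : (1 : Matrix (Fin s) (Fin s) ℂ).map C = 1 := Matrix.map_one _ (map_zero _) (map_one _)
    rw [this, add_comm]
    congr 1
    rw [Matrix.mul_smul]
    congr 1
    rw [← Matrix.map_mul]
    rfl
  rw [h2] at h1
  have h3 := congrArg (fun q => Polynomial.coeff q s) h1
  have h4 := Polynomial.coeff_det_X_add_C_card ((g * h).submatrix x x) (1 : Matrix (Fin s) (Fin s) ℂ)
  rw [Fintype.card_fin] at h4
  rw [← h4]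
  refine Eq.trans ?_ h3.symm
  rw [Polynomial.finsetSum_coeff]
  apply Finset.sum_congr rfl
  intro f hf
  simp only [Finset.mem_filter, Finset.mem_univ, true_and] at hf
  have hA : (A.submatrix id f).det = (∏ i, d (f i)) * C ((h.submatrix id f).det) := by
    have : A.submatrix id f = Matrix.of fun i j => d (f j) * ((h.submatrix id f).map C) i j := by
      ext1 i j; simp [A]
    rw [this, Matrix.det_mul_row, C.map_det]; rfl
  have hB : (B.submatrix f id).det = C ((g.submatrix f id).det) := by
    rw [C.map_det]; rfl
  have hd : ∏ i, d (f i) = (1 + Polynomial.X) ^ (Finset.univ.filter fun i => f i ∈ Set.range x).card := by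
    simp only [d]
    rw [Finset.prod_ite]; simp
  rw [hA, hB, hd, mul_assoc, ← map_mul, Polynomial.coeff_mul_C, Polynomial.coeff_one_add_X_pow]
  set T := Finset.univ.filter fun i => f i ∈ Set.range x with hT
  have hcard : (T.image f) ⊆ Finset.univ.image x := by
    intro k hk
    simp only [hT, Finset.mem_image, Finset.mem_filter, Finset.mem_univ, true_and] at hk
    obtain ⟨i, ⟨p, hp⟩, rfl⟩ := hk
    simp only [Finset.mem_image, Finset.mem_univ, true_and]
    exact ⟨p, hp⟩
  have c1 : (T.image f).card = T.card := Finset.card_image_of_injective _ hf.injective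
  have c2 : (Finset.univ.image x).card = s := by rw [Finset.card_image_of_injective _ hx]; simp
  split_ifs with hc
  · have : T.card = s := by
      rw [← c1, ← c2]
      congr 1
      apply Finset.Subset.antisymm hcard
      intro k hk
      simp only [Finset.mem_image, Finset.mem_univ, true_and] at hk
      obtain ⟨p, rfl⟩ := hk
      obtain ⟨i, hi⟩ := hc p
      simp only [hT, Finset.mem_image, Finset.mem_filter, Finset.mem_univ, true_and]
      exact ⟨i, ⟨p, hi⟩, hi.symm⟩
    rw [this]; simp
  · have : T.card < s := by
      rw [← c1, ← c2]
      apply Finset.card_lt_card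
      refine ⟨hcard, fun hsub => hc fun p => ?_⟩
      have := hsub (Finset.mem_image_of_mem x (Finset.mem_univ p))
      simp only [Finset.mem_image] at this
      obtain ⟨i, _, hi⟩ := this
      exact ⟨i, hi.symm⟩
    rw [Nat.choose_eq_zero_of_lt this]; simp

def mED (n p k : ℕ) : ℂ := if k ≤ p then (-1) ^ (p - k) * ((n - 1 - k).choose (p - k) : ℂ) else 0
def mEU (w : ℂ) (k q : ℕ) : ℂ := (q.choose k : ℂ) * w ^ (q - k)
def mED' (n k p : ℕ) : ℂ := if p ≤ k then ((n - 1 - p).choose (k - p) : ℂ) else 0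
def gf (n : ℕ) (w : ℂ) (p q : ℕ) : ℂ := ∑ k ∈ Finset.range n, mED n p k * mEU w k q
def hf (n : ℕ) (w : ℂ) (q p : ℕ) : ℂ := ∑ k ∈ Finset.range n, mEU (-w) q k * mED' n k p

lemma choose_neg_nat (m i : ℕ) : Ring.choose (-((m:ℂ) + 1)) i = (-1) ^ i * ((m + i).choose i : ℂ) := by
  have h := choose_neg_shift (m:ℂ) i
  rw [show (m:ℂ) + i = ((m + i : ℕ) : ℂ) by push_cast; ring, Ring.choose_natCast] at h
  rw [h, ← mul_assoc, ← mul_pow]; simp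

lemma mcoef_gf (w : ℂ) (N M p q : ℕ) (hp : p < N + M) (hq : q < N + M) :
    mcoef w 1 N (-(M:ℂ)) ((p:ℤ) - N) ((q:ℤ) - N) = gf (N + M) w p q := by
  rw [mcoef_eq _ _ _ _ one_ne_zero, one_zpow, one_mul, mul_one]
  rw [tsum_eq_sum (s := Finset.range (q + 1)), ← Finset.sum_range_reflect]
  · unfold gf
    rw [← Finset.sum_subset (Finset.range_subset_range.mpr (show q + 1 ≤ N + M by omega))]
    · apply Finset.sum_congr rfl
      intro k hk
      have hk : k ≤ q := by simpa [Nat.lt_succ_iff] using hk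
      have e1 : (((N:ℕ):ℂ) + (((q:ℤ) - N : ℤ) : ℂ)) = (q:ℕ) := by push_cast; ring
      have e2 : (-(M:ℂ) + (((p:ℤ) - N : ℤ) : ℂ)) = -(((N + M - 1 - p : ℕ) : ℂ) + 1) := by
        have : ((N + M - 1 - p : ℕ) : ℂ) = N + M - 1 - p := by
          rw [Nat.cast_sub (by omega), Nat.cast_sub (by omega)]; push_cast; ring
        rw [this]; push_cast; ring
      have e3 : q + 1 - 1 - k = q - k := by omega
      rw [e1, e2, e3, Ring.choose_natCast, Nat.choose_symm hk]
      unfold mEU mED zch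
      split_ifs with h1 h2 h2
      · exfalso; omega
      · ring
      · have e4 : ((p:ℤ) - N - ((q:ℤ) - N) + ((q - k : ℕ):ℤ)).toNat = p - k := by omega
        rw [e4, choose_neg_nat, show N + M - 1 - p + (p - k) = N + M - 1 - k by omega]; ring
      · exfalso; omega
    · intro k _ hk
      unfold mEU
      rw [Nat.choose_eq_zero_of_lt (by simpa using hk)]; simp
  · intro i hi
    have e1 : (((N:ℕ):ℂ) + (((q:ℤ) - N : ℤ) : ℂ)) = (q:ℕ) := by push_cast; ring
    rw [e1, Ring.choose_natCast, Nat.choose_eq_zero_of_lt (by simpa using hi)]; simp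

lemma zch_nat (m : ℕ) (k : ℤ) (h : (m:ℤ) < k) : zch m k = 0 := by
  unfold zch
  split_ifs
  · rfl
  · rw [Ring.choose_natCast, Nat.choose_eq_zero_of_lt (by omega)]; simp

lemma mcoefStar_hf (w : ℂ) (N M p q : ℕ) (hp : p < N + M) (hq : q < N + M) :
    mcoefStar w 1 N (-(M:ℂ)) ((p:ℤ) - N) ((q:ℤ) - N) = hf (N + M) w q p := by
  rw [mcoefStar_eq _ _ _ _ one_ne_zero, one_zpow, one_mul, mul_one]
  have e2 : (-(-(M:ℂ)) - (((p:ℤ) - N : ℤ) : ℂ)) - 1 = ((N + M - 1 - p : ℕ) : ℂ) := by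
        have : ((N + M - 1 - p : ℕ) : ℂ) = N + M - 1 - p := by
          rw [Nat.cast_sub (by omega), Nat.cast_sub (by omega)]; push_cast; ring
        rw [this]; push_cast; ring
  rw [e2]
  rw [tsum_eq_sum (s := Finset.range (N + M - q))]
  · unfold hf
    rw [show N + M = q + (N + M - q) by omega, Finset.sum_range_add]
    rw [Finset.sum_eq_zero (s := Finset.range q), zero_add, show q + (N + M - q) = N + M by omega]
    · apply Finset.sum_congr rfl
      intro i hi
      have hi : i < N + M - q := by simpa using hi
      have e1 : (-((N:ℕ):ℂ) - (((q:ℤ) - N : ℤ) : ℂ)) - 1 = -((q:ℂ) + 1) := by push_cast; ring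
      rw [e1, choose_neg_nat]
      unfold mEU mED' zch
      have e5 : ((-1:ℂ))^i * w ^ i = (-w) ^ i := by rw [← mul_pow]; simp
      rw [Nat.add_sub_cancel_left, ← e5, Nat.choose_symm_add]
      split_ifs with h1 h2 h2
      · exfalso; omega
      · ring
      · have e4 : ((q:ℤ) - N - ((p:ℤ) - N) + (i:ℤ)).toNat = q + i - p := by omega
        rw [e4, Ring.choose_natCast]; ring
      · exfalso; omega
    · intro k hk
      unfold mEU
      rw [Nat.choose_eq_zero_of_lt (by simpa using hk)]; simp
  · intro i hi
    rw [Finset.mem_range, not_lt] at hi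
    rw [zch_nat _ _ (by omega)]; simp

lemma mcoefStar_zero (w : ℂ) (N M p u : ℕ) (m : ℤ) (hm : m = -(N:ℤ) - 1 - u) :
    mcoefStar w 1 N (-(M:ℂ)) ((p:ℤ) - N) m = 0 := by
  rw [mcoefStar_eq _ _ _ _ one_ne_zero, one_zpow, one_mul]
  subst hm
  have : ∀ i : ℕ, zch (-(-(M:ℂ)) - (((p:ℤ) - N : ℤ) : ℂ) - 1) (-(N:ℤ) - 1 - u - ((p:ℤ) - N) + i) *
      Ring.choose (-(N:ℂ) - ((-(N:ℤ) - 1 - u : ℤ) : ℂ) - 1) i * (w * 1) ^ i = 0 := by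
    intro i
    by_cases hi : u < i
    · rw [show (-(N:ℂ) - ((-(N:ℤ) - 1 - u : ℤ) : ℂ) - 1) = (u:ℕ) by push_cast; ring,
        Ring.choose_natCast, Nat.choose_eq_zero_of_lt hi]; simp
    · unfold zch
      rw [if_pos (by omega)]; simp
  simp only [this, tsum_zero]

lemma kerK_fin (w : ℂ) (N M p p' : ℕ) (hp : p < N + M) (hp' : p' < N + M) :
    kerK w 1 N (-(M:ℂ)) ((p:ℤ) - N) ((p':ℤ) - N) = ∑ q ∈ Finset.range N, gf (N + M) w p q * hf (N + M) w q p' := by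
  unfold kerK
  rw [tsum_eq_sum (s := Finset.range N), ← Finset.sum_range_reflect]
  · apply Finset.sum_congr rfl
    intro q hq
    have hq : q < N := by simpa using hq
    rw [show (-1 - ((N - 1 - q : ℕ) : ℤ)) = (q:ℤ) - N by omega, mcoef_gf w N M p q hp (by omega),
      mcoefStar_hf w N M p' q hp' (by omega)]
  · intro t ht
    rw [Finset.mem_range, not_lt] at ht
    rw [mcoefStar_zero w N M p' (t - N) _ (by omega), mul_zero]

lemma mEU_inv (w : ℂ) (n q r : ℕ) (hr : r < n) :
    ∑ k ∈ Finset.range n, mEU (-w) q k * mEU w k r = if q = r then 1 else 0 := by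
  unfold mEU
  rw [← Finset.sum_subset (Finset.range_subset_range.mpr (show r + 1 ≤ n by omega))]
  swap
  · intro k _ hk
    rw [Nat.choose_eq_zero_of_lt (n := r) (k := k) (by simpa using hk)]; simp
  by_cases hqr : q ≤ r
  · rw [show r + 1 = q + (r - q + 1) by omega, Finset.sum_range_add, Finset.sum_eq_zero, zero_add]
    swap
    · intro k hk
      rw [Nat.choose_eq_zero_of_lt (n := k) (k := q) (by simpa using hk)]; simp
    have : ∀ i ∈ Finset.range (r - q + 1), ((q + i).choose q : ℂ) * (-w) ^ (q + i - q) * ((r.choose (q + i) : ℂ) * w ^ (r - (q + i)))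
        = (r.choose q : ℂ) * ((-w) ^ i * w ^ (r - q - i) * ((r - q).choose i : ℂ)) := by
      intro i hi
      have hi : i ≤ r - q := by simpa [Nat.lt_succ_iff] using hi
      have h := Nat.choose_mul (n := r) (k := q + i) (s := q) (by omega)
      rw [Nat.add_sub_cancel_left] at h ⊢
      have h' : (r.choose (q + i) : ℂ) * ((q + i).choose q) = r.choose q * (r - q).choose i := by exact_mod_cast h
      rw [show r - (q + i) = r - q - i by omega]
      linear_combination (-w) ^ i * w ^ (r - q - i) * h'
    rw [Finset.sum_congr rfl this, ← Finset.mul_sum, ← add_pow, neg_add_cancel]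
    split_ifs with h
    · subst h; simp
    · rw [zero_pow (by omega)]; simp
  · rw [Finset.sum_eq_zero, if_neg (by omega)]
    intro k hk
    have : k ≤ r := by simpa [Nat.lt_succ_iff] using hk
    rw [Nat.choose_eq_zero_of_lt (n := k) (k := q) (by omega)]; simp

lemma mED_inv (n k l : ℕ) (hk : k < n) :
    ∑ p ∈ Finset.range n, mED' n k p * mED n p l = if k = l then 1 else 0 := by
  unfold mED mED'
  rw [← Finset.sum_subset (Finset.range_subset_range.mpr (show k + 1 ≤ n by omega))]
  swap
  · intro p _ hp
    rw [if_neg (by simpa using hp)]; simp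
  by_cases hlk : l ≤ k
  · rw [show k + 1 = l + (k - l + 1) by omega, Finset.sum_range_add, Finset.sum_eq_zero, zero_add]
    swap
    · intro p hp
      rw [if_neg (by simpa using hp) (c := l ≤ p)]; simp
    have : ∀ i ∈ Finset.range (k - l + 1), ((if l + i ≤ k then ((n - 1 - (l + i)).choose (k - (l + i)) : ℂ) else 0) *
        (if l ≤ l + i then (-1) ^ (l + i - l) * ((n - 1 - l).choose (l + i - l) : ℂ) else 0)) =
        ((n - 1 - l).choose (k - l) : ℂ) * ((-1) ^ i * 1 ^ (k - l - i) * ((k - l).choose i : ℂ)) := by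
      intro i hi
      have hi : i ≤ k - l := by simpa [Nat.lt_succ_iff] using hi
      rw [if_pos (by omega), if_pos (by omega)]
      have h := Nat.choose_mul (n := n - 1 - l) (k := k - l) (s := i) hi
      rw [show n - 1 - (l + i) = n - 1 - l - i by omega, show k - (l + i) = k - l - i by omega, Nat.add_sub_cancel_left]
      have h' : ((n - 1 - l).choose (k - l) : ℂ) * ((k - l).choose i) = (n - 1 - l).choose i * (n - 1 - l - i).choose (k - l - i) := by exact_mod_cast h
      rw [one_pow]
      linear_combination -(-1) ^ i * h'
    rw [Finset.sum_congr rfl this, ← Finset.mul_sum, ← add_pow, neg_add_cancel]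
    split_ifs with h
    · subst h; simp
    · rw [zero_pow (by omega)]; simp
  · rw [Finset.sum_eq_zero, if_neg (by omega)]
    intro p hp
    have : p ≤ k := by simpa [Nat.lt_succ_iff] using hp
    rw [if_neg (by omega) (c := l ≤ p)]; simp

lemma hf_gf_inv (n : ℕ) (w : ℂ) (q r : ℕ) (hr : r < n) (hq : q < n) :
    ∑ p ∈ Finset.range n, hf n w q p * gf n w p r = if q = r then 1 else 0 := by
  unfold hf gf
  simp only [Finset.sum_mul_sum]
  have e : ∀ p k l, mEU (-w) q k * mED' n k p * (mED n p l * mEU w l r) =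
    mEU (-w) q k * (mED' n k p * mED n p l) * mEU w l r := by intros; ring
  simp only [e]
  rw [Finset.sum_comm]
  have : ∀ k ∈ Finset.range n, ∑ p ∈ Finset.range n, ∑ l ∈ Finset.range n,
      mEU (-w) q k * (mED' n k p * mED n p l) * mEU w l r = mEU (-w) q k * mEU w k r := by
    intro k hk
    rw [Finset.sum_comm]
    simp only [← Finset.sum_mul, ← Finset.mul_sum]
    rw [Finset.sum_congr rfl (fun l _ => by rw [mED_inv n k l (Finset.mem_range.mp hk)])]
    simp only [mul_ite, mul_one, mul_zero, ite_mul, zero_mul]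
    rw [Finset.sum_ite_eq, if_pos hk]
  rw [Finset.sum_congr rfl this, mEU_inv w n q r hr]

/-- Vandermonde -/
def Vd {N : ℕ} (f : Fin N → ℕ) : ℂ := (Matrix.vandermonde (fun i => (f i : ℂ))).det

lemma det_descFac {N : ℕ} (f : Fin N → ℕ) :
    (Matrix.of fun i k : Fin N => ((f i).descFactorial k : ℂ)).det = Vd f := by
  have h := Matrix.det_eval_matrixOfPolynomials_eq_det_vandermonde (fun i => (f i : ℂ))
    (fun k : Fin N => descPochhammer ℂ k) (fun k => descPochhammer_natDegree ℂ k) (fun k => monic_descPochhammer ℂ k)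
  unfold Vd
  rw [h]
  congr 1
  ext i k
  simp [descPochhammer_eval_eq_descFactorial]

lemma descFac_ne (m k : ℕ) (h : k ≤ m) : (m.descFactorial k : ℂ) ≠ 0 := by
  have : m.descFactorial k ≠ 0 := by
    rw [Ne, Nat.descFactorial_eq_zero_iff_lt]; omega
  exact_mod_cast this

lemma mED_eq (n p k : ℕ) (hp : p < n) (hk : k < n) :
    mED n p k = ((-1) ^ p * ((n - 1).choose p : ℂ)) * (((-1) ^ k / ((n - 1).descFactorial k : ℂ)) * (p.descFactorial k : ℂ)) := by
  unfold mED
  have hne := descFac_ne (n - 1) k (by omega)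
  split_ifs with h
  · have h1 := Nat.choose_mul (n := n - 1) (k := p) (s := k) h
    have h2 : ((n - 1).choose p * p.descFactorial k : ℕ) = (n-1).descFactorial k * (n - 1 - k).choose (p - k) := by
      rw [Nat.descFactorial_eq_factorial_mul_choose, Nat.descFactorial_eq_factorial_mul_choose]
      linear_combination k.factorial * h1
    have h3 : ((n - 1).choose p : ℂ) * (p.descFactorial k : ℂ) = ((n-1).descFactorial k : ℂ) * ((n - 1 - k).choose (p - k) : ℂ) := by
      exact_mod_cast h2
    have h4 : (-1 : ℂ) ^ (p - k) = (-1) ^ p * (-1) ^ k := by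
      obtain ⟨d, rfl⟩ := Nat.exists_eq_add_of_le h
      rw [Nat.add_sub_cancel_left, pow_add]
      have : ((-1:ℂ)) ^ k * (-1) ^ k = 1 := by rw [← mul_pow]; simp
      linear_combination -(-1:ℂ) ^ d * this
    rw [h4]
    field_simp
    linear_combination -h3
  · have : p.descFactorial k = 0 := Nat.descFactorial_eq_zero_iff_lt.mpr (by omega)
    rw [this]; simp

lemma det_g {N n : ℕ} (hNn : N ≤ n) (w : ℂ) (f : Fin N → ℕ) (hf : ∀ i, f i < n) :
    (Matrix.of fun i j : Fin N => gf n w (f i) j).det =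
      (∏ i, ((-1) ^ (f i) * ((n - 1).choose (f i) : ℂ))) *
        (∏ k : Fin N, ((-1) ^ (k:ℕ) / ((n - 1).descFactorial k : ℂ))) * Vd f := by
  have e : (Matrix.of fun i j : Fin N => gf n w (f i) j) =
      (Matrix.of fun i k : Fin N => mED n (f i) k) * (Matrix.of fun k j : Fin N => mEU w k j) := by
    ext i j
    rw [Matrix.mul_apply]
    simp only [Matrix.of_apply]
    unfold gf
    rw [Fin.sum_univ_eq_sum_range (fun k => mED n (f i) k * mEU w k j) N]
    symm
    apply Finset.sum_subset (Finset.range_subset_range.mpr hNn)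
    intro k _ hk
    rw [Finset.mem_range, not_lt] at hk
    unfold mEU
    rw [Nat.choose_eq_zero_of_lt (by omega)]; simp
  have e2 : (Matrix.of fun k j : Fin N => mEU w k j).det = 1 := by
    rw [Matrix.det_of_upperTriangular]
    · simp [mEU]
    · intro i j hij
      simp only [id] at hij
      simp only [Matrix.of_apply, mEU]
      rw [Nat.choose_eq_zero_of_lt (by omega)]; simp
  have e3 : (Matrix.of fun i k : Fin N => mED n (f i) k) = Matrix.of fun i k => ((-1) ^ (f i) * ((n - 1).choose (f i) : ℂ)) *
      (Matrix.of fun i k : Fin N => ((-1) ^ (k:ℕ) / ((n - 1).descFactorial k : ℂ)) *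
        (Matrix.of fun i k : Fin N => ((f i).descFactorial k : ℂ)) i k) i k := by
    ext i k
    simp only [Matrix.of_apply]
    exact mED_eq n (f i) k (hf i) (by omega)
  rw [e, Matrix.det_mul, e2, mul_one, e3, Matrix.det_mul_column, Matrix.det_mul_row, det_descFac, mul_assoc]

open Polynomial in
lemma hf_poly (n : ℕ) (w : ℂ) (q p : ℕ) (hp : p < n) :
    hf n w q p = ((X - C w) ^ p * (1 + (X - C w)) ^ (n - 1 - p) : ℂ[X]).coeff q := by
  rw [add_comm 1 (X - C w), add_pow, Finset.mul_sum, finsetSum_coeff]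
  unfold hf
  rw [show n = p + (n - 1 - p + 1) by omega, Finset.sum_range_add, Finset.sum_eq_zero, zero_add,
    show p + (n - 1 - p + 1) = n by omega]
  · apply Finset.sum_congr rfl
    intro i _
    have : ((X - C w) ^ p * ((X - C w) ^ i * 1 ^ (n - 1 - p - i) * ((n - 1 - p).choose i : ℂ[X])) : ℂ[X]) =
       (X - C w) ^ (p + i) * C ((n - 1 - p).choose i : ℂ) := by
      rw [pow_add, one_pow]; simp; ring
    rw [this, coeff_mul_C, sub_eq_add_neg, ← C_neg, coeff_X_add_C_pow]
    unfold mEU mED'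
    rw [if_pos (by omega), Nat.add_sub_cancel_left]; ring
  · intro k hk
    unfold mED'
    rw [if_neg (by simpa using hk), mul_zero]

/-- lower triangular factor -/
def mL (n : ℕ) (ξ : ℂ) (q k : ℕ) : ℂ :=
  if k ≤ q then (1 - ξ) ^ k * (1 - ξ)⁻¹ ^ (n - 1 - q) * ((n - 1 - k).choose (q - k) : ℂ) else 0

open Polynomial in
lemma hf_L (n : ℕ) (ξ : ℂ) (hξ : 1 - ξ ≠ 0) (q p : ℕ) (hp : p < n) (hq : q < n) :
    hf n (ξ / (ξ - 1)) q p = ∑ k ∈ Finset.range n, mL n ξ q k * ((p.choose k : ℂ) * ξ ^ (p - k)) := by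
  rw [hf_poly n _ q p hp]
  set c : ℂ := (1 - ξ)⁻¹ with hc
  have hξ' : ξ - 1 ≠ 0 := by rw [← neg_sub]; exact neg_ne_zero.mpr hξ
  have e1 : (1 + (X - C (ξ / (ξ - 1))) : ℂ[X]) = X + C c := by
    have : c = 1 - ξ / (ξ - 1) := by rw [hc]; field_simp; ring
    rw [this]; simp; ring
  have e2 : (X - C (ξ / (ξ - 1)) : ℂ[X]) = C (1 - ξ) * X + C ξ * (X + C c) := by
    have : ξ / (ξ - 1) = - (ξ * c) := by rw [hc]; field_simp; ring
    rw [this]; simp; ring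
  rw [e1, e2, add_pow, Finset.sum_mul, finsetSum_coeff]
  rw [← Finset.sum_subset (Finset.range_subset_range.mpr (show p + 1 ≤ n by omega))]
  swap
  · intro k _ hk
    rw [Nat.choose_eq_zero_of_lt (n := p) (k := k) (by simpa using hk)]; simp
  apply Finset.sum_congr rfl
  intro k hk
  have hk : k ≤ p := by simpa [Nat.lt_succ_iff] using hk
  have : ((C (1 - ξ) * X) ^ k * (C ξ * (X + C c)) ^ (p - k) * (p.choose k : ℂ[X]) * (X + C c) ^ (n - 1 - p) : ℂ[X]) =
      C ((1 - ξ) ^ k * ξ ^ (p - k) * (p.choose k : ℂ)) * (X ^ k * (X + C c) ^ (n - 1 - k)) := by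
    rw [show n - 1 - k = (p - k) + (n - 1 - p) by omega, pow_add (X + C c), mul_pow, mul_pow]
    simp only [C_mul, C_pow, map_natCast]
    ring
  rw [this, coeff_C_mul, coeff_X_pow_mul']
  unfold mL
  split_ifs with h
  · rw [coeff_X_add_C_pow, show n - 1 - k - (q - k) = n - 1 - q by omega]; ring
  · simp

lemma choose_xi (ξ : ℂ) (hξ : ξ ≠ 0) (p k : ℕ) :
    (p.choose k : ℂ) * ξ ^ (p - k) = (ξ ^ k)⁻¹ / (k.factorial : ℂ) * (ξ ^ p * (p.descFactorial k : ℂ)) := by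
  have n1 : (k.factorial : ℂ) ≠ 0 := by exact_mod_cast k.factorial_ne_zero
  by_cases h : k ≤ p
  · rw [Nat.descFactorial_eq_factorial_mul_choose]
    obtain ⟨d, rfl⟩ := Nat.exists_eq_add_of_le h
    rw [Nat.add_sub_cancel_left, pow_add]
    push_cast
    field_simp
  · rw [Nat.choose_eq_zero_of_lt (by omega), Nat.descFactorial_eq_zero_iff_lt.mpr (by omega)]; simp

lemma det_h {N n : ℕ} (hNn : N ≤ n) (ξ : ℂ) (hξ : 1 - ξ ≠ 0) (hξ0 : ξ ≠ 0) (f : Fin N → ℕ) (hf' : ∀ i, f i < n) :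
    (Matrix.of fun j i : Fin N => hf n (ξ / (ξ - 1)) j (f i)).det =
      (∏ k : Fin N, ((1 - ξ) ^ (k:ℕ) * (1 - ξ)⁻¹ ^ (n - 1 - k))) *
      ((∏ k : Fin N, ((ξ ^ (k:ℕ))⁻¹ / ((k:ℕ).factorial : ℂ))) * ((∏ i, ξ ^ (f i)) * Vd f)) := by
  have e : (Matrix.of fun j i : Fin N => hf n (ξ / (ξ - 1)) j (f i)) =
      (Matrix.of fun j k : Fin N => mL n ξ j k) * (Matrix.of fun k i : Fin N => ((f i).choose k : ℂ) * ξ ^ (f i - k)) := by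
    ext j i
    rw [Matrix.mul_apply]
    simp only [Matrix.of_apply]
    rw [hf_L n ξ hξ j (f i) (hf' i) (by omega)]
    rw [Fin.sum_univ_eq_sum_range (fun k => mL n ξ j k * (((f i).choose k : ℂ) * ξ ^ (f i - k))) N]
    symm
    apply Finset.sum_subset (Finset.range_subset_range.mpr hNn)
    intro k _ hk
    rw [Finset.mem_range, not_lt] at hk
    unfold mL
    rw [if_neg (by omega), zero_mul]
  have e2 : (Matrix.of fun j k : Fin N => mL n ξ j k).det = ∏ k : Fin N, ((1 - ξ) ^ (k:ℕ) * (1 - ξ)⁻¹ ^ (n - 1 - k)) := by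
    rw [Matrix.det_of_lowerTriangular]
    · simp [mL]
    · intro i j hij
      simp only [Matrix.of_apply, mL]
      rw [if_neg]
      have : i < j := hij
      omega
  have e3 : (Matrix.of fun k i : Fin N => ((f i).choose k : ℂ) * ξ ^ (f i - k)) = Matrix.of fun k i : Fin N => ((ξ ^ (k:ℕ))⁻¹ / ((k:ℕ).factorial : ℂ)) *
      (Matrix.of fun k i : Fin N => ξ ^ (f i) *
        ((Matrix.of fun i k : Fin N => ((f i).descFactorial k : ℂ)).transpose) k i) k i := by
    ext k i
    simp only [Matrix.of_apply, Matrix.transpose_apply]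
    exact choose_xi ξ hξ0 (f i) k
  rw [e, Matrix.det_mul, e2, e3, Matrix.det_mul_column, Matrix.det_mul_row, Matrix.det_transpose, det_descFac]

lemma hook_row (Y : YoungDiagram) (N i : ℕ) (hN : Y.rowLen N = 0) (hi : i < N) :
    (∏ j ∈ Finset.range (Y.rowLen i), hookLen Y (i, j)) *
      (∏ k ∈ Finset.Ioo i N, ((Y.rowLen i + (N - 1 - i)) - (Y.rowLen k + (N - 1 - k)))) =
      (Y.rowLen i + (N - 1 - i)).factorial := by
  set P := Y.rowLen i + (N - 1 - i) with hP
  have hcol : ∀ j, Y.colLen j ≤ N := by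
    intro j
    by_contra h
    push Not at h
    have := YoungDiagram.mem_iff_lt_rowLen.mp (YoungDiagram.mem_iff_lt_colLen.mpr h)
    omega
  have hiff : ∀ k j, k < Y.colLen j ↔ j < Y.rowLen k := by
    intro k j
    rw [← YoungDiagram.mem_iff_lt_colLen, YoungDiagram.mem_iff_lt_rowLen]
  set q : ℕ → ℕ := fun j => j + (N - Y.colLen j) with hq
  set p : ℕ → ℕ := fun k => Y.rowLen k + (N - 1 - k) with hp
  have e1 : ∏ j ∈ Finset.range (Y.rowLen i), hookLen Y (i, j) = ∏ v ∈ (Finset.range (Y.rowLen i)).image q, (P - v) := by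
    rw [Finset.prod_image]
    · apply Finset.prod_congr rfl
      intro j hj
      rw [Finset.mem_range] at hj
      have h1 := (hiff i j).mpr hj
      have h2 := hcol j
      simp only [hookLen, hq, hP]
      omega
    · intro a _ b _ hab
      simp only [hq] at hab
      have h1 := hcol a
      have h2 := hcol b
      rcases lt_trichotomy a b with h | h | h
      · have := Y.colLen_anti a b h.le
        omega
      · exact h
      · have := Y.colLen_anti b a h.le
        omega
  have e2 : ∏ k ∈ Finset.Ioo i N, (P - (Y.rowLen k + (N - 1 - k))) = ∏ v ∈ (Finset.Ioo i N).image p, (P - v) := by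
    rw [Finset.prod_image]
    intro a ha b hb hab
    rw [Finset.mem_coe, Finset.mem_Ioo] at ha hb
    simp only [hp] at hab
    rcases lt_trichotomy a b with h | h | h
    · have := Y.rowLen_anti a b h.le
      omega
    · exact h
    · have := Y.rowLen_anti b a h.le
      omega
  have dis : Disjoint ((Finset.range (Y.rowLen i)).image q) ((Finset.Ioo i N).image p) := by
    rw [Finset.disjoint_left]
    intro v hv hv'
    rw [Finset.mem_image] at hv hv'
    obtain ⟨j, hj, rfl⟩ := hv
    obtain ⟨k, hk, hkj⟩ := hv'
    rw [Finset.mem_Ioo] at hk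
    simp only [hp, hq] at hkj
    have h1 := hcol j
    have h2 := hiff k j
    by_cases h : j < Y.rowLen k
    · have := h2.mpr h; omega
    · have : ¬ k < Y.colLen j := fun h' => h (h2.mp h')
      omega
  have un : ((Finset.range (Y.rowLen i)).image q) ∪ ((Finset.Ioo i N).image p) = Finset.range P := by
    apply Finset.eq_of_subset_of_card_le
    · intro v hv
      rw [Finset.mem_union, Finset.mem_image, Finset.mem_image] at hv
      rw [Finset.mem_range]
      rcases hv with ⟨j, hj, rfl⟩ | ⟨k, hk, rfl⟩
      · rw [Finset.mem_range] at hj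
        have h1 := (hiff i j).mpr hj
        have h2 := hcol j
        simp only [hq, hP]; omega
      · rw [Finset.mem_Ioo] at hk
        have := Y.rowLen_anti i k hk.1.le
        simp only [hp, hP]; omega
    · rw [Finset.card_union_of_disjoint dis, Finset.card_image_of_injOn, Finset.card_image_of_injOn]
      · simp [hP]; omega
      · intro a ha b hb hab
        rw [Finset.mem_coe, Finset.mem_Ioo] at ha hb
        simp only [hp] at hab
        rcases lt_trichotomy a b with h | h | h
        · have := Y.rowLen_anti a b h.le
          omega
        · exact h
        · have := Y.rowLen_anti b a h.le
          omega
      · intro a _ b _ hab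
        simp only [hq] at hab
        have h1 := hcol a
        have h2 := hcol b
        rcases lt_trichotomy a b with h | h | h
        · have := Y.colLen_anti a b h.le
          omega
        · exact h
        · have := Y.colLen_anti b a h.le
          omega
  rw [e1, e2, ← Finset.prod_union dis, un, ← Finset.prod_range_reflect, ← Finset.prod_range_add_one_eq_factorial]
  apply Finset.prod_congr rfl
  intro v hv
  rw [Finset.mem_range] at hv
  omega

lemma prodA (K L : ℕ) : (∏ j ∈ Finset.range L, ((K:ℂ) + 1 + j)) * (K.factorial : ℂ) = ((L + K).factorial : ℂ) := by
  induction L with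
  | zero => simp
  | succ L ih =>
    rw [Finset.prod_range_succ, mul_right_comm, ih, show L + 1 + K = (L + K) + 1 by ring, Nat.factorial_succ]
    push_cast; ring

lemma prodB (K L : ℕ) (h : L ≤ K) : (∏ j ∈ Finset.range L, (-(K:ℂ) + j)) * ((K - L).factorial : ℂ) = (-1) ^ L * (K.factorial : ℂ) := by
  induction L with
  | zero => simp
  | succ L ih =>
    rw [pow_succ, mul_right_comm, ← ih (by omega), Finset.prod_range_succ,
      show K - L = (K - (L + 1)) + 1 by omega, Nat.factorial_succ]
    have : ((K - (L + 1) : ℕ) : ℂ) = K - (L + 1) := by rw [Nat.cast_sub h]; push_cast; ring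
    push_cast
    rw [this]; ring

/-- position of row i -/
def ps (N : ℕ) (Y : YoungDiagram) (i : ℕ) : ℕ := Y.rowLen i + (N - 1 - i)

lemma ps_lt {N : ℕ} (Y : YoungDiagram) {i k : ℕ} (h : i < k) (hk : k < N) : ps N Y k < ps N Y i := by
  have := Y.rowLen_anti i k h.le
  unfold ps; omega

/-- row difference product -/
def dr (N : ℕ) (Y : YoungDiagram) (i : ℕ) : ℂ := ∏ k ∈ Finset.Ioo i N, ((ps N Y i : ℂ) - (ps N Y k : ℂ))

lemma row_weight (Y : YoungDiagram) (N M i : ℕ) (hN : Y.rowLen N = 0) (hM : Y.rowLen 0 ≤ M) (hi : i < N) :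
    ∏ j ∈ Finset.range (Y.rowLen i), (((N:ℂ) + cellContent (i, j)) * (-(M:ℂ) + cellContent (i, j)) / (hookLen Y (i, j) : ℂ) ^ 2) =
      (-1) ^ (Y.rowLen i) * dr N Y i ^ 2 * ((N + M - 1).choose (ps N Y i) : ℂ) /
        (((N - 1 - i).factorial : ℂ) * ((N + M - 1).descFactorial (N - 1 - i) : ℂ)) := by
  have hL : Y.rowLen i ≤ M := (Y.rowLen_anti 0 i (Nat.zero_le _)).trans hM
  rw [Finset.prod_div_distrib, Finset.prod_mul_distrib, Finset.prod_pow]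
  have hA := prodA (N - 1 - i) (Y.rowLen i)
  have hB := prodB (M + i) (Y.rowLen i) (by omega)
  have hH : (∏ j ∈ Finset.range (Y.rowLen i), (hookLen Y (i, j) : ℂ)) * dr N Y i = ((ps N Y i).factorial : ℂ) := by
    have := hook_row Y N i hN hi
    unfold dr
    rw [show (ps N Y i).factorial = (Y.rowLen i + (N - 1 - i)).factorial from rfl, ← this]
    push_cast
    congr 1
    apply Finset.prod_congr rfl
    intro k hk
    rw [Finset.mem_Ioo] at hk
    have := ps_lt Y hk.1 hk.2
    rw [← Nat.cast_sub this.le]; rfl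
  have eA : ∏ j ∈ Finset.range (Y.rowLen i), ((N:ℂ) + cellContent (i, j)) = ∏ j ∈ Finset.range (Y.rowLen i), (((N - 1 - i : ℕ):ℂ) + 1 + j) := by
    apply Finset.prod_congr rfl
    intro j _
    rw [Nat.sub_sub, Nat.cast_sub (by omega)]
    simp [cellContent]; ring
  have eB : ∏ j ∈ Finset.range (Y.rowLen i), (-(M:ℂ) + cellContent (i, j)) = ∏ j ∈ Finset.range (Y.rowLen i), (-((M + i : ℕ):ℂ) + j) := by
    apply Finset.prod_congr rfl
    intro j _
    simp [cellContent]; ring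
  rw [eA, eB]
  have hps : Y.rowLen i + (N - 1 - i) = ps N Y i := rfl
  rw [hps] at hA
  have hle : ps N Y i ≤ N + M - 1 := by unfold ps; omega
  have hC : ((N + M - 1).choose (ps N Y i) : ℂ) * ((ps N Y i).factorial : ℂ) * ((M + i - Y.rowLen i).factorial : ℂ) = ((N + M - 1).factorial : ℂ) := by
    have := Nat.choose_mul_factorial_mul_factorial hle
    rw [show N + M - 1 - ps N Y i = M + i - Y.rowLen i by unfold ps; omega] at this
    exact_mod_cast this
  have hD : ((M + i).factorial : ℂ) * ((N + M - 1).descFactorial (N - 1 - i) : ℂ) = ((N + M - 1).factorial : ℂ) := by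
    have := Nat.factorial_mul_descFactorial (show N - 1 - i ≤ N + M - 1 by omega)
    rw [show N + M - 1 - (N - 1 - i) = M + i by omega] at this
    exact_mod_cast this
  have fne : ∀ m : ℕ, (m.factorial : ℂ) ≠ 0 := fun m => by exact_mod_cast m.factorial_ne_zero
  have n1 := fne (N - 1 - i)
  have n2 := fne (M + i - Y.rowLen i)
  have n3 := fne (ps N Y i)
  have n4 := descFac_ne (N + M - 1) (N - 1 - i) (by omega)
  have n5 := fne (M + i)
  generalize ∏ j ∈ Finset.range (Y.rowLen i), (((N - 1 - i : ℕ):ℂ) + 1 + j) = A at *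
  generalize ∏ j ∈ Finset.range (Y.rowLen i), (-((M + i : ℕ):ℂ) + j) = B at *
  generalize ∏ j ∈ Finset.range (Y.rowLen i), (hookLen Y (i, j) : ℂ) = H at *
  generalize dr N Y i = D at *
  generalize ((ps N Y i).factorial : ℂ) = p at *
  generalize ((N - 1 - i).factorial : ℂ) = k at *
  generalize ((M + i - Y.rowLen i).factorial : ℂ) = m at *
  generalize ((M + i).factorial : ℂ) = mi at *
  generalize ((N + M - 1).descFactorial (N - 1 - i) : ℂ) = d at *
  generalize ((N + M - 1).choose (ps N Y i) : ℂ) = c at *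
  generalize ((-1:ℂ)) ^ (Y.rowLen i) = s at *
  have nH : H ≠ 0 := by rintro rfl; apply n3; rw [← hH]; simp
  have nD : D ≠ 0 := by rintro rfl; apply n3; rw [← hH]; simp
  rw [← hD] at hC
  rw [div_eq_div_iff (pow_ne_zero _ nH) (mul_ne_zero n1 n4)]
  have e : A * k * (B * m) * d = s * (H * D) ^ 2 * c * m := by
    rw [hA, hB, hH]; linear_combination -(p * s) * hC
  apply mul_right_cancel₀ n2
  linear_combination e

lemma Vd_sq (N : ℕ) (Y : YoungDiagram) :
    Vd (fun i : Fin N => ps N Y i) ^ 2 = ∏ i ∈ Finset.range N, dr N Y i ^ 2 := by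
  unfold Vd
  rw [Matrix.det_vandermonde, ← Fin.prod_univ_eq_prod_range (fun i => dr N Y i ^ 2), ← Finset.prod_pow]
  apply Finset.prod_congr rfl
  intro i _
  unfold dr
  rw [← Fin.map_valEmbedding_Ioi, Finset.prod_map, ← Finset.prod_pow, ← Finset.prod_pow]
  apply Finset.prod_congr rfl
  intro k _
  simp only [Fin.valEmbedding_apply]
  ring

lemma cells_prod (N : ℕ) (Y : YoungDiagram) (hN : Y.rowLen N = 0) {R : Type*} [CommMonoid R] (F : ℕ × ℕ → R) :
    ∏ c ∈ Y.cells, F c = ∏ i ∈ Finset.range N, ∏ j ∈ Finset.range (Y.rowLen i), F (i, j) := by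
  apply Finset.prod_finset_product
  rintro ⟨i, j⟩
  rw [YoungDiagram.mem_cells, YoungDiagram.mem_iff_lt_rowLen, Finset.mem_range, Finset.mem_range]
  simp only
  constructor
  · intro h
    refine ⟨?_, h⟩
    by_contra h'
    have := Y.rowLen_anti N i (by omega)
    omega
  · exact fun h => h.2

lemma card_rows (N : ℕ) (Y : YoungDiagram) (hN : Y.rowLen N = 0) (t : ℂ) :
    t ^ Y.card = ∏ i ∈ Finset.range N, t ^ (Y.rowLen i) := by
  have := cells_prod N Y hN (fun _ => t)
  simpa using this

lemma u_prod (N M : ℕ) (u : ℂ) (hu : u ≠ 0) :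
    (u ^ (N * M)) * ∏ k ∈ Finset.range N, (u ^ k * u⁻¹ ^ (N + M - 1 - k)) = 1 := by
  rw [Finset.prod_mul_distrib, ← Finset.prod_range_reflect (fun k => u ^ k), ← Finset.prod_mul_distrib]
  have : ∏ k ∈ Finset.range N, (u ^ (N - 1 - k) * u⁻¹ ^ (N + M - 1 - k)) = ∏ k ∈ Finset.range N, u⁻¹ ^ M := by
    apply Finset.prod_congr rfl
    intro k hk
    rw [Finset.mem_range] at hk
    rw [show N + M - 1 - k = (N - 1 - k) + M by omega, pow_add, ← mul_assoc, ← mul_pow, mul_inv_cancel₀ hu, one_pow, one_mul]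
  rw [this, Finset.prod_const, Finset.card_range, ← pow_mul, mul_comm M N, ← mul_pow, mul_inv_cancel₀ hu, one_pow]

lemma box_weight (N M : ℕ) (Y : YoungDiagram) (hN : Y.rowLen N = 0) (hM : Y.rowLen 0 ≤ M) (ξ : ℂ) (hξ : 1 - ξ ≠ 0) (hξ0 : ξ ≠ 0) :
    zWeight N (-(M:ℂ)) Y * ξ ^ Y.card = (1 - ξ) ^ (N * M) *
      ((Matrix.of fun j i : Fin N => hf (N + M) (ξ / (ξ - 1)) j (ps N Y i)).det *
       (Matrix.of fun i j : Fin N => gf (N + M) (ξ / (ξ - 1)) (ps N Y i) j).det) := by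
  have hlt : ∀ i : Fin N, ps N Y i < N + M := by
    intro i
    have := Y.rowLen_anti 0 i (Nat.zero_le _)
    unfold ps; omega
  rw [det_h (by omega) ξ hξ hξ0 (fun i => ps N Y i) hlt, det_g (by omega) _ (fun i => ps N Y i) hlt]
  have hu := u_prod N M (1 - ξ) hξ
  rw [← Fin.prod_univ_eq_prod_range (fun k => (1 - ξ) ^ k * (1 - ξ)⁻¹ ^ (N + M - 1 - k))] at hu
  have hV := Vd_sq N Y
  set V := Vd (fun i : Fin N => ps N Y i)
  have key : zWeight N (-(M:ℂ)) Y * ξ ^ Y.card =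
     (∏ k : Fin N, ((ξ ^ (k:ℕ))⁻¹ / ((k:ℕ).factorial : ℂ))) * (∏ i : Fin N, ξ ^ (ps N Y i)) *
      ((∏ i : Fin N, ((-1) ^ (ps N Y i) * ((N + M - 1).choose (ps N Y i) : ℂ))) *
        (∏ k : Fin N, ((-1) ^ (k:ℕ) / ((N + M - 1).descFactorial k : ℂ)))) * V ^ 2 := by
    rw [hV]
    unfold zWeight
    rw [cells_prod N Y hN, card_rows N Y hN,
      Fin.prod_univ_eq_prod_range (fun k => (ξ ^ k)⁻¹ / (k.factorial : ℂ)) N,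
      Fin.prod_univ_eq_prod_range (fun k => ξ ^ (ps N Y k)) N,
      Fin.prod_univ_eq_prod_range (fun i => ((-1) ^ (ps N Y i) * ((N + M - 1).choose (ps N Y i) : ℂ))) N,
      Fin.prod_univ_eq_prod_range (fun k => ((-1) ^ k / ((N + M - 1).descFactorial k : ℂ))) N,
      ← Finset.prod_range_reflect (fun k => (ξ ^ k)⁻¹ / (k.factorial : ℂ)),
      ← Finset.prod_range_reflect (fun k => ((-1) ^ k / ((N + M - 1).descFactorial k : ℂ)))]
    simp only [← Finset.prod_mul_distrib]
    apply Finset.prod_congr rfl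
    intro i hi
    rw [Finset.mem_range] at hi
    rw [row_weight Y N M i hN hM hi]
    have n4 := descFac_ne (N + M - 1) (N - 1 - i) (by omega)
    have n1 : ((N - 1 - i).factorial : ℂ) ≠ 0 := by exact_mod_cast (N - 1 - i).factorial_ne_zero
    have n0 : ξ ^ (N - 1 - i) ≠ 0 := pow_ne_zero _ hξ0
    have hs : (-1 : ℂ) ^ (ps N Y i) * (-1) ^ (N - 1 - i) = (-1) ^ (Y.rowLen i) := by
      unfold ps
      rw [pow_add, mul_assoc, ← mul_pow]; simp
    have hx : ξ ^ (ps N Y i) = ξ ^ (Y.rowLen i) * ξ ^ (N - 1 - i) := by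
      unfold ps; rw [pow_add]
    rw [hx, ← hs]
    field_simp
  rw [key]
  generalize (∏ k : Fin N, ((1 - ξ) ^ (k:ℕ) * (1 - ξ)⁻¹ ^ (N + M - 1 - k))) = U at *
  generalize (∏ k : Fin N, ((ξ ^ (k:ℕ))⁻¹ / ((k:ℕ).factorial : ℂ))) = A
  generalize (∏ i : Fin N, ξ ^ (ps N Y i)) = B
  generalize (∏ i : Fin N, ((-1) ^ (ps N Y i) * ((N + M - 1).choose (ps N Y i) : ℂ))) = C
  generalize (∏ k : Fin N, ((-1) ^ (k:ℕ) / ((N + M - 1).descFactorial k : ℂ))) = D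
  linear_combination -(A * B * C * D * V ^ 2) * hu

lemma zWeight_zero (N M : ℕ) (Y : YoungDiagram) (h : ¬ (Y.rowLen N = 0 ∧ Y.rowLen 0 ≤ M)) :
    zWeight N (-(M:ℂ)) Y = 0 := by
  unfold zWeight
  by_cases h1 : Y.rowLen N = 0
  · have h2 : M < Y.rowLen 0 := by by_contra h'; exact h ⟨h1, by omega⟩
    apply Finset.prod_eq_zero (i := (0, M))
    · rw [YoungDiagram.mem_cells, YoungDiagram.mem_iff_lt_rowLen]; exact h2
    · simp [cellContent]
  · apply Finset.prod_eq_zero (i := (N, 0))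
    · rw [YoungDiagram.mem_cells, YoungDiagram.mem_iff_lt_rowLen]; omega
    · simp [cellContent]

lemma strictAnti_ge {N n : ℕ} (f : Fin N → Fin n) (hf : StrictAnti f) :
    ∀ d i (hi : i < N), i + d = N - 1 → d ≤ (f ⟨i, hi⟩ : ℕ) := by
  intro d
  induction d with
  | zero => intros; omega
  | succ d ih =>
    intro i hi h
    have h1 := ih (i + 1) (by omega) (by omega)
    have : f ⟨i + 1, by omega⟩ < f ⟨i, hi⟩ := hf (by rw [Fin.lt_def]; simp)
    rw [Fin.lt_def] at this
    omega

lemma exists_diag (N M : ℕ) (f : Fin N → Fin (N + M)) (hf : StrictAnti f) :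
    ∃ Y : YoungDiagram, (Y.rowLen N = 0 ∧ Y.rowLen 0 ≤ M) ∧ ∀ i : Fin N, (f i : ℕ) = ps N Y i := by
  set l : ℕ → ℕ := fun i => if h : i < N then (f ⟨i, h⟩ : ℕ) - (N - 1 - i) else 0 with hl
  have anti : Antitone l := by
    apply antitone_nat_of_succ_le
    intro i
    simp only [hl]
    by_cases h : i + 1 < N
    · rw [dif_pos h, dif_pos (by omega)]
      have : f ⟨i + 1, by omega⟩ < f ⟨i, by omega⟩ := hf (by rw [Fin.lt_def]; simp)
      rw [Fin.lt_def] at this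
      omega
    · rw [dif_neg h]; omega
  have l0 : l 0 ≤ M := by
    simp only [hl]
    split_ifs with h
    · have := (f ⟨0, h⟩).2; omega
    · omega
  have lN : ∀ i, N ≤ i → l i = 0 := by
    intro i hi
    simp only [hl]; rw [dif_neg (by omega)]
  let Y : YoungDiagram :=
    { cells := (Finset.range N ×ˢ Finset.range M).filter (fun c => c.2 < l c.1)
      isLowerSet := by
        rintro ⟨a1, a2⟩ ⟨b1, b2⟩ hba ha
        rw [Prod.mk_le_mk] at hba
        simp only [Finset.mem_coe, Finset.mem_filter, Finset.mem_product, Finset.mem_range] at ha ⊢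
        have := anti hba.1
        omega }
  have hY : ∀ i, Y.rowLen i = l i := by
    intro i
    have : ∀ j, j < Y.rowLen i ↔ j < l i := by
      intro j
      rw [← YoungDiagram.mem_iff_lt_rowLen, ← YoungDiagram.mem_cells]
      simp only [Y, Finset.mem_filter, Finset.mem_product, Finset.mem_range]
      constructor
      · exact fun h => h.2
      · intro h
        refine ⟨⟨?_, ?_⟩, h⟩
        · by_contra h'
          have := lN i (by omega)
          omega
        · have := anti (Nat.zero_le i)
          omega
    have h1 := this (Y.rowLen i)
    have h2 := this (l i)
    omega
  refine ⟨Y, ⟨by rw [hY, lN N le_rfl], by rw [hY]; exact l0⟩, ?_⟩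
  intro i
  have h := strictAnti_ge f hf (N - 1 - i) i i.2 (by omega)
  unfold ps
  rw [hY]
  simp only [hl]
  rw [dif_pos i.2]
  simp only [Fin.eta] at h ⊢
  omega

/-- the diagram of a strictly decreasing sequence -/
def toY (N M : ℕ) (f : Fin N → Fin (N + M)) : YoungDiagram :=
  if h : StrictAnti f then (exists_diag N M f h).choose else ⊥

lemma toY_spec {N M : ℕ} {f : Fin N → Fin (N + M)} (hf : StrictAnti f) :
    ((toY N M f).rowLen N = 0 ∧ (toY N M f).rowLen 0 ≤ M) ∧ ∀ i : Fin N, (f i : ℕ) = ps N (toY N M f) i := by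
  unfold toY
  rw [dif_pos hf]
  exact (exists_diag N M f hf).choose_spec

lemma box_ext (N : ℕ) (Y Y' : YoungDiagram) (h : Y.rowLen N = 0) (h' : Y'.rowLen N = 0)
    (he : ∀ i : Fin N, ps N Y i = ps N Y' i) : Y = Y' := by
  have hr : ∀ i, Y.rowLen i = Y'.rowLen i := by
    intro i
    by_cases hi : i < N
    · have := he ⟨i, hi⟩
      simp only [ps] at this
      omega
    · have h1 := Y.rowLen_anti N i (by omega)
      have h2 := Y'.rowLen_anti N i (by omega)
      omega
  ext ⟨i, j⟩
  rw [YoungDiagram.mem_cells, YoungDiagram.mem_cells, YoungDiagram.mem_iff_lt_rowLen, YoungDiagram.mem_iff_lt_rowLen, hr]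

lemma Gs_box (N M : ℕ) {s : ℕ} (x : Fin s → ℤ) (r : ℕ) :
    Gs N (-(M:ℂ)) x r = ∑ f : Fin N → Fin (N + M) with StrictAnti f,
      if r = (toY N M f).card then (if inS x (toY N M f) then zWeight N (-(M:ℂ)) (toY N M f) else 0) else 0 := by
  unfold Gs
  symm
  rw [← Finset.sum_filter, Finset.filter_filter]
  rw [← Finset.sum_image (f := fun Y => if inS x Y then zWeight N (-(M:ℂ)) Y else 0) (g := toY N M)]
  · apply Finset.sum_subset
    · intro Y hY
      rw [Finset.mem_image] at hY
      obtain ⟨f, hf, rfl⟩ := hY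
      rw [Finset.mem_filter] at hf
      rw [mem_YD]; exact hf.2.2.symm
    · intro Y hY hn
      rw [mem_YD] at hY
      rw [zWeight_zero, ite_self]
      rintro ⟨h1, h2⟩
      apply hn
      rw [Finset.mem_image]
      set f : Fin N → Fin (N + M) := fun i => ⟨ps N Y i, by
        have := Y.rowLen_anti 0 i (Nat.zero_le _)
        unfold ps; omega⟩ with hf
      have hs : StrictAnti f := by
        intro i k hik
        rw [Fin.lt_def]
        exact ps_lt Y hik k.2
      have sp := toY_spec hs
      have : toY N M f = Y := box_ext N _ _ sp.1.1 h1 (fun i => (sp.2 i).symm)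
      refine ⟨f, ?_, this⟩
      rw [Finset.mem_filter]
      refine ⟨Finset.mem_univ _, hs, ?_⟩
      rw [this, hY]
  · intro f hf f' hf' h
    simp only [Finset.coe_filter, Set.mem_setOf_eq, Finset.mem_univ, true_and] at hf hf'
    funext i
    apply Fin.ext
    rw [(toY_spec hf.1).2 i, (toY_spec hf'.1).2 i, h]

lemma inS_iff (N M : ℕ) {s : ℕ} (x : Fin s → ℤ) (x' : Fin s → Fin (N + M)) (hx : ∀ p, x p = ((x' p : ℕ) : ℤ) - N)
    (f : Fin N → Fin (N + M)) (hf : StrictAnti f) :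
    inS x (toY N M f) ↔ ∀ p, ∃ i, x' p = f i := by
  have sp := toY_spec hf
  unfold inS
  apply forall_congr'
  intro p
  have h0 := hx p
  constructor
  · rintro ⟨k, hk⟩
    have hkN : k < N := by
      by_contra h
      have := (toY N M f).rowLen_anti N k (by omega)
      omega
    refine ⟨⟨k, hkN⟩, ?_⟩
    apply Fin.ext
    rw [sp.2]
    simp only [ps]
    omega
  · rintro ⟨i, hi⟩
    refine ⟨i, ?_⟩
    have := sp.2 i
    simp only [ps] at this
    rw [← hi] at this
    have := i.2
    omega

lemma main_NM (N M : ℕ) {s : ℕ} (x : Fin s → ℤ) (hx : Function.Injective x)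
    (hlo : ∀ p, -(N:ℤ) ≤ x p) (hhi : ∀ p, x p < M) (r : ℕ) :
    PowerSeries.coeff r (Dser N (-(M:ℂ)) x) = Gs N (-(M:ℂ)) x r := by
  set x' : Fin s → Fin (N + M) := fun p => ⟨(x p + N).toNat, by have := hlo p; have := hhi p; omega⟩ with hx'
  have hxx : ∀ p, x p = ((x' p : ℕ) : ℤ) - N := by
    intro p; have := hlo p; simp only [hx']; omega
  have hinj : Function.Injective x' := by
    intro a b hab
    apply hx
    rw [hxx a, hxx b, hab]
  have ev : ∀ ξ : ℝ, 0 < ξ → ξ < 1/2 → HasSum (fun n => Gs N (-(M:ℂ)) x n * (ξ:ℂ) ^ n)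
      ((1 - (ξ:ℂ)) ^ (N * M) * (Matrix.of fun p q => kerK ((ξ:ℂ) / (ξ - 1)) 1 N (-(M:ℂ)) (x p) (x q)).det) := by
    intro ξ h0 h1
    have hξ0 : (ξ:ℂ) ≠ 0 := by exact_mod_cast h0.ne'
    have hξ1 : 1 - (ξ:ℂ) ≠ 0 := by
      have : (1 - ξ : ℝ) ≠ 0 := by linarith
      exact_mod_cast this
    set w : ℂ := (ξ:ℂ) / (ξ - 1) with hw
    set g : Matrix (Fin (N + M)) (Fin N) ℂ := Matrix.of fun i j => gf (N + M) w i j with hg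
    set h : Matrix (Fin N) (Fin (N + M)) ℂ := Matrix.of fun j i => hf (N + M) w j i with hh
    have hhg : h * g = 1 := by
      ext a b
      rw [Matrix.mul_apply]
      simp only [hg, hh, Matrix.of_apply]
      rw [Fin.sum_univ_eq_sum_range (fun p => hf (N + M) w a p * gf (N + M) w p b) (N + M), hf_gf_inv _ _ _ _ (by omega) (by omega), Matrix.one_apply]
      simp only [Fin.ext_iff]
    have dpp := finite_dpp g h hhg x' hinj
    have eK : (Matrix.of fun p q => kerK w 1 N (-(M:ℂ)) (x p) (x q)) = (g * h).submatrix x' x' := by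
      ext p q
      simp only [Matrix.of_apply, Matrix.submatrix_apply, Matrix.mul_apply]
      rw [hxx p, hxx q, kerK_fin w N M _ _ (x' p).2 (x' q).2]
      simp only [hg, hh, Matrix.of_apply]
      rw [Fin.sum_univ_eq_sum_range (fun k => gf (N + M) w (x' p) k * hf (N + M) w k (x' q)) N]
    rw [eK, ← dpp, Finset.mul_sum]
    simp only [Gs_box, Finset.sum_mul]
    apply hasSum_sum
    intro f hf'
    rw [Finset.mem_filter] at hf'
    have hsa := hf'.2
    have sp := toY_spec hsa
    have e : ((1 - (ξ:ℂ)) ^ (N * M) * if ∀ p, ∃ i, x' p = f i then (h.submatrix id f).det * (g.submatrix f id).det else 0) =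
        (if inS x (toY N M f) then zWeight N (-(M:ℂ)) (toY N M f) else 0) * (ξ:ℂ) ^ (toY N M f).card := by
      rw [inS_iff N M x x' hxx f hsa]
      split_ifs with hc
      · rw [box_weight N M _ sp.1.1 sp.1.2 ξ hξ1 hξ0]
        congr 3
        · ext j i
          simp only [hh, Matrix.submatrix_apply, Matrix.of_apply, id, sp.2, hw]
        · ext i j
          simp only [hg, Matrix.submatrix_apply, Matrix.of_apply, id, sp.2, hw]
      · simp
    rw [e]
    have := hasSum_ite_eq (toY N M f).card ((if inS x (toY N M f) then zWeight N (-(M:ℂ)) (toY N M f) else 0) * (ξ:ℂ) ^ (toY N M f).card)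
    convert this using 1
    funext n
    split_ifs <;> simp_all
  have dev := fun (ξ : ℝ) (h0 : 0 < ξ) (h1 : ξ < 1/2) => Dser_ev ((ξ:ℂ) / (ξ - 1)) 1 N (-(M:ℂ)) one_ne_zero ξ h0 h1 (mul_one _) x
  have := coeff_unique (fun n => PowerSeries.coeff n (Dser N (-(M:ℂ)) x)) (fun n => Gs N (-(M:ℂ)) x n)
    (fun ξ h0 h1 => (dev ξ h0 h1).1) (fun ξ h0 h1 => (ev ξ h0 h1).summable.norm) (by
      intro ξ h0 h1
      rw [(dev ξ h0 h1).2, (ev ξ h0 h1).tsum_eq]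
      congr 1
      rw [← Complex.cpow_natCast]
      congr 1
      push_cast; ring)
  exact congrFun this r

theorem H_all (z z' : ℂ) (s : ℕ) (x : Fin s → ℤ) (hx : Function.Injective x) (r : ℕ) :
    PowerSeries.coeff r (Dser z z' x) = Gs z z' x r := by
  apply poly_cont x (∑ p, (x p).natAbs + 1)
  intro N M hN hM r
  have hb : ∀ p, (x p).natAbs ≤ ∑ p, (x p).natAbs := fun p =>
    Finset.single_le_sum (f := fun p => (x p).natAbs) (fun _ _ => Nat.zero_le _) (Finset.mem_univ p)
  apply main_NM N M x hx
  · intro p; have := hb p; omega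
  · intro p; have := hb p; omega

theorem main_final (z : ℂ) (hz : z ≠ 0) (ξ : ℝ) (hξ : ξ ∈ Set.Ioo (0 : ℝ) (1/2)) :
    (∀ i j : ℤ,
      Summable fun t : ℕ =>
        ‖mcoef ((Real.sqrt ξ : ℂ) / ((ξ : ℂ) - 1)) (Real.sqrt ξ : ℂ) z ((starRingEnd ℂ) z)
            i (-1 - (t : ℤ)) *
          mcoefStar ((Real.sqrt ξ : ℂ) / ((ξ : ℂ) - 1)) (Real.sqrt ξ : ℂ) z ((starRingEnd ℂ) z)
            j (-1 - (t : ℤ))‖) ∧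
    (∀ s : ℕ, ∀ x : Fin s → ℤ, Function.Injective x →
      (∑' Y : YoungDiagram,
          if ∀ p : Fin s, ∃ k : ℕ, x p = (Y.rowLen k : ℤ) - k - 1 then
            mixedM z ((starRingEnd ℂ) z) ξ Y
          else 0) =
        (Matrix.of fun p q : Fin s =>
          kerK ((Real.sqrt ξ : ℂ) / ((ξ : ℂ) - 1)) (Real.sqrt ξ : ℂ) z ((starRingEnd ℂ) z)
            (x p) (x q)).det) := by
  obtain ⟨h0, h1⟩ := hξ
  have hβ : (Real.sqrt ξ : ℂ) ≠ 0 := by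
    have := (Real.sqrt_pos.mpr h0).ne'
    exact_mod_cast this
  have hab : (Real.sqrt ξ : ℂ) / ((ξ : ℂ) - 1) * (Real.sqrt ξ : ℂ) = (ξ:ℂ) / (ξ - 1) := by
    have : (Real.sqrt ξ : ℂ) * (Real.sqrt ξ : ℂ) = ξ := by
      exact_mod_cast Real.mul_self_sqrt h0.le
    rw [div_mul_eq_mul_div, this]
  constructor
  · intro i j
    exact K_summable _ _ _ _ hβ ξ h0 h1 hab i j
  · intro s x hx
    exact conclude z ξ h0 h1 (fun s x hx r => H_all _ _ s x hx r) _ _ hβ hab s x hx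

/-- Let `z ≠ 0`, `z' = conj z`, `ξ ∈ (0, 1/2)`, `α = √ξ/(ξ−1)`, `β = √ξ`,
and let `K(i,j) = Σ_{m ∈ ℤ_{<0}+1/2} ⟨i|m⟩⟨j|m⟩*` (an absolutely convergent series).
Then for every finite set `X = {x_1, …, x_s}` of distinct half-integers (encoded by distinct
integers `x p`, the half-integer being `x p + 1/2`), the correlation function
`ρ(X) = Σ_{λ : X ⊆ S(λ)} M(λ)` equals `det[K(x_p, x_q)]`.  Here
`S(λ) = {λ_i − i + 1/2 : i ≥ 1}`, i.e. in the integer encoding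
`{Y.rowLen k − k − 1 : k ∈ ℕ}`. -/
theorem correlation_eq_det (z : ℂ) (hz : z ≠ 0) (ξ : ℝ) (hξ : ξ ∈ Set.Ioo (0 : ℝ) (1/2)) :
    (∀ i j : ℤ,
      Summable fun t : ℕ =>
        ‖mcoef ((Real.sqrt ξ : ℂ) / ((ξ : ℂ) - 1)) (Real.sqrt ξ : ℂ) z ((starRingEnd ℂ) z)
            i (-1 - (t : ℤ)) *
          mcoefStar ((Real.sqrt ξ : ℂ) / ((ξ : ℂ) - 1)) (Real.sqrt ξ : ℂ) z ((starRingEnd ℂ) z)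
            j (-1 - (t : ℤ))‖) ∧
    (∀ s : ℕ, ∀ x : Fin s → ℤ, Function.Injective x →
      (∑' Y : YoungDiagram,
          if ∀ p : Fin s, ∃ k : ℕ, x p = (Y.rowLen k : ℤ) - k - 1 then
            mixedM z ((starRingEnd ℂ) z) ξ Y
          else 0) =
        (Matrix.of fun p q : Fin s =>
          kerK ((Real.sqrt ξ : ℂ) / ((ξ : ℂ) - 1)) (Real.sqrt ξ : ℂ) z ((starRingEnd ℂ) z)
            (x p) (x q)).det) := by
  exact main_final z hz ξ hξ

end
end

section
/- Let z ∈ ℂ with z ≠ 0 and set z' = conj(z) (principal series). Then for every n ∈ ℕ, the z-measure M_n is a probability measure on partitions of n: for every partition λ of n, M_n(λ) = (n!/(zz')_n) Π_{□∈λ}(z+c(□))(z'+c(□))/h(□)² is a nonnegative real number, and Σ_{|λ|=n} M_n(λ) = 1. -/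
open scoped Classical

noncomputable section

def zmS (c b : ℕ → ℂ) (k N M : ℕ) : ℂ :=
  ∑ i ∈ Finset.range M, c i ^ k * (∏ j ∈ Finset.range N, (c i - b j)) /
    ∏ j ∈ (Finset.range M).erase i, (c i - c j)

lemma zmS_zero (c b : ℕ → ℂ) (N : ℕ) (hc : Set.InjOn c (Finset.range (N+2) : Finset ℕ)) :
    zmS c b 0 N (N+2) = 0 := by
  have hd : (∏ j ∈ Finset.range N, (Polynomial.X - Polynomial.C (b j))).natDegree = N := by
    rw [Polynomial.natDegree_prod_of_monic _ _ (fun j _ => Polynomial.monic_X_sub_C _)]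
    simp
  have h := Lagrange.coeff_eq_sum (s := Finset.range (N+2)) (v := c)
    (P := ∏ j ∈ Finset.range N, (Polynomial.X - Polynomial.C (b j))) hc (by
      refine lt_of_le_of_lt Polynomial.degree_le_natDegree ?_
      rw [hd]; simp; norm_cast; omega)
  rw [Polynomial.coeff_eq_zero_of_natDegree_lt (by rw [hd]; simp)] at h
  rw [zmS, h]
  refine Finset.sum_congr rfl fun i _ => ?_
  simp [Polynomial.eval_prod]

lemma zmS_rec (c b : ℕ → ℂ) (k N M : ℕ) (hc : Set.InjOn c (Finset.range (M+1) : Finset ℕ)) :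
    zmS c b (k+1) N (M+1) = zmS c b k N M + c M * zmS c b k N (M+1) := by
  rw [← sub_eq_iff_eq_add]
  unfold zmS
  rw [Finset.mul_sum, ← Finset.sum_sub_distrib, Finset.sum_range_succ]
  have h0 : ∀ x y z : ℂ, (c M ^ (k+1) * x / y - c M * (c M ^ k * x / y)) = 0 := by
    intros; ring
  rw [h0 _ _ 0, add_zero]
  refine Finset.sum_congr rfl fun i hi => ?_
  have hi' := Finset.mem_range.1 hi
  have he : (Finset.range (M+1)).erase i = insert M ((Finset.range M).erase i) := by
    ext x; simp; omega
  have hne : c i - c M ≠ 0 := by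
    intro h
    have := hc (by simp; omega) (by simp) (sub_eq_zero.1 h)
    omega
  rw [he, Finset.prod_insert (by simp)]
  have hne2 : ∏ j ∈ (Finset.range M).erase i, (c i - c j) ≠ 0 := by
    rw [Finset.prod_ne_zero_iff]
    intro j hj h
    simp at hj
    have := hc (by simp; omega) (by simp; omega) (sub_eq_zero.1 h)
    omega
  field_simp
  ring

lemma zmS_b (c b : ℕ → ℂ) (k N M : ℕ) :
    zmS c b k (N+1) M = zmS c b (k+1) N M - b N * zmS c b k N M := by
  unfold zmS
  rw [Finset.mul_sum, ← Finset.sum_sub_distrib]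
  refine Finset.sum_congr rfl fun i hi => ?_
  rw [Finset.prod_range_succ]; ring

lemma zmS_main (c b : ℕ → ℂ) (N : ℕ) (hc : Set.InjOn c (Finset.range (N+1) : Finset ℕ)) :
    zmS c b 0 N (N+1) = 1 ∧
    zmS c b 1 N (N+1) = ∑ i ∈ Finset.range (N+1), c i - ∑ i ∈ Finset.range N, b i ∧
    zmS c b 2 N (N+1) = ((∑ i ∈ Finset.range (N+1), c i - ∑ i ∈ Finset.range N, b i)^2 +
      (∑ i ∈ Finset.range (N+1), c i ^ 2 - ∑ i ∈ Finset.range N, b i ^ 2)) / 2 := by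
  induction N with
  | zero => simp [zmS]
  | succ N ih =>
    obtain ⟨i0, i1, i2⟩ := ih (hc.mono (by intro x; simp; omega))
    have t0 := zmS_zero c b N hc
    have t1 := zmS_rec c b 0 N (N+1) hc
    have t2 := zmS_rec c b 1 N (N+1) hc
    have t3 := zmS_rec c b 2 N (N+1) hc
    norm_num at t1 t2 t3
    have u0 := zmS_b c b 0 N (N+1+1)
    have u1 := zmS_b c b 1 N (N+1+1)
    have u2 := zmS_b c b 2 N (N+1+1)
    norm_num at u0 u1 u2
    rw [t0, i0] at t1
    rw [t1, i1] at t2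
    rw [t2, i2] at t3
    rw [t1, t0] at u0
    rw [t2, t1] at u1
    rw [t3, t2] at u2
    simp only [Finset.sum_range_succ _ (N+1), Finset.sum_range_succ (fun i => b i) N, Finset.sum_range_succ (fun i => b i ^ 2) N]
    refine ⟨by rw [u0]; ring, by rw [u1]; ring, by rw [u2]; ring⟩

def zmV (l : ℕ → ℂ) (N : ℕ) : ℂ := ∏ i ∈ Finset.range N, ∏ k ∈ Finset.Ioo i N, (l i - l k)

lemma zmV_succ (l : ℕ → ℂ) (N : ℕ) :
    zmV l (N+1) = zmV l N * ∏ i ∈ Finset.range N, (l i - l N) := by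
  unfold zmV
  rw [Finset.prod_range_succ, ← Finset.prod_mul_distrib]
  have : Finset.Ioo N (N+1) = ∅ := by ext; simp
  rw [this, Finset.prod_empty, mul_one]
  refine Finset.prod_congr rfl fun i hi => ?_
  have hi' := Finset.mem_range.1 hi
  have : Finset.Ioo i (N+1) = insert N (Finset.Ioo i N) := by ext; simp; omega
  rw [this, Finset.prod_insert (by simp), mul_comm]

lemma zmV_update (l m : ℕ → ℂ) (N i : ℕ) (h : ∀ j, j ≠ i → m j = l j) (hi : i < N) :
    zmV m N * ∏ j ∈ (Finset.range N).erase i, (l i - l j) =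
    zmV l N * ∏ j ∈ (Finset.range N).erase i, (m i - l j) := by
  induction N with
  | zero => omega
  | succ N ih =>
    rw [zmV_succ, zmV_succ]
    by_cases hN : i = N
    · subst hN
      have he : (Finset.range (i+1)).erase i = Finset.range i := by ext; simp; omega
      have h1 : zmV m i = zmV l i := by
        unfold zmV
        refine Finset.prod_congr rfl fun a ha => Finset.prod_congr rfl fun b hb => ?_
        simp at ha hb
        rw [h a (by omega), h b (by omega)]
      have h2 : ∏ j ∈ Finset.range i, (m j - m i) = ∏ j ∈ Finset.range i, (-1) * (m i - l j) := by
        refine Finset.prod_congr rfl fun a ha => ?_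
        simp at ha
        rw [h a (by omega)]; ring
      have h3 : ∏ j ∈ Finset.range i, (l j - l i) = ∏ j ∈ Finset.range i, (-1) * (l i - l j) := by
        refine Finset.prod_congr rfl fun a ha => ?_
        ring
      rw [he, h1, h2, h3, Finset.prod_mul_distrib, Finset.prod_mul_distrib]; ring
    · have hi2 : i < N := by omega
      have he : (Finset.range (N+1)).erase i = insert N ((Finset.range N).erase i) := by
        ext; simp; omega
      have ih' := ih hi2
      have hm : i ∈ Finset.range N := by simpa
      rw [he, Finset.prod_insert (by simp), Finset.prod_insert (by simp),
        ← Finset.mul_prod_erase _ _ hm, ← Finset.mul_prod_erase _ (fun i => l i - l N) hm]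
      have h1 : ∏ x ∈ (Finset.range N).erase i, (m x - m N)
          = ∏ x ∈ (Finset.range N).erase i, (l x - l N) := by
        refine Finset.prod_congr rfl fun a ha => ?_
        simp at ha
        rw [h a (by omega), h N (by omega)]
      rw [h1, h N (by omega)]
      linear_combination (m i - l N) * (l i - l N) * (∏ x ∈ (Finset.range N).erase i, (l x - l N)) * ih'

lemma zm_prod_Icc (n : ℕ) : ∏ x ∈ Finset.Icc 1 n, x = n.factorial := by
  induction n with
  | zero => simp
  | succ n ih => rw [Finset.prod_Icc_succ_top (by omega), ih, Nat.factorial_succ, mul_comm]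

def zmL (N : ℕ) (Y : YoungDiagram) (i : ℕ) : ℕ := Y.rowLen i + (N - 1 - i)

def zmH (Y : YoungDiagram) : ℂ := ∏ c ∈ Y.cells, (hookLen Y c : ℂ)

lemma zm_mem_cell (Y : YoungDiagram) (i j : ℕ) : (i, j) ∈ Y.cells ↔ j < Y.rowLen i := by
  rw [YoungDiagram.mem_cells, YoungDiagram.mem_iff_lt_rowLen]

lemma zm_row_col (Y : YoungDiagram) (i j : ℕ) : j < Y.rowLen i ↔ i < Y.colLen j := by
  rw [← YoungDiagram.mem_iff_lt_rowLen, ← YoungDiagram.mem_iff_lt_colLen]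

lemma zmL_lt (N : ℕ) (Y : YoungDiagram) (i k : ℕ) (h : i < k) (hk : k < N) :
    zmL N Y k < zmL N Y i := by
  have := Y.rowLen_anti i k h.le
  unfold zmL; omega

lemma zm_hook_row (N : ℕ) (Y : YoungDiagram) (i : ℕ) (hi : i < N) (hN : Y.colLen 0 ≤ N) :
    (∏ j ∈ Finset.range (Y.rowLen i), hookLen Y (i, j)) *
      ∏ k ∈ Finset.Ioo i N, (zmL N Y i - zmL N Y k) = (zmL N Y i).factorial := by
  have hA : Set.InjOn (fun j => hookLen Y (i, j)) (Finset.range (Y.rowLen i) : Finset ℕ) := by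
    have key : ∀ a b, a < b → b < Y.rowLen i → hookLen Y (i, b) < hookLen Y (i, a) := by
      intro a b hab hb
      have h1 := Y.colLen_anti a b hab.le
      have h2 := (zm_row_col Y i b).1 hb
      simp only [hookLen]; omega
    intro a ha b hb h
    simp only [Finset.coe_range, Set.mem_Iio] at ha hb
    rcases lt_trichotomy a b with h' | h' | h'
    · have := key a b h' hb; simp only at h; omega
    · exact h'
    · have := key b a h' ha; simp only at h; omega
  have hB : Set.InjOn (fun k => zmL N Y i - zmL N Y k) (Finset.Ioo i N : Finset ℕ) := by
    intro a ha b hb h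
    simp only [Finset.coe_Ioo, Set.mem_Ioo] at ha hb h
    have h1 := zmL_lt N Y i a ha.1 ha.2
    have h2 := zmL_lt N Y i b hb.1 hb.2
    rcases lt_trichotomy a b with h' | h' | h'
    · have := zmL_lt N Y a b h' hb.2; omega
    · exact h'
    · have := zmL_lt N Y b a h' ha.2; omega
  rw [← Finset.prod_image (f := fun x => x) hA, ← Finset.prod_image (f := fun x => x) hB]
  have hdisj : Disjoint ((Finset.range (Y.rowLen i)).image (fun j => hookLen Y (i, j)))
      ((Finset.Ioo i N).image (fun k => zmL N Y i - zmL N Y k)) := by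
    rw [Finset.disjoint_left]
    intro x hx hx'
    simp only [Finset.mem_image, Finset.mem_range, Finset.mem_Ioo] at hx hx'
    obtain ⟨j, hj, rfl⟩ := hx
    obtain ⟨k, hk, h⟩ := hx'
    have h2 := (zm_row_col Y i j).1 hj
    have h3 := zm_row_col Y k j
    have h4 := Y.rowLen_anti i k hk.1.le
    simp only [hookLen, zmL] at h
    by_cases hc : j < Y.rowLen k
    · have := h3.1 hc; omega
    · have : ¬ k < Y.colLen j := fun h' => hc (h3.2 h'); omega
  rw [← Finset.prod_union hdisj, ← zm_prod_Icc]
  refine Finset.prod_congr (Finset.eq_of_subset_of_card_le ?_ ?_) fun _ _ => rfl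
  · intro x hx
    simp only [Finset.mem_union, Finset.mem_image, Finset.mem_range, Finset.mem_Ioo] at hx
    rw [Finset.mem_Icc]
    rcases hx with ⟨j, hj, rfl⟩ | ⟨k, hk, rfl⟩
    · have h2 := (zm_row_col Y i j).1 hj
      have h1 := Y.colLen_anti 0 j (Nat.zero_le _)
      simp only [hookLen, zmL]; omega
    · have := zmL_lt N Y i k hk.1 hk.2; omega
  · rw [Finset.card_union_of_disjoint hdisj, Finset.card_image_of_injOn hA,
      Finset.card_image_of_injOn hB]
    simp [zmL]; omega

lemma zmH_V (N : ℕ) (Y : YoungDiagram) (hN : Y.colLen 0 ≤ N) :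
    zmH Y * zmV (fun i => (zmL N Y i : ℂ)) N = ∏ i ∈ Finset.range N, ((zmL N Y i).factorial : ℂ) := by
  unfold zmH zmV
  rw [Finset.prod_finset_product Y.cells (Finset.range N) (fun i => Finset.range (Y.rowLen i)),
    ← Finset.prod_mul_distrib]
  · refine Finset.prod_congr rfl fun i hi => ?_
    rw [← zm_hook_row N Y i (Finset.mem_range.1 hi) hN]
    push_cast
    congr 1
    refine Finset.prod_congr rfl fun k hk => ?_
    simp only [Finset.mem_Ioo] at hk
    rw [Nat.cast_sub (zmL_lt N Y i k hk.1 hk.2).le]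
  · rintro ⟨i, j⟩
    simp only [Finset.mem_range, zm_mem_cell]
    refine ⟨fun h => ⟨?_, h⟩, fun h => h.2⟩
    have h2 := (zm_row_col Y i j).1 h
    have h1 := Y.colLen_anti 0 j (Nat.zero_le _)
    omega

lemma zm_hook_pos (Y : YoungDiagram) (c : ℕ × ℕ) (hc : c ∈ Y.cells) : 0 < hookLen Y c := by
  obtain ⟨i, j⟩ := c
  rw [zm_mem_cell] at hc
  have := (zm_row_col Y i j).1 hc
  simp only [hookLen]; omega

lemma zmH_ne (Y : YoungDiagram) : zmH Y ≠ 0 := by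
  unfold zmH
  rw [Finset.prod_ne_zero_iff]
  intro c hc
  exact_mod_cast (zm_hook_pos Y c hc).ne'

lemma zm_injOn (N : ℕ) (Y : YoungDiagram) :
    Set.InjOn (fun i => (zmL N Y i : ℂ)) (Finset.range N : Finset ℕ) := by
  intro a ha b hb h
  simp only [Finset.coe_range, Set.mem_Iio, Nat.cast_inj] at ha hb h
  rcases lt_trichotomy a b with h' | h' | h'
  · have := zmL_lt N Y a b h' hb; omega
  · exact h'
  · have := zmL_lt N Y b a h' ha; omega

/-- `Y'` is obtained from `Y` by adding a box in row `i`. -/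
def zmCov (Y Y' : YoungDiagram) (i : ℕ) : Prop := Y'.cells = insert (i, Y.rowLen i) Y.cells

lemma zmCov_rowLen {Y Y' : YoungDiagram} {i : ℕ} (h : zmCov Y Y' i) (k : ℕ) :
    Y'.rowLen k = Y.rowLen k + if k = i then 1 else 0 := by
  have key : ∀ j, j < Y'.rowLen k ↔ j < Y.rowLen k + if k = i then 1 else 0 := by
    intro j
    rw [← zm_mem_cell, h, Finset.mem_insert, zm_mem_cell, Prod.mk.injEq]
    split_ifs with hk
    · subst hk; omega
    · simp [hk]
  have h1 := key (Y'.rowLen k)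
  have h2 := key (Y.rowLen k + if k = i then 1 else 0)
  omega

lemma zmCov_card {Y Y' : YoungDiagram} {i : ℕ} (h : zmCov Y Y' i) : Y'.card = Y.card + 1 := by
  unfold YoungDiagram.card
  rw [h, Finset.card_insert_of_notMem]
  simp [zm_mem_cell, -YoungDiagram.mem_cells]

lemma zmCov_le {Y Y' : YoungDiagram} {i : ℕ} (h : zmCov Y Y' i) : Y ≤ Y' := by
  rw [← YoungDiagram.cells_subset_iff, h]
  exact Finset.subset_insert _ _

lemma zmCov_exists {Y Y' : YoungDiagram} (h : Y ≤ Y') (hc : Y'.card = Y.card + 1) :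
    ∃ i, zmCov Y Y' i := by
  rw [← YoungDiagram.cells_subset_iff] at h
  have h1 : (Y'.cells \ Y.cells).card = 1 := by
    rw [Finset.card_sdiff_of_subset h]
    unfold YoungDiagram.card at hc
    omega
  obtain ⟨⟨i, j⟩, hij⟩ := Finset.card_eq_one.1 h1
  have hmem : (i, j) ∈ Y'.cells \ Y.cells := by rw [hij]; simp
  rw [Finset.mem_sdiff, zm_mem_cell, zm_mem_cell] at hmem
  have huniq : ∀ d ∈ Y'.cells, d ∉ Y.cells → d = (i, j) := by
    intro d hd hd'
    have : d ∈ Y'.cells \ Y.cells := Finset.mem_sdiff.2 ⟨hd, hd'⟩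
    rw [hij] at this; simpa using this
  have hj : (i, Y.rowLen i) = (i, j) := by
    apply huniq
    · rw [zm_mem_cell]; omega
    · rw [zm_mem_cell]; omega
  refine ⟨i, ?_⟩
  unfold zmCov
  rw [hj]
  ext d
  rw [Finset.mem_insert]
  constructor
  · intro hd
    by_cases hd' : d ∈ Y.cells
    · exact Or.inr hd'
    · exact Or.inl (huniq d hd hd')
  · rintro (rfl | hd)
    · rw [zm_mem_cell]; exact hmem.1
    · exact h hd

lemma zmCov_up (Y : YoungDiagram) (i : ℕ) (hi : ∀ k, k < i → Y.rowLen i < Y.rowLen k) :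
    ∃ Y', zmCov Y Y' i := by
  refine ⟨⟨insert (i, Y.rowLen i) Y.cells, ?_⟩, rfl⟩
  rintro ⟨a1, a2⟩ ⟨b1, b2⟩ hba ha
  simp only [Finset.mem_coe, Finset.mem_insert, zm_mem_cell, Prod.mk.injEq, Prod.mk_le_mk] at ha hba ⊢
  rcases ha with ⟨rfl, rfl⟩ | ha
  · rcases hba.1.lt_or_eq with h | rfl
    · have := hi b1 h; right; omega
    · omega
  · have := Y.rowLen_anti b1 a1 hba.1; right; omega

lemma zmCov_down (Y' : YoungDiagram) (i : ℕ) (hi : Y'.rowLen (i+1) < Y'.rowLen i) :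
    ∃ Y, zmCov Y Y' i := by
  have hl : IsLowerSet (↑(Y'.cells.erase (i, Y'.rowLen i - 1)) : Set (ℕ × ℕ)) := by
    rintro ⟨a1, a2⟩ ⟨b1, b2⟩ hba ha
    simp only [Finset.mem_coe, Finset.mem_erase, zm_mem_cell, Prod.mk.injEq, Prod.mk_le_mk, ne_eq] at ha hba ⊢
    have := Y'.rowLen_anti b1 a1 hba.1
    refine ⟨?_, by omega⟩
    rintro ⟨rfl, rfl⟩
    rcases hba.1.lt_or_eq with h | rfl
    · have := Y'.rowLen_anti (b1+1) a1 h; omega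
    · omega
  have hr : (⟨_, hl⟩ : YoungDiagram).rowLen i = Y'.rowLen i - 1 := by
    have key : ∀ j, j < (⟨_, hl⟩ : YoungDiagram).rowLen i ↔ j < Y'.rowLen i - 1 := by
      intro j
      rw [← zm_mem_cell]
      change (i, j) ∈ Y'.cells.erase (i, Y'.rowLen i - 1) ↔ _
      simp only [Finset.mem_erase, zm_mem_cell, Prod.mk.injEq, ne_eq, true_and]
      omega
    have h1 := key (Y'.rowLen i - 1)
    have h2 := key ((⟨_, hl⟩ : YoungDiagram).rowLen i)
    omega
  refine ⟨⟨_, hl⟩, ?_⟩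
  unfold zmCov
  rw [hr]
  symm
  apply Finset.insert_erase
  rw [zm_mem_cell]; omega

lemma zm_rowLen_zero (Y : YoungDiagram) (i : ℕ) (h : Y.card ≤ i) : Y.rowLen i = 0 := by
  by_contra hne
  have hsub : (Finset.range (i+1)).image (fun k => (k, 0)) ⊆ Y.cells := by
    intro c hc
    simp only [Finset.mem_image, Finset.mem_range] at hc
    obtain ⟨k, hk, rfl⟩ := hc
    rw [zm_mem_cell]
    have := Y.rowLen_anti k i (by omega); omega
  have := Finset.card_le_card hsub
  rw [Finset.card_image_of_injective _ (fun a b h => by simpa using h), Finset.card_range] at this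
  unfold YoungDiagram.card at h
  omega

lemma zm_colLen_le (Y : YoungDiagram) : Y.colLen 0 ≤ Y.card := by
  by_contra hne
  have := (zm_row_col Y Y.card 0).2 (by omega)
  have := zm_rowLen_zero Y Y.card le_rfl
  omega

lemma zm_sum_rowLen (Y : YoungDiagram) (N : ℕ) (hN : Y.card ≤ N) :
    ∑ i ∈ Finset.range N, Y.rowLen i = Y.card := by
  unfold YoungDiagram.card
  rw [Finset.card_eq_sum_ones,
    Finset.sum_finset_product Y.cells (Finset.range N) (fun i => Finset.range (Y.rowLen i))]
  · simp
  · rintro ⟨i, j⟩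
    simp only [Finset.mem_range, zm_mem_cell]
    refine ⟨fun h => ⟨?_, h⟩, fun h => h.2⟩
    by_contra hne
    have := zm_rowLen_zero Y i (by omega)
    omega

/-- The hook ratio. -/
lemma zm_ratio {Y Y' : YoungDiagram} {i N : ℕ} (h : zmCov Y Y' i) (hi : i < N) (hN : Y'.card ≤ N) :
    zmH Y' * ∏ j ∈ (Finset.range N).erase i, ((zmL N Y i : ℂ) + 1 - zmL N Y j) =
    (zmL N Y i + 1) * zmH Y * ∏ j ∈ (Finset.range N).erase i, ((zmL N Y i : ℂ) - zmL N Y j) := by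
  have hc := zmCov_card h
  have h1 := zmH_V N Y ((zm_colLen_le Y).trans (by omega))
  have h2 := zmH_V N Y' ((zm_colLen_le Y').trans (by omega))
  have hLi : zmL N Y' i = zmL N Y i + 1 := by
    unfold zmL; rw [zmCov_rowLen h]; simp; omega
  have hLj : ∀ j, j ≠ i → zmL N Y' j = zmL N Y j := by
    intro j hj; unfold zmL; rw [zmCov_rowLen h]; simp [hj]
  have h3 := zmV_update (fun j => (zmL N Y j : ℂ)) (fun j => (zmL N Y' j : ℂ)) N i
    (fun j hj => by simp only [hLj j hj]) hi
  have hm : i ∈ Finset.range N := by simpa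
  rw [← Finset.mul_prod_erase _ _ hm, hLi] at h2
  rw [← Finset.mul_prod_erase _ _ hm] at h1
  have h4 : ∏ x ∈ (Finset.range N).erase i, ((zmL N Y' x).factorial : ℂ) =
      ∏ x ∈ (Finset.range N).erase i, ((zmL N Y x).factorial : ℂ) := by
    refine Finset.prod_congr rfl fun x hx => ?_
    rw [hLj x (Finset.ne_of_mem_erase hx)]
  rw [h4, Nat.factorial_succ] at h2
  simp only [hLi] at h3
  push_cast at h2 h3
  have hV : zmV (fun i => (zmL N Y i : ℂ)) N ≠ 0 := by
    intro h0
    rw [h0, mul_zero] at h1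
    have : (((zmL N Y i).factorial : ℂ) *
      ∏ x ∈ (Finset.range N).erase i, ((zmL N Y x).factorial : ℂ)) ≠ 0 := by
      refine mul_ne_zero (by exact_mod_cast Nat.factorial_ne_zero _) ?_
      rw [Finset.prod_ne_zero_iff]
      intro x _
      exact_mod_cast Nat.factorial_ne_zero _
    exact this h1.symm
  apply mul_left_cancel₀ hV
  linear_combination (-zmH Y') * h3 + (∏ j ∈ (Finset.range N).erase i, ((zmL N Y i : ℂ) - zmL N Y j)) * (h2 - (zmL N Y i + 1) * h1)

lemma zm_sumL (n : ℕ) (Y : YoungDiagram) (hY : Y.card ≤ n + 1) :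
    ∑ i ∈ Finset.range (n+1), (zmL (n+2) Y i : ℂ) = Y.card + (n+2) * (n+1) / 2 := by
  have h1 : ∑ i ∈ Finset.range (n+1), Y.rowLen i = Y.card := zm_sum_rowLen Y (n+1) hY
  have h2 : ∑ i ∈ Finset.range (n+1), ((n : ℂ) + 1 - i) = (n+2) * (n+1) / 2 := by
    clear h1 hY
    induction n with
    | zero => simp
    | succ n ih =>
      have : ∑ i ∈ Finset.range (n+1), (((n+1 : ℕ) : ℂ) + 1 - i) =
          ∑ i ∈ Finset.range (n+1), ((n : ℂ) + 1 - i) + (n+1) := by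
        have e : ∀ i ∈ Finset.range (n+1), (((n+1 : ℕ) : ℂ) + 1 - i) = ((n : ℂ) + 1 - i) + 1 := by
          intro i _; push_cast; ring
        rw [Finset.sum_congr rfl e, Finset.sum_add_distrib]; simp
      rw [Finset.sum_range_succ, this, ih]; push_cast; ring
  rw [← h2, ← h1]
  push_cast
  rw [← Finset.sum_add_distrib]
  refine Finset.sum_congr rfl fun i hi => ?_
  have := Finset.mem_range.1 hi
  unfold zmL
  rw [show n + 2 - 1 - i = n + 1 - i by omega]
  push_cast [Nat.cast_sub (show i ≤ n + 1 by omega)]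
  ring

lemma zmL_last (n : ℕ) (Y : YoungDiagram) (hY : Y.card ≤ n + 1) : zmL (n+2) Y (n+1) = 0 := by
  unfold zmL; rw [zm_rowLen_zero Y _ hY]; simp

lemma zm_up_sum (n : ℕ) (Y : YoungDiagram) (hY : Y.card = n) (z z' : ℂ) :
    ∑ i ∈ Finset.range (n+2), (z + (zmL (n+2) Y i - (n+1))) * (z' + (zmL (n+2) Y i - (n+1))) *
      ((∏ j ∈ Finset.range (n+1), ((zmL (n+2) Y i : ℂ) - (zmL (n+2) Y j - 1))) /
        ∏ j ∈ (Finset.range (n+2)).erase i, ((zmL (n+2) Y i : ℂ) - zmL (n+2) Y j)) = z * z' + n := by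
  obtain ⟨s0, s1, s2⟩ := zmS_main (fun i => (zmL (n+2) Y i : ℂ)) (fun i => (zmL (n+2) Y i : ℂ) - 1)
    (n+1) (zm_injOn (n+2) Y)
  have hs := zm_sumL n Y (by omega)
  have hl := zmL_last n Y (by omega)
  rw [Finset.sum_range_succ, hl, Finset.sum_sub_distrib] at s1
  rw [Finset.sum_range_succ _ (n+1), Finset.sum_range_succ (fun i => (zmL (n+2) Y i : ℂ) ^ 2) (n+1), hl, Finset.sum_sub_distrib] at s2
  have e : ∑ i ∈ Finset.range (n+1), ((zmL (n+2) Y i : ℂ) - 1)^2 =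
      ∑ i ∈ Finset.range (n+1), ((zmL (n+2) Y i : ℂ))^2 -
        2 * ∑ i ∈ Finset.range (n+1), (zmL (n+2) Y i : ℂ) + (n+1) := by
    have : ∀ i ∈ Finset.range (n+1), ((zmL (n+2) Y i : ℂ) - 1)^2 =
      ((zmL (n+2) Y i : ℂ))^2 - 2 * (zmL (n+2) Y i : ℂ) + 1 := by intros; ring
    rw [Finset.sum_congr rfl this, Finset.sum_add_distrib, Finset.sum_sub_distrib, Finset.mul_sum]
    simp
  rw [e, hs, hY] at s2
  rw [hs] at s1
  simp only [Finset.sum_const, Finset.card_range, nsmul_eq_mul] at s1 s2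
  push_cast at s1 s2
  trans (z * z' - (z + z') * (n+1) + (n+1)^2) * zmS (fun i => (zmL (n+2) Y i : ℂ)) (fun i => (zmL (n+2) Y i : ℂ) - 1) 0 (n+1) (n+2)
    + (z + z' - 2 * (n+1)) * zmS (fun i => (zmL (n+2) Y i : ℂ)) (fun i => (zmL (n+2) Y i : ℂ) - 1) 1 (n+1) (n+2)
    + zmS (fun i => (zmL (n+2) Y i : ℂ)) (fun i => (zmL (n+2) Y i : ℂ) - 1) 2 (n+1) (n+2)
  · unfold zmS
    rw [Finset.mul_sum, Finset.mul_sum, ← Finset.sum_add_distrib, ← Finset.sum_add_distrib]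
    refine Finset.sum_congr rfl fun i _ => ?_
    ring
  · rw [s0, s1, s2]; ring

lemma zm_down_sum (n : ℕ) (Y : YoungDiagram) (hY : Y.card = n + 1) :
    ∑ i ∈ Finset.range (n+2), (-(zmL (n+2) Y i : ℂ) * (zmL (n+2) Y i - 1)) *
      ((∏ j ∈ Finset.range (n+1), ((zmL (n+2) Y i : ℂ) - (zmL (n+2) Y j + 1))) /
        ∏ j ∈ (Finset.range (n+2)).erase i, ((zmL (n+2) Y i : ℂ) - zmL (n+2) Y j)) = n + 1 := by
  obtain ⟨s0, s1, s2⟩ := zmS_main (fun i => (zmL (n+2) Y i : ℂ)) (fun i => (zmL (n+2) Y i : ℂ) + 1)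
    (n+1) (zm_injOn (n+2) Y)
  have hs := zm_sumL n Y (by omega)
  have hl := zmL_last n Y (by omega)
  rw [Finset.sum_range_succ, hl, Finset.sum_add_distrib] at s1
  rw [Finset.sum_range_succ _ (n+1), Finset.sum_range_succ (fun i => (zmL (n+2) Y i : ℂ) ^ 2) (n+1), hl, Finset.sum_add_distrib] at s2
  have e : ∑ i ∈ Finset.range (n+1), ((zmL (n+2) Y i : ℂ) + 1)^2 =
      ∑ i ∈ Finset.range (n+1), ((zmL (n+2) Y i : ℂ))^2 +
        2 * ∑ i ∈ Finset.range (n+1), (zmL (n+2) Y i : ℂ) + (n+1) := by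
    have : ∀ i ∈ Finset.range (n+1), ((zmL (n+2) Y i : ℂ) + 1)^2 =
      ((zmL (n+2) Y i : ℂ))^2 + 2 * (zmL (n+2) Y i : ℂ) + 1 := by intros; ring
    rw [Finset.sum_congr rfl this, Finset.sum_add_distrib, Finset.sum_add_distrib, Finset.mul_sum]
    simp
  rw [e, hs, hY] at s2
  rw [hs] at s1
  simp only [Finset.sum_const, Finset.card_range, nsmul_eq_mul] at s1 s2
  push_cast at s1 s2
  trans zmS (fun i => (zmL (n+2) Y i : ℂ)) (fun i => (zmL (n+2) Y i : ℂ) + 1) 1 (n+1) (n+2)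
    - zmS (fun i => (zmL (n+2) Y i : ℂ)) (fun i => (zmL (n+2) Y i : ℂ) + 1) 2 (n+1) (n+2)
  · unfold zmS
    rw [← Finset.sum_sub_distrib]
    refine Finset.sum_congr rfl fun i _ => ?_
    ring
  · rw [s1, s2]; ring

lemma zm_prodA_ne (N : ℕ) (Y : YoungDiagram) (i : ℕ) (hi : i < N) :
    ∏ j ∈ (Finset.range N).erase i, ((zmL N Y i : ℂ) - zmL N Y j) ≠ 0 := by
  rw [Finset.prod_ne_zero_iff]
  intro j hj h
  rw [Finset.mem_erase] at hj
  exact hj.1 (zm_injOn N Y (by simpa using hj.2) (by simpa using hi) (sub_eq_zero.1 h).symm)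

lemma zmCov_lt {Y Y' : YoungDiagram} {i : ℕ} (h : zmCov Y Y' i) : i < Y'.card := by
  by_contra hne
  have h1 := zm_rowLen_zero Y' i (by omega)
  rw [zmCov_rowLen h] at h1
  simp at h1

lemma zm_ratio_up {Y Y' : YoungDiagram} {i n : ℕ} (h : zmCov Y Y' i) (hY : Y.card = n) :
    (zmH Y')⁻¹ = (zmH Y)⁻¹ *
      ((∏ j ∈ Finset.range (n+1), ((zmL (n+2) Y i : ℂ) - (zmL (n+2) Y j - 1))) /
        ∏ j ∈ (Finset.range (n+2)).erase i, ((zmL (n+2) Y i : ℂ) - zmL (n+2) Y j)) := by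
  have hc := zmCov_card h
  have hi := zmCov_lt h
  have hr := zm_ratio (N := n+2) h (by omega) (by omega)
  have hm : i ∈ Finset.range (n+2) := by simp; omega
  have e1 := Finset.mul_prod_erase (Finset.range (n+2))
    (fun j => (zmL (n+2) Y i : ℂ) + 1 - zmL (n+2) Y j) hm
  rw [Finset.prod_range_succ, zmL_last n Y (by omega)] at e1
  have e2 : ∏ j ∈ Finset.range (n+1), ((zmL (n+2) Y i : ℂ) - (zmL (n+2) Y j - 1)) =
    ∏ j ∈ Finset.range (n+1), ((zmL (n+2) Y i : ℂ) + 1 - zmL (n+2) Y j) :=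
    Finset.prod_congr rfl fun _ _ => by ring
  have hA := zm_prodA_ne (n+2) Y i (by omega)
  have h0 : (zmL (n+2) Y i : ℂ) + 1 ≠ 0 := Nat.cast_add_one_ne_zero _
  have h1 := zmH_ne Y
  have h2 := zmH_ne Y'
  rw [e2]
  field_simp
  apply mul_left_cancel₀ h0
  push_cast at e1
  linear_combination zmH Y' * e1 - hr

lemma zm_ratio_down {Y Y' : YoungDiagram} {i n : ℕ} (h : zmCov Y Y' i) (hY : Y'.card = n + 1) :
    zmH Y' / zmH Y = (-(zmL (n+2) Y' i : ℂ) * (zmL (n+2) Y' i - 1)) *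
      ((∏ j ∈ Finset.range (n+1), ((zmL (n+2) Y' i : ℂ) - (zmL (n+2) Y' j + 1))) /
        ∏ j ∈ (Finset.range (n+2)).erase i, ((zmL (n+2) Y' i : ℂ) - zmL (n+2) Y' j)) := by
  have hi := zmCov_lt h
  have hr := zm_ratio (N := n+2) h (by omega) (by omega)
  have hm : i ∈ Finset.range (n+2) := by simp; omega
  have e1 := Finset.mul_prod_erase (Finset.range (n+2))
    (fun j => (zmL (n+2) Y' i : ℂ) - (zmL (n+2) Y' j + 1)) hm
  rw [Finset.prod_range_succ, zmL_last n Y' (by omega)] at e1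
  have hLi : (zmL (n+2) Y' i : ℂ) = zmL (n+2) Y i + 1 := by
    unfold zmL; rw [zmCov_rowLen h]; simp; ring
  have hLj : ∀ j, j ≠ i → zmL (n+2) Y' j = zmL (n+2) Y j := by
    intro j hj; unfold zmL; rw [zmCov_rowLen h]; simp [hj]
  have e2 : ∏ j ∈ (Finset.range (n+2)).erase i, ((zmL (n+2) Y i : ℂ) + 1 - zmL (n+2) Y j) =
      ∏ j ∈ (Finset.range (n+2)).erase i, ((zmL (n+2) Y' i : ℂ) - zmL (n+2) Y' j) :=
    Finset.prod_congr rfl fun j hj => by rw [hLi, hLj j (Finset.ne_of_mem_erase hj)]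
  have e3 : ∏ j ∈ (Finset.range (n+2)).erase i, ((zmL (n+2) Y i : ℂ) - zmL (n+2) Y j) =
      ∏ j ∈ (Finset.range (n+2)).erase i, ((zmL (n+2) Y' i : ℂ) - (zmL (n+2) Y' j + 1)) :=
    Finset.prod_congr rfl fun j hj => by rw [hLi, hLj j (Finset.ne_of_mem_erase hj)]; ring
  have hA := zm_prodA_ne (n+2) Y' i (by omega)
  rw [e2, e3, ← hLi] at hr
  have h1 := zmH_ne Y
  rw [← mul_div_assoc, div_eq_div_iff h1 hA]
  push_cast at e1
  linear_combination hr - zmL (n+2) Y' i * zmH Y * e1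

def zmYD (n : ℕ) : Set YoungDiagram := {Y | Y.card = n}

lemma zmYD_finite (n : ℕ) : (zmYD n).Finite := by
  have hinj : Function.Injective YoungDiagram.cells := fun a b h => YoungDiagram.ext h
  refine Set.Finite.of_finite_image
    (f := YoungDiagram.cells) (Set.Finite.subset
      (Finset.finite_toSet ((Finset.range n ×ˢ Finset.range n).powerset)) ?_) hinj.injOn
  rintro _ ⟨Y, hY, rfl⟩
  simp only [Finset.coe_powerset, Set.mem_preimage, Set.mem_powerset_iff, Finset.coe_subset]
  rintro ⟨i, j⟩ hc
  have hY' : Y.card = n := hY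
  rw [zm_mem_cell] at hc
  rw [Finset.mem_product, Finset.mem_range, Finset.mem_range]
  have hi : i < n := by
    by_contra hne
    have := zm_rowLen_zero Y i (by omega); omega
  refine ⟨hi, ?_⟩
  have h1 := zm_sum_rowLen Y n (by omega)
  have h2 := Finset.single_le_sum (f := Y.rowLen) (fun _ _ => Nat.zero_le _) (Finset.mem_range.2 hi)
  omega

def zmF (n : ℕ) : Finset YoungDiagram := (zmYD_finite n).toFinset

lemma zm_memF (n : ℕ) (Y : YoungDiagram) : Y ∈ zmF n ↔ Y.card = n := by
  simp [zmF, zmYD]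

/-- The row in which `Y'` has one more box than `Y`. -/
def zmRow (Y Y' : YoungDiagram) : ℕ := if h : ∃ i, zmCov Y Y' i then h.choose else 0

lemma zmRow_spec {Y Y' : YoungDiagram} (h : Y ≤ Y') (hc : Y'.card = Y.card + 1) :
    zmCov Y Y' (zmRow Y Y') := by
  have := zmCov_exists h hc
  unfold zmRow
  rw [dif_pos this]
  exact this.choose_spec

lemma zmCov_eq_row {Y Y' : YoungDiagram} {i : ℕ} (h : zmCov Y Y' i) : zmRow Y Y' = i := by
  have h1 := zmRow_spec (zmCov_le h) (zmCov_card h)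
  have h2 := zmCov_rowLen h (zmRow Y Y')
  rw [zmCov_rowLen h1] at h2
  by_contra hne
  simp [hne] at h2

def zmK (z z' : ℂ) (Y : YoungDiagram) : ℂ :=
  ∏ c ∈ Y.cells, ((z + cellContent c) * (z' + cellContent c))

lemma zmK_cov {Y Y' : YoungDiagram} {i n : ℕ} (h : zmCov Y Y' i) (hY : Y.card = n) (z z' : ℂ) :
    zmK z z' Y' = zmK z z' Y *
      ((z + (zmL (n+2) Y i - (n+1))) * (z' + (zmL (n+2) Y i - (n+1)))) := by
  have hi := zmCov_lt h
  have hc := zmCov_card h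
  unfold zmK
  rw [h, Finset.prod_insert (by rw [zm_mem_cell]; omega), mul_comm]
  have : ((cellContent (i, Y.rowLen i) : ℤ) : ℂ) = zmL (n+2) Y i - (n+1) := by
    unfold cellContent zmL
    rw [show n + 2 - 1 - i = n + 1 - i by omega]
    push_cast [Nat.cast_sub (show i ≤ n + 1 by omega)]
    ring
  rw [this]

lemma zm_up (n : ℕ) (Y : YoungDiagram) (hY : Y.card = n) (z z' : ℂ) :
    ∑ Y' ∈ (zmF (n+1)).filter (fun Y' => Y ≤ Y'), zmK z z' Y' * (zmH Y')⁻¹ =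
      zmK z z' Y * (zmH Y)⁻¹ * (z * z' + n) := by
  rw [← zm_up_sum n Y hY z z', Finset.mul_sum]
  have spec : ∀ Y' ∈ (zmF (n+1)).filter (fun Y' => Y ≤ Y'), zmCov Y Y' (zmRow Y Y') := by
    intro Y' h
    rw [Finset.mem_filter, zm_memF] at h
    exact zmRow_spec h.2 (by omega)
  refine Finset.sum_of_injOn (zmRow Y) ?_ ?_ ?_ ?_
  · intro a ha b hb hab
    have h1 := spec a ha
    have h2 := spec b hb
    rw [hab] at h1
    exact YoungDiagram.ext (h1.trans h2.symm)
  · intro a ha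
    have h1 := zmCov_lt (spec a ha)
    have h2 := zmCov_card (spec a ha)
    simp only [Finset.coe_range, Set.mem_Iio]
    omega
  · intro i hi hni
    rw [Finset.mem_range] at hi
    have hex : ¬ ∀ k, k < i → Y.rowLen i < Y.rowLen k := by
      intro hk
      obtain ⟨Y', hY'⟩ := zmCov_up Y i hk
      apply hni
      refine ⟨Y', ?_, zmCov_eq_row hY'⟩
      rw [Finset.mem_coe, Finset.mem_filter, zm_memF]
      exact ⟨by rw [zmCov_card hY', hY], zmCov_le hY'⟩
    push Not at hex
    obtain ⟨k, hk, hk2⟩ := hex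
    have h1 := Y.rowLen_anti k (i-1) (by omega)
    have h2 := Y.rowLen_anti (i-1) i (by omega)
    have h3 : zmL (n+2) Y (i-1) = zmL (n+2) Y i + 1 := by unfold zmL; omega
    rw [Finset.prod_eq_zero (i := i-1) (by simp; omega) (by rw [h3]; push_cast; ring)]
    ring
  · intro Y' h
    have h1 := spec Y' h
    rw [zm_ratio_up h1 hY, zmK_cov h1 hY]
    ring

lemma zm_down (n : ℕ) (Y' : YoungDiagram) (hY : Y'.card = n + 1) :
    ∑ Y ∈ (zmF n).filter (fun Y => Y ≤ Y'), zmH Y' / zmH Y = n + 1 := by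
  rw [← zm_down_sum n Y' hY]
  have spec : ∀ Y ∈ (zmF n).filter (fun Y => Y ≤ Y'), zmCov Y Y' (zmRow Y Y') := by
    intro Y h
    rw [Finset.mem_filter, zm_memF] at h
    exact zmRow_spec h.2 (by omega)
  refine Finset.sum_of_injOn (fun Y => zmRow Y Y') ?_ ?_ ?_ ?_
  · intro a ha b hb hab
    have h1 := spec a ha
    have h2 := spec b hb
    simp only at hab
    rw [hab] at h1
    apply YoungDiagram.ext
    ext ⟨i, j⟩
    rw [zm_mem_cell, zm_mem_cell]
    have e1 := zmCov_rowLen h1 i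
    have e2 := zmCov_rowLen h2 i
    omega
  · intro a ha
    have h1 := zmCov_lt (spec a ha)
    simp only [Finset.coe_range, Set.mem_Iio]
    omega
  · intro i hi hni
    rw [Finset.mem_range] at hi
    have hex : ¬ Y'.rowLen (i+1) < Y'.rowLen i := by
      intro hk
      obtain ⟨Y, hYc⟩ := zmCov_down Y' i hk
      apply hni
      refine ⟨Y, ?_, zmCov_eq_row hYc⟩
      rw [Finset.mem_coe, Finset.mem_filter, zm_memF]
      exact ⟨by have := zmCov_card hYc; omega, zmCov_le hYc⟩
    have h2 := Y'.rowLen_anti i (i+1) (by omega)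
    rcases (show i = n + 1 ∨ i = n ∨ i < n by omega) with h | h | h
    · subst h; rw [zmL_last n Y' (by omega)]; simp
    · have h3 : zmL (n+2) Y' i = 1 := by
        have := zmL_last n Y' (by omega)
        subst h
        unfold zmL at *; omega
      rw [h3]; simp
    · have h3 : zmL (n+2) Y' i = zmL (n+2) Y' (i+1) + 1 := by unfold zmL; omega
      rw [Finset.prod_eq_zero (i := i+1) (by simp; omega) (by rw [h3]; push_cast; ring)]
      simp
  · intro Y h
    exact zm_ratio_down (spec Y h) hY

lemma zm_weight (z z' : ℂ) (Y : YoungDiagram) : zWeight z z' Y = zmK z z' Y * (zmH Y)⁻¹ * (zmH Y)⁻¹ := by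
  unfold zWeight zmK zmH
  rw [Finset.prod_div_distrib, Finset.prod_pow]
  field_simp

lemma zm_step (n : ℕ) (z z' : ℂ) :
    (n + 1) * ∑ Y ∈ zmF (n+1), zWeight z z' Y = (z * z' + n) * ∑ Y ∈ zmF n, zWeight z z' Y := by
  rw [Finset.mul_sum, Finset.mul_sum]
  trans ∑ Y' ∈ zmF (n+1), ∑ Y ∈ (zmF n).filter (fun Y => Y ≤ Y'),
    zmK z z' Y' * (zmH Y')⁻¹ * (zmH Y)⁻¹
  · refine Finset.sum_congr rfl fun Y' hY' => ?_
    rw [← zm_down n Y' ((zm_memF _ _).1 hY'), Finset.sum_mul]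
    refine Finset.sum_congr rfl fun Y _ => ?_
    rw [zm_weight]
    have := zmH_ne Y'
    have := zmH_ne Y
    field_simp
  · trans ∑ Y ∈ zmF n, ∑ Y' ∈ (zmF (n+1)).filter (fun Y' => Y ≤ Y'),
      zmK z z' Y' * (zmH Y')⁻¹ * (zmH Y)⁻¹
    · apply Finset.sum_comm'
      intro a b
      simp only [Finset.mem_filter]
      tauto
    · refine Finset.sum_congr rfl fun Y hY => ?_
      rw [← Finset.sum_mul, zm_up n Y ((zm_memF _ _).1 hY), zm_weight]
      ring

lemma zm_total (n : ℕ) (z z' : ℂ) :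
    (n.factorial : ℂ) * ∑ Y ∈ zmF n, zWeight z z' Y = (ascPochhammer ℂ n).eval (z * z') := by
  induction n with
  | zero =>
    have : zmF 0 = {⊥} := by
      ext Y
      rw [zm_memF, Finset.mem_singleton]
      constructor
      · intro h
        apply YoungDiagram.ext
        rw [YoungDiagram.cells_bot]
        exact Finset.card_eq_zero.1 h
      · rintro rfl; rfl
    rw [this]
    simp [zWeight]
  | succ n ih =>
    rw [ascPochhammer_succ_eval, ← ih, Nat.factorial_succ]
    push_cast
    linear_combination (n.factorial : ℂ) * zm_step n z z'

lemma zm_poch (z : ℂ) (hz : z ≠ 0) (n : ℕ) :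
    ∃ r : ℝ, 0 < r ∧ (ascPochhammer ℂ n).eval (z * (starRingEnd ℂ) z) = r := by
  induction n with
  | zero => exact ⟨1, one_pos, by simp⟩
  | succ n ih =>
    obtain ⟨r, hr, h⟩ := ih
    have hp : 0 < Complex.normSq z := Complex.normSq_pos.2 hz
    refine ⟨r * (Complex.normSq z + n), by positivity, ?_⟩
    rw [ascPochhammer_succ_eval, h, Complex.mul_conj]
    push_cast; ring

lemma zm_weight_nonneg (z : ℂ) (Y : YoungDiagram) :
    zWeight z ((starRingEnd ℂ) z) Y =
      ((∏ c ∈ Y.cells, (Complex.normSq (z + cellContent c) / (hookLen Y c : ℝ)^2) : ℝ) : ℂ) := by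
  unfold zWeight
  push_cast
  refine Finset.prod_congr rfl fun c _ => ?_
  rw [← Complex.mul_conj]
  simp

/-- **principal series.** Let `z ≠ 0` and `z' = conj z`.  Then for every `n`,
the z-measure `M_n(λ) = (n!/(zz')_n) Π_{□∈λ}(z+c(□))(z'+c(□))/h(□)²` is a nonnegative real
number for every partition `λ` of `n`, and `Σ_{|λ|=n} M_n(λ) = 1`. -/
theorem zMeasure_principal_series_prob (z : ℂ) (hz : z ≠ 0) (n : ℕ) :
    (∀ Y : YoungDiagram, Y.card = n →
      ∃ r : ℝ, 0 ≤ r ∧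
        (n.factorial : ℂ) / (ascPochhammer ℂ n).eval (z * (starRingEnd ℂ) z) *
          zWeight z ((starRingEnd ℂ) z) Y = (r : ℂ)) ∧
    ∑' Y : {Y : YoungDiagram // Y.card = n},
        (n.factorial : ℂ) / (ascPochhammer ℂ n).eval (z * (starRingEnd ℂ) z) *
          zWeight z ((starRingEnd ℂ) z) Y.1 = 1 := by
  obtain ⟨r, hr, hp⟩ := zm_poch z hz n
  constructor
  · intro Y _
    refine ⟨n.factorial / r * ∏ c ∈ Y.cells,
      (Complex.normSq (z + cellContent c) / (hookLen Y c : ℝ)^2), ?_, ?_⟩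
    · refine mul_nonneg (by positivity) (Finset.prod_nonneg fun c _ => ?_)
      exact div_nonneg (Complex.normSq_nonneg _) (by positivity)
    · rw [hp, zm_weight_nonneg]; push_cast; rfl
  · have ht := zm_total n z ((starRingEnd ℂ) z)
    have hne : (ascPochhammer ℂ n).eval (z * (starRingEnd ℂ) z) ≠ 0 := by
      rw [hp]; exact_mod_cast hr.ne'
    have : Fintype {Y : YoungDiagram // Y.card = n} := (zmYD_finite n).fintype
    rw [tsum_fintype, ← Finset.mul_sum, ← Finset.sum_subtype (zmF n) (zm_memF n), div_mul_eq_mul_div,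
      ht, div_self hne]

end
end
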